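/- Under Assumptions A1, A2 and A3, almost surely ∫_{ℝ^d} |q_n(x) − f(x)| dx → 0 as n → ∞; that is, the policy densities converge to the target density in total variation (L¹) almost surely. -/

import Mathlib

/-!
Up to a noise term, `g n` is a running average of `K_b ⋆ (f ^ η * q ^ (1 - η))`, the conditional
mean of `w ^ η * K_b (x - X)`. Truncating the weights at a multiple of `1 / lam` costs nothing in
lower bounds, and Bernstein's inequality together with a Borel–Cantelli argument over ever finer
grids shows that the noise with truncated weights is `o (lam ^ (1 - η))`, uniformly on compact sets.

The lower bound `lam / 2 * q₀ ≤ q`, which the exploration provides, starts a bootstrap: while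
`v ≤ q` near a point, the drift pushes `g` above about `f ^ η * v ^ (1 - η)`. As `0` is a repelling
fixed point of `v ↦ f ^ η * v ^ (1 - η)`, the estimate first escapes from `0` and then rises to the
attracting fixed point `f`. By Hölder `∫ f ^ η * q ^ (1 - η) ≤ 1`, so the mass of `g` is
asymptotically at most `1`, and normalizing preserves the lower bound. Hence `f ≤ liminf q` locally
uniformly on `{f > 0}`, and as `f` and `q` are densities the convergence in `L¹` is Scheffé's lemma.

That `q n` is a nonnegative density is not immediate, because `g n` is not assumed to be positive
when early step sizes exceed `1`: the policy is identified through the characteristic functions of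
the conditional laws, and estimates of negative mass are excluded with probability one.
-/

open MeasureTheory Filter Metric
open scoped Topology ENNReal NNReal

noncomputable def kb {d : ℕ} (K : EuclideanSpace ℝ (Fin d) → ℝ) (b : ℝ)
    (x : EuclideanSpace ℝ (Fin d)) : ℝ :=
  (b ^ d)⁻¹ * K (b⁻¹ • x)

def natFilt {Ω : Type*} {d : ℕ} (X : ℕ → Ω → EuclideanSpace ℝ (Fin d)) (n : ℕ) :
    MeasurableSpace Ω :=
  ⨆ i ∈ Finset.Icc 1 n, MeasurableSpace.comap (X i) inferInstance

section Recursions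

/-- Step sizes `γ₁, γ₂, …` of a stochastic approximation scheme which vanish no faster than
harmonically: `step` says that `1 / γ` grows by at most one per step. -/
structure StepSizes (γ : ℕ → ℝ) : Prop where
  pos : ∀ n, 0 < γ n
  le_half : ∀ n, γ n ≤ 1 / 2
  step : ∀ n, γ n * (1 - γ (n + 1)) ≤ γ (n + 1)
  tendsto_zero : Tendsto γ atTop (𝓝 0)

/-- The weight that the recursion `h (n + 1) = (1 - γ (n + 1)) h n + γ (n + 1) ξ (n + 1)` leaves
on its initial value after `n` steps. -/
noncomputable def discount (γ : ℕ → ℝ) (n : ℕ) : ℝ :=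
  ∏ k ∈ Finset.range n, (1 - γ (k + 1))

/-- The running average of the sequence `ξ 1, ξ 2, …` with step sizes `γ`, started at zero. -/
noncomputable def stepAvg (γ ξ : ℕ → ℝ) : ℕ → ℝ
  | 0 => 0
  | n + 1 => (1 - γ (n + 1)) * stepAvg γ ξ n + γ (n + 1) * ξ (n + 1)

variable {γ : ℕ → ℝ}

lemma discount_succ (γ : ℕ → ℝ) (n : ℕ) : discount γ (n + 1) = (1 - γ (n + 1)) * discount γ n := by
  rw [discount, Finset.prod_range_succ, mul_comm, ← discount]

namespace StepSizes

lemma one_sub_pos (hγ : StepSizes γ) (n : ℕ) : 0 < 1 - γ n := by linarith [hγ.le_half n]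

lemma discount_pos (hγ : StepSizes γ) (n : ℕ) : 0 < discount γ n :=
  Finset.prod_pos fun k _ => hγ.one_sub_pos (k + 1)

lemma monotone_div_discount (hγ : StepSizes γ) {h : ℕ → ℝ}
    (hh : ∀ n, (1 - γ (n + 1)) * h n ≤ h (n + 1)) : Monotone fun n => h n / discount γ n := by
  refine monotone_nat_of_le_succ fun n => ?_
  rw [discount_succ, div_le_div_iff₀ (hγ.discount_pos n)
    (mul_pos (hγ.one_sub_pos _) (hγ.discount_pos n)), ← mul_assoc, mul_comm (h n)]
  exact mul_le_mul_of_nonneg_right (hh n) (hγ.discount_pos n).le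

lemma mul_discount_le (hγ : StepSizes γ) (n : ℕ) : γ 0 * discount γ n ≤ γ n := by
  induction n with
  | zero => simp [discount]
  | succ n ih =>
    calc γ 0 * discount γ (n + 1) = γ 0 * discount γ n * (1 - γ (n + 1)) := by
          rw [discount_succ]; ring
      _ ≤ γ n * (1 - γ (n + 1)) := by gcongr; exact (hγ.one_sub_pos _).le
      _ ≤ γ (n + 1) := hγ.step n

lemma discount_tendsto_zero (hγ : StepSizes γ) : Tendsto (discount γ) atTop (𝓝 0) := by
  refine squeeze_zero (fun n => (hγ.discount_pos n).le) (fun n => ?_)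
    (by simpa using hγ.tendsto_zero.const_mul (γ 0)⁻¹)
  exact (le_inv_mul_iff₀ (hγ.pos 0)).2 (hγ.mul_discount_le n)

lemma discount_div_tendsto_zero (hγ : StepSizes γ) {a : ℕ → ℝ} (ha : ∀ n, 0 < a n)
    (hγa : Tendsto (fun n => γ n / a n) atTop (𝓝 0)) :
    Tendsto (fun n => discount γ n / a n) atTop (𝓝 0) := by
  refine squeeze_zero (fun n => div_nonneg (hγ.discount_pos n).le (ha n).le) (fun n => ?_)
    (by simpa using hγa.const_mul (γ 0)⁻¹)
  rw [← mul_div_assoc]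
  exact div_le_div_of_nonneg_right ((le_inv_mul_iff₀ (hγ.pos 0)).2 (hγ.mul_discount_le n))
    (ha n).le

lemma inv_le (hγ : StepSizes γ) (n : ℕ) : (γ n)⁻¹ ≤ (γ 0)⁻¹ + n := by
  induction n with
  | zero => simp
  | succ n ih =>
    have hstep : (1 - γ (n + 1)) / γ (n + 1) ≤ 1 / γ n :=
      (div_le_div_iff₀ (hγ.pos _) (hγ.pos n)).2 (by linarith [hγ.step n])
    rw [sub_div, div_self (hγ.pos _).ne', one_div, one_div] at hstep
    push_cast
    linarith

lemma one_le_mul_natCast_mul (hγ : StepSizes γ) {n : ℕ} (hn : n ≠ 0) :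
    1 ≤ ((γ 0)⁻¹ + 1) * (n * γ n) := by
  have hinv := hγ.inv_le n
  have hγ₀ : 0 < (γ 0)⁻¹ := inv_pos.2 (hγ.pos 0)
  have hγn := hγ.pos n
  rw [inv_le_iff_one_le_mul₀ hγn] at hinv
  calc 1 ≤ ((γ 0)⁻¹ + n) * γ n := hinv
    _ ≤ ((γ 0)⁻¹ * n + n) * γ n := by
        gcongr
        exact le_mul_of_one_le_right hγ₀.le (by exact_mod_cast Nat.one_le_iff_ne_zero.2 hn)
    _ = ((γ 0)⁻¹ + 1) * (n * γ n) := by ring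

/-- Since `a` is antitone it solves the recursion for `h` up to the sign of the increment, and two
solutions differ by a multiple of `discount γ`. -/
lemma sub_mul_discount_le (hγ : StepSizes γ) {a h : ℕ → ℝ} {C : ℝ} {n₀ n : ℕ} (ha : Antitone a)
    (h₀ : a n₀ - C * discount γ n₀ ≤ h n₀)
    (hh : ∀ n ≥ n₀, (1 - γ (n + 1)) * h n + γ (n + 1) * a n ≤ h (n + 1)) (hn : n₀ ≤ n) :
    a n - C * discount γ n ≤ h n := by
  induction n, hn using Nat.le_induction with
  | base => exact h₀
  | succ n hn ih =>
    calc a (n + 1) - C * discount γ (n + 1) ≤ a n - C * discount γ (n + 1) := by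
          linarith [ha n.le_succ]
      _ = (1 - γ (n + 1)) * (a n - C * discount γ n) + γ (n + 1) * a n := by
          rw [discount_succ]; ring
      _ ≤ (1 - γ (n + 1)) * h n + γ (n + 1) * a n := by
          gcongr; exact (hγ.one_sub_pos _).le
      _ ≤ h (n + 1) := hh n hn

lemma eventually_forall_sub_le (hγ : StepSizes γ) {ι : Type*} {s : Set ι} {a : ℝ} {h : ℕ → ι → ℝ}
    (hbdd : ∀ᶠ n in atTop, BddBelow (h n '' s))
    (hh : ∀ᶠ n in atTop, ∀ x ∈ s, (1 - γ (n + 1)) * h n x + γ (n + 1) * a ≤ h (n + 1) x) {ε : ℝ}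
    (hε : 0 < ε) : ∀ᶠ n in atTop, ∀ x ∈ s, a - ε ≤ h n x := by
  obtain ⟨n₀, hn₀⟩ := eventually_atTop.1 (hbdd.and hh)
  obtain ⟨L, hL⟩ := (hn₀ n₀ le_rfl).1
  set C := (a - L) / discount γ n₀ with hC
  have hlim : Tendsto (fun n => C * discount γ n) atTop (𝓝 0) := by
    simpa using hγ.discount_tendsto_zero.const_mul C
  filter_upwards [hlim.eventually (gt_mem_nhds hε), eventually_ge_atTop n₀] with n hn hn₀' x hx
  have h₀ : a - C * discount γ n₀ ≤ h n₀ x := by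
    rw [hC, div_mul_cancel₀ _ (hγ.discount_pos n₀).ne']
    linarith [hL (Set.mem_image_of_mem _ hx)]
  linarith [hγ.sub_mul_discount_le (a := fun _ => a) (h := fun n => h n x) antitone_const h₀
    (fun m hm => (hn₀ m hm).2 x hx) hn₀']

lemma eventually_le_add (hγ : StepSizes γ) {a : ℝ} {h : ℕ → ℝ}
    (hh : ∀ᶠ n in atTop, h (n + 1) ≤ (1 - γ (n + 1)) * h n + γ (n + 1) * a) {ε : ℝ} (hε : 0 < ε) :
    ∀ᶠ n in atTop, h n ≤ a + ε := by
  have := hγ.eventually_forall_sub_le (s := (Set.univ : Set Unit)) (a := -a) (h := fun n _ => -h n)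
    (.of_forall fun n => (Set.toFinite _).bddBelow) (hh.mono fun n hn x _ => by linarith) hε
  filter_upwards [this] with n hn
  linarith [hn () trivial]

lemma one_sub_half_mul_le_rpow (hγ : StepSizes γ) {θ : ℝ} (hθ : 0 ≤ θ) (n : ℕ) :
    1 - θ / 2 * γ n ≤ (1 - γ n) ^ (θ / 4) := by
  have hlog : -(2 * γ n) ≤ Real.log (1 - γ n) := by
    have hinv : (1 - γ n)⁻¹ ≤ 1 + 2 * γ n := by
      rw [inv_le_iff_one_le_mul₀ (hγ.one_sub_pos n)]
      nlinarith [hγ.pos n, hγ.le_half n]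
    linarith [Real.one_sub_inv_le_log_of_pos (hγ.one_sub_pos n)]
  rw [Real.rpow_def_of_pos (hγ.one_sub_pos n)]
  nlinarith [Real.add_one_le_exp (Real.log (1 - γ n) * (θ / 4))]

end StepSizes

lemma one_add_half_mul_le_rpow {η t : ℝ} (hη : 0 < η) (ht₀ : 0 ≤ t) (ht₁ : t ≤ 1) :
    1 + η / 2 * t ≤ (1 + t) ^ η := by
  have hlog : t / 2 ≤ Real.log (1 + t) := by
    have hinv : (1 + t)⁻¹ ≤ 1 - t / 2 := by
      rw [inv_le_iff_one_le_mul₀ (by linarith)]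
      nlinarith
    linarith [Real.one_sub_inv_le_log_of_pos (show (0 : ℝ) < 1 + t by linarith)]
  rw [Real.rpow_def_of_pos (by linarith)]
  nlinarith [Real.add_one_le_exp (Real.log (1 + t) * η)]

/-- In the variable `κ ^ η` the escape from `0` of `κ' = (1 - γ) κ + γ c κ ^ (1 - η)` is linear. -/
lemma posPart_sub_rpow_le {η γ c κ κ' : ℝ} (hη₀ : 0 < η) (hη₁ : η ≤ 1) (hγ₀ : 0 ≤ γ)
    (hγ₁ : γ ≤ 1) (hκ : 0 < κ) (hc : γ * c ≤ κ ^ η)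
    (hκ' : (1 - γ) * κ + γ * c * κ ^ (1 - η) ≤ κ') (hc₀ : 0 ≤ c) :
    (c - κ' ^ η)⁺ ≤ (1 - η / 2 * γ) * (c - κ ^ η)⁺ := by
  set u := κ ^ η with hu
  have hu₀ : 0 < u := Real.rpow_pos_of_pos hκ η
  set t := γ * (c / u - 1) with ht
  have hut : u * t = γ * (c - u) := by rw [ht]; field_simp
  have ht₁ : t ≤ 1 := by
    have : γ * (c / u) ≤ 1 := by rw [← mul_div_assoc, div_le_one hu₀]; exact hc
    rw [ht]; linarith
  have ht₀ : 0 ≤ 1 + t := by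
    have : 0 ≤ γ * (c / u) := by positivity
    rw [ht]; linarith
  have hκt : κ * (1 + t) ≤ κ' := by
    refine le_of_eq_of_le ?_ hκ'
    rw [Real.rpow_sub hκ, Real.rpow_one, ← hu, ht]
    field_simp
    ring
  have hpow : u * (1 + t) ^ η ≤ κ' ^ η := by
    rw [hu, ← Real.mul_rpow hκ.le ht₀]
    exact Real.rpow_le_rpow (mul_nonneg hκ.le ht₀) hκt hη₀.le
  rcases le_total c u with hcu | hcu
  · have ht' : t ≤ 0 := by
      rw [ht]; exact mul_nonpos_of_nonneg_of_nonpos hγ₀ (by linarith [(div_le_one hu₀).2 hcu])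
    have : c ≤ κ' ^ η := by
      calc c ≤ u * (1 + t) := by nlinarith
        _ ≤ u * (1 + t) ^ η := by
          gcongr; exact Real.self_le_rpow_of_le_one ht₀ (by linarith) hη₁
        _ ≤ κ' ^ η := hpow
    rw [posPart_eq_zero.2 (by linarith), posPart_eq_zero.2 (by linarith), mul_zero]
  · have ht' : 0 ≤ t := by
      rw [ht]; exact mul_nonneg hγ₀ (by linarith [(one_le_div hu₀).2 hcu])
    have hfac : 0 ≤ 1 - η / 2 * γ := by nlinarith
    rw [posPart_of_nonneg (sub_nonneg.2 hcu)]
    refine max_le ?_ (mul_nonneg hfac (sub_nonneg.2 hcu))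
    have := mul_le_mul_of_nonneg_left (one_add_half_mul_le_rpow hη₀ ht' ht₁) hu₀.le
    nlinarith

/-- Between two resets, which happen only while `H` is not small, `D` decreases at the rate at
which `H` can decrease at most. -/
lemma exists_le_mul_rpow_of_decay_or_reset (hγ : StepSizes γ) {D H : ℕ → ℝ} {θ B : ℝ} {n₀ : ℕ}
    (hθ : 0 ≤ θ) (hB : 0 ≤ B) (hH : ∀ n ≥ n₀, 0 < H n)
    (hHstep : ∀ n ≥ n₀, (1 - γ (n + 1)) * H n ≤ H (n + 1))
    (hD : ∀ n ≥ n₀, D (n + 1) ≤ (1 - γ (n + 1)) ^ θ * D n ∨ 1 ≤ H (n + 1) ∧ D (n + 1) ≤ B) :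
    ∃ C, 0 ≤ C ∧ ∀ n ≥ n₀, D n ≤ C * H n ^ θ := by
  refine ⟨max B (D n₀ / H n₀ ^ θ), le_max_of_le_left hB, fun n hn => ?_⟩
  induction n, hn using Nat.le_induction with
  | base =>
    rw [← div_le_iff₀ (Real.rpow_pos_of_pos (hH n₀ le_rfl) θ)]
    exact le_max_right _ _
  | succ n hn ih =>
    set C := max B (D n₀ / H n₀ ^ θ)
    have : 0 ≤ C := le_max_of_le_left hB
    rcases hD n hn with hdecay | ⟨hone, hreset⟩
    · calc D (n + 1) ≤ (1 - γ (n + 1)) ^ θ * (C * H n ^ θ) :=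
            hdecay.trans (mul_le_mul_of_nonneg_left ih
              (Real.rpow_nonneg (hγ.one_sub_pos _).le θ))
        _ = C * ((1 - γ (n + 1)) * H n) ^ θ := by
            rw [Real.mul_rpow (hγ.one_sub_pos _).le (hH n hn).le]; ring
        _ ≤ C * H (n + 1) ^ θ := by
            gcongr
            · exact mul_nonneg (hγ.one_sub_pos _).le (hH n hn).le
            · exact hHstep n hn
    · calc D (n + 1) ≤ C * 1 := by rw [mul_one]; exact hreset.trans (le_max_left _ _)
        _ ≤ C * H (n + 1) ^ θ := by gcongr; exact Real.one_le_rpow hone hθ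

lemma abs_stepAvg_le {γ ξ : ℕ → ℝ} (hγ : StepSizes γ) {B : ℝ} (hB : 0 ≤ B) {n : ℕ}
    (hξ : ∀ k ∈ Finset.Icc 1 n, |ξ k| ≤ B) : |stepAvg γ ξ n| ≤ B := by
  induction n with
  | zero => simpa [stepAvg] using hB
  | succ n ih =>
    have hprev := ih fun k hk => hξ k (Finset.Icc_subset_Icc_right n.le_succ hk)
    have hlast := hξ (n + 1) (Finset.right_mem_Icc.2 (Nat.le_add_left 1 n))
    calc |stepAvg γ ξ (n + 1)|
        ≤ (1 - γ (n + 1)) * |stepAvg γ ξ n| + γ (n + 1) * |ξ (n + 1)| := by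
          refine (abs_add_le _ _).trans_eq ?_
          rw [abs_mul, abs_mul, abs_of_pos (hγ.one_sub_pos _), abs_of_pos (hγ.pos _)]
      _ ≤ (1 - γ (n + 1)) * B + γ (n + 1) * B := by
          gcongr
          · exact (hγ.one_sub_pos _).le
          · exact (hγ.pos _).le
      _ = B := by ring

lemma stepAvg_neg (γ ξ : ℕ → ℝ) (n : ℕ) : stepAvg γ (fun k => -ξ k) n = -stepAvg γ ξ n := by
  induction n with
  | zero => simp [stepAvg]
  | succ n ih => simp only [stepAvg, ih]; ring

lemma stepAvg_sub (γ ξ ζ : ℕ → ℝ) (n : ℕ) :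
    stepAvg γ (fun k => ξ k - ζ k) n = stepAvg γ ξ n - stepAvg γ ζ n := by
  induction n with
  | zero => simp [stepAvg]
  | succ n ih => simp only [stepAvg, ih]; ring

end Recursions

section ConditionalLaw

open ProbabilityTheory TopologicalSpace
open scoped RealInnerProductSpace

section CondLaw

variable {E : Type*} [MeasurableSpace E] {Ω : Type*} {m mΩ : MeasurableSpace Ω} {μ : Measure Ω}
  {X : Ω → E}

section Kernel

variable [StandardBorelSpace E] [Nonempty E] [IsProbabilityMeasure μ]

/-- The regular conditional law of `X` given the σ-algebra `m`. -/
noncomputable def condLaw {Ω : Type*} {mΩ : MeasurableSpace Ω} (μ : Measure Ω) [IsFiniteMeasure μ]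
    (m : MeasurableSpace Ω) (X : Ω → E) : @Kernel Ω E m _ :=
  @condDistrib Ω Ω E _ _ _ mΩ m X id μ _

instance : IsMarkovKernel (condLaw μ m X) := by
  unfold condLaw; infer_instance

lemma condExp_eq_integral_condLaw (hm : m ≤ mΩ) (hX : Measurable X) {Φ : Ω × E → ℝ}
    (hΦ : @StronglyMeasurable _ _ _ (m.prod inferInstance) Φ)
    (hint : Integrable (fun ω => Φ (ω, X ω)) μ) :
    μ[fun ω => Φ (ω, X ω) | m] =ᵐ[μ] fun ω => ∫ y, Φ (ω, y) ∂condLaw μ m X ω := by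
  have := @condExp_prod_ae_eq_integral_condDistrib Ω Ω E ℝ _ _ _ _ mΩ μ _ id X m Φ _ _
    (measurable_id'' hm) hX.aemeasurable hΦ hint
  rwa [MeasurableSpace.comap_id] at this

end Kernel

variable [TopologicalSpace E] [OpensMeasurableSpace E] {ν : Measure E} {p : Ω → E → ℝ}

/-- `p ω` represents the conditional law of `X` given `m` with respect to `ν`, in the weak sense of
integrals of bounded continuous functions. Nonnegativity of `p` is a consequence. -/
structure HasCondDensity {Ω : Type*} {mΩ : MeasurableSpace Ω} (μ : Measure Ω)
    (m : MeasurableSpace Ω) (ν : Measure E) (X : Ω → E) (p : Ω → E → ℝ) : Prop where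
  continuous : ∀ ω, Continuous (p ω)
  integrable : ∀ ω, Integrable (p ω) ν
  condExp : ∀ φ : E → ℝ, Continuous φ → (∃ C, ∀ x, |φ x| ≤ C) →
    μ[fun ω => φ (X ω) | m] =ᵐ[μ] fun ω => ∫ y, φ y * p ω y ∂ν

namespace HasCondDensity

lemma stronglyMeasurable_uncurry [MetrizableSpace E] [SecondCountableTopology E]
    (h : HasCondDensity μ m ν X p) (hp : ∀ y, Measurable[m] fun ω => p ω y) :
    StronglyMeasurable[m.prod inferInstance] (Function.uncurry p) := by
  have hswap : StronglyMeasurable[MeasurableSpace.prod inferInstance m]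
      (Function.uncurry fun y ω => p ω y) :=
    @stronglyMeasurable_uncurry_of_continuous_of_stronglyMeasurable _ _ _ _ _ _ _ _ _ _ m _
      h.continuous fun y => (hp y).stronglyMeasurable
  exact hswap.comp_measurable measurable_swap

variable [StandardBorelSpace E] [Nonempty E] [IsProbabilityMeasure μ]

lemma ae_integral_condLaw (h : HasCondDensity μ m ν X p) (hm : m ≤ mΩ) (hX : Measurable X)
    {φ : E → ℝ} (hφ : Continuous φ) {C : ℝ} (hC : ∀ x, |φ x| ≤ C) :
    ∀ᵐ ω ∂μ, ∫ y, φ y ∂condLaw μ m X ω = ∫ y, φ y * p ω y ∂ν := by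
  have hint : Integrable (fun ω => φ (X ω)) μ :=
    .of_bound (hφ.measurable.comp hX).aestronglyMeasurable C (.of_forall fun ω => hC _)
  filter_upwards [condExp_eq_integral_condLaw (Φ := fun z => φ z.2) hm hX
    (hφ.stronglyMeasurable.comp_measurable measurable_snd) hint, h.condExp φ hφ ⟨C, hC⟩]
    with ω h₁ h₂
  rw [← h₂, h₁]

lemma ae_integral_eq_one (h : HasCondDensity μ m ν X p) (hm : m ≤ mΩ) (hX : Measurable X) :
    ∀ᵐ ω ∂μ, ∫ y, p ω y ∂ν = 1 := by
  filter_upwards [h.ae_integral_condLaw hm hX (φ := 1) continuous_one (C := 1) (by simp)]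
    with ω hω
  simpa using hω.symm

end HasCondDensity

end CondLaw

lemma nonneg_of_withDensity_ofReal_neg_le {E : Type*} [TopologicalSpace E]
    [MeasurableSpace E] [OpensMeasurableSpace E] {ν : Measure E} [ν.IsOpenPosMeasure]
    {p : E → ℝ} (hp : Continuous p) (hle : (ν.withDensity fun y => ENNReal.ofReal (-p y))
      ≤ ν.withDensity fun y => ENNReal.ofReal (p y)) (y : E) : 0 ≤ p y := by
  by_contra! hy
  have hopen : IsOpen {z | p z < 0} := isOpen_lt hp continuous_const
  refine (hopen.measure_pos ν ⟨y, hy⟩).ne' ?_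
  have hzero := hle {z | p z < 0}
  rw [withDensity_apply _ hopen.measurableSet, withDensity_apply _ hopen.measurableSet,
    setLIntegral_congr_fun (g := 0) hopen.measurableSet
      fun z hz => ENNReal.ofReal_of_nonpos (le_of_lt hz)] at hzero
  simp only [Pi.zero_apply, lintegral_zero, nonpos_iff_eq_zero] at hzero
  rw [setLIntegral_eq_zero_iff hopen.measurableSet (by fun_prop)] at hzero
  refine measure_mono_null (fun z (hz : p z < 0) => ?_) (ae_iff.1 hzero)
  refine fun hz' => (ENNReal.ofReal_pos.2 (neg_pos.2 hz)).ne' (hz' hz)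

variable {E : Type*} [NormedAddCommGroup E] [InnerProductSpace ℝ E] [MeasurableSpace E]
  {ν : Measure E}

lemma integrable_exp_inner_mul_I [OpensMeasurableSpace E] (κ : Measure E) [IsFiniteMeasure κ]
    (t : E) : Integrable (fun y => Complex.exp (⟪y, t⟫ * Complex.I)) κ :=
  .of_bound (by fun_prop : Continuous _).aestronglyMeasurable 1
    (.of_forall fun y => (Complex.norm_exp_ofReal_mul_I _).le)

lemma charFun_withDensity_ofReal {p : E → ℝ} (hp : Measurable p) (t : E) :
    charFun (ν.withDensity fun y => ENNReal.ofReal (p y)) t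
      = ∫ y, ((p y)⁺ : ℝ) • Complex.exp (⟪y, t⟫ * Complex.I) ∂ν := by
  rw [charFun_apply, integral_withDensity_eq_integral_toReal_smul hp.ennreal_ofReal
    (.of_forall fun _ => ENNReal.ofReal_lt_top)]
  simp only [ENNReal.toReal_ofReal', posPart_def]

lemma eq_withDensity_of_charFun_eq [BorelSpace E] [SecondCountableTopology E] [CompleteSpace E]
    [ν.IsOpenPosMeasure] {κ : Measure E} [IsFiniteMeasure κ] {p : E → ℝ} (hp : Continuous p)
    (hpi : Integrable p ν)
    (h : ∀ t, charFun κ t = ∫ y, p y • Complex.exp (⟪y, t⟫ * Complex.I) ∂ν) :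
    (∀ y, 0 ≤ p y) ∧ κ = ν.withDensity fun y => ENNReal.ofReal (p y) := by
  have hfin := isFiniteMeasure_withDensity_ofReal hpi.2
  have hfin' := isFiniteMeasure_withDensity_ofReal hpi.neg.2
  have hint : ∀ {f : E → ℝ}, Integrable f ν → ∀ t,
      Integrable (fun y => f y • Complex.exp (⟪y, t⟫ * Complex.I)) ν := fun {f} hf t =>
    hf.smul_bdd 1 (by fun_prop : Continuous _).aestronglyMeasurable
      (.of_forall fun y => (Complex.norm_exp_ofReal_mul_I _).le)
  have heq : κ + (ν.withDensity fun y => ENNReal.ofReal (-p y))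
      = ν.withDensity fun y => ENNReal.ofReal (p y) := by
    refine Measure.ext_of_charFun (funext fun t => ?_)
    rw [charFun_apply, integral_add_measure (integrable_exp_inner_mul_I _ t)
      (integrable_exp_inner_mul_I _ t), ← charFun_apply, ← charFun_apply, h,
      charFun_withDensity_ofReal hp.measurable,
      charFun_withDensity_ofReal (p := fun y => -p y) hp.measurable.neg,
      ← integral_add (hint hpi t) (hint (f := fun y => (-p y)⁺) hpi.neg.pos_part t)]
    refine integral_congr_ae (.of_forall fun y => ?_)
    simp only [← add_smul]
    congr 1
    linarith [posPart_sub_negPart (p y), posPart_neg (p y)]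
  have hnonneg := nonneg_of_withDensity_ofReal_neg_le hp (heq ▸ Measure.le_add_left le_rfl)
  refine ⟨hnonneg, ?_⟩
  rw [← heq]
  simp [ENNReal.ofReal_of_nonpos, hnonneg]

lemma continuous_integral_smul_exp_inner_mul_I [OpensMeasurableSpace E]
    [SecondCountableTopology E] {p : E → ℝ} (hp : Integrable p ν) :
    Continuous fun t => ∫ y, p y • Complex.exp (⟪y, t⟫ * Complex.I) ∂ν := by
  refine continuous_of_dominated (bound := fun y => |p y|) (fun t => ?_)
    (fun t => .of_forall fun y => ?_) hp.abs (.of_forall fun y => by fun_prop)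
  · exact hp.1.smul (by fun_prop : Continuous _).aestronglyMeasurable
  · rw [norm_smul, Complex.norm_exp_ofReal_mul_I, mul_one, Real.norm_eq_abs]

lemma integral_smul_exp_inner_mul_I [OpensMeasurableSpace E] [SecondCountableTopology E]
    {p : E → ℝ} (hp : Integrable p ν) (t : E) :
    ∫ y, p y • Complex.exp (⟪y, t⟫ * Complex.I) ∂ν
      = (∫ y, Real.cos ⟪y, t⟫ * p y ∂ν : ℝ) + (∫ y, Real.sin ⟪y, t⟫ * p y ∂ν : ℝ) * Complex.I := by
  have hcos : Integrable (fun y => Real.cos ⟪y, t⟫ * p y) ν :=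
    hp.bdd_mul (c := 1) (by fun_prop : Continuous _).aestronglyMeasurable
      (.of_forall fun y => Real.abs_cos_le_one _)
  have hsin : Integrable (fun y => Real.sin ⟪y, t⟫ * p y) ν :=
    hp.bdd_mul (c := 1) (by fun_prop : Continuous _).aestronglyMeasurable
      (.of_forall fun y => Real.abs_sin_le_one _)
  rw [← integral_complex_ofReal, ← integral_complex_ofReal, ← integral_mul_const,
    ← integral_add hcos.ofReal (hsin.ofReal.mul_const _)]
  refine integral_congr_ae (.of_forall fun y => ?_)
  simp only [Complex.exp_mul_I, Complex.real_smul]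
  push_cast
  ring

lemma charFun_eq_of_integral_eq [OpensMeasurableSpace E] [SecondCountableTopology E]
    {κ : Measure E} [IsFiniteMeasure κ] {p : E → ℝ} (hp : Integrable p ν) {t : E}
    (hcos : ∫ y, Real.cos ⟪y, t⟫ ∂κ = ∫ y, Real.cos ⟪y, t⟫ * p y ∂ν)
    (hsin : ∫ y, Real.sin ⟪y, t⟫ ∂κ = ∫ y, Real.sin ⟪y, t⟫ * p y ∂ν) :
    charFun κ t = ∫ y, p y • Complex.exp (⟪y, t⟫ * Complex.I) ∂ν := by
  rw [integral_smul_exp_inner_mul_I hp, ← hcos, ← hsin]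
  simpa [charFun_apply] using integral_smul_exp_inner_mul_I (integrable_const (μ := κ) (1 : ℝ)) t

variable [BorelSpace E] [SecondCountableTopology E] [CompleteSpace E] [ν.IsOpenPosMeasure]
  {Ω : Type*} {m mΩ : MeasurableSpace Ω} {μ : Measure Ω} [IsProbabilityMeasure μ] {X : Ω → E}
  {p : Ω → E → ℝ}

namespace HasCondDensity

lemma ae_eq_withDensity (h : HasCondDensity μ m ν X p) (hm : m ≤ mΩ)
    (hX : Measurable X) : ∀ᵐ ω ∂μ, (∀ y, 0 ≤ p ω y) ∧
      condLaw μ m X ω = ν.withDensity fun y => ENNReal.ofReal (p ω y) := by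
  have hcos := fun i => h.ae_integral_condLaw hm hX (φ := fun y => Real.cos ⟪y, denseSeq E i⟫)
    (by fun_prop) fun y => Real.abs_cos_le_one _
  have hsin := fun i => h.ae_integral_condLaw hm hX (φ := fun y => Real.sin ⟪y, denseSeq E i⟫)
    (by fun_prop) fun y => Real.abs_sin_le_one _
  filter_upwards [ae_all_iff.2 hcos, ae_all_iff.2 hsin] with ω hcos hsin
  refine eq_withDensity_of_charFun_eq (h.continuous ω) (h.integrable ω) (congrFun ?_)
  refine continuous_charFun.ext_on (denseRange_denseSeq E)
    (continuous_integral_smul_exp_inner_mul_I (h.integrable ω)) ?_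
  rintro _ ⟨i, rfl⟩
  exact charFun_eq_of_integral_eq (h.integrable ω) (hcos i) (hsin i)

lemma ae_nonneg (h : HasCondDensity μ m ν X p) (hm : m ≤ mΩ)
    (hX : Measurable X) : ∀ᵐ ω ∂μ, ∀ y, 0 ≤ p ω y :=
  (h.ae_eq_withDensity hm hX).mono fun _ => And.left

lemma condExp_comp_eq (h : HasCondDensity μ m ν X p) (hm : m ≤ mΩ)
    (hX : Measurable X) {Φ : Ω × E → ℝ}
    (hΦ : @StronglyMeasurable _ _ _ (m.prod inferInstance) Φ)
    (hint : Integrable (fun ω => Φ (ω, X ω)) μ) :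
    μ[fun ω => Φ (ω, X ω) | m] =ᵐ[μ] fun ω => ∫ y, Φ (ω, y) * p ω y ∂ν := by
  filter_upwards [condExp_eq_integral_condLaw hm hX hΦ hint, h.ae_eq_withDensity hm hX]
    with ω hω ⟨hnonneg, hlaw⟩
  rw [hω, hlaw, integral_withDensity_eq_integral_toReal_smul
    (h.continuous ω).measurable.ennreal_ofReal (.of_forall fun _ => ENNReal.ofReal_lt_top)]
  simp only [ENNReal.toReal_ofReal (hnonneg _), smul_eq_mul, mul_comm]

lemma measure_eq_zero_of_setIntegral_le_half (h : HasCondDensity μ m ν X p) (hm : m ≤ mΩ)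
    (hX : Measurable X) {V : Set Ω} (hV : MeasurableSet[m] V) {U : Set E} (hU : MeasurableSet U)
    (hle : ∀ ω ∈ V, ∫ y in U, p ω y ∂ν ≤ 1 / 2) (hnull : μ (V ∩ X ⁻¹' Uᶜ) = 0) : μ V = 0 := by
  have hint : Integrable (fun ω => U.indicator (1 : E → ℝ) (X ω)) μ :=
    (integrable_const 1).indicator (hX hU)
  have hcond := h.condExp_comp_eq (Φ := fun z => U.indicator 1 z.2) hm hX
    ((stronglyMeasurable_one.indicator hU).comp_measurable measurable_snd) hint
  have hhalf : μ.real V ≤ μ.real V * (1 / 2) := by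
    calc μ.real V = ∫ _ in V, (1 : ℝ) ∂μ := by simp
      _ = ∫ ω in V, U.indicator (1 : E → ℝ) (X ω) ∂μ := by
          refine integral_congr_ae ((ae_restrict_iff' (hm V hV)).2 ?_)
          filter_upwards [measure_eq_zero_iff_ae_notMem.1 hnull] with ω hω hωV
          rw [Set.indicator_of_mem (by by_contra hU'; exact hω ⟨hωV, hU'⟩), Pi.one_apply]
      _ = ∫ ω in V, μ[fun ω => U.indicator (1 : E → ℝ) (X ω) | m] ω ∂μ :=
          (setIntegral_condExp hm hint hV).symm
      _ ≤ ∫ ω in V, (1 / 2 : ℝ) ∂μ := by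
          refine setIntegral_mono_on_ae integrable_condExp.integrableOn
            (integrable_const _).integrableOn (hm V hV) ?_
          filter_upwards [hcond] with ω hω hωV
          have hmul : ∀ y, U.indicator 1 y * p ω y = U.indicator (p ω) y := fun y => by
            simp only [← Set.indicator_mul_left, Pi.one_apply, one_mul]
          simpa only [hω, hmul, integral_indicator hU] using hle ω hωV
      _ = μ.real V * (1 / 2) := by simp
  have : μ.real V = 0 := by linarith [measureReal_nonneg (μ := μ) (s := V)]
  rwa [measureReal_eq_zero_iff] at this

end HasCondDensity

end ConditionalLaw

section Concentration

lemma exp_le_one_add_add_sq {u : ℝ} (hu : |u| ≤ 1) : Real.exp u ≤ 1 + u + u ^ 2 := by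
  linarith [(abs_le.1 (Real.abs_exp_sub_one_sub_id_le hu)).2]

section Bernstein

variable {Ω : Type*} {m mΩ : MeasurableSpace Ω} {μ : Measure Ω} [IsProbabilityMeasure μ]
  {A ξ : Ω → ℝ} {R v : ℝ}

lemma integral_mul_le_of_condExp_le (hm : m ≤ mΩ) (hA : StronglyMeasurable[m] A)
    (hA₀ : ∀ ω, 0 ≤ A ω) (hAi : Integrable A μ) (hAξ : Integrable (A * ξ) μ)
    (hξ : Integrable ξ μ) (hv : ∀ᵐ ω ∂μ, μ[ξ | m] ω ≤ v) :
    ∫ ω, A ω * ξ ω ∂μ ≤ v * ∫ ω, A ω ∂μ := by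
  have hpull := condExp_mul_of_stronglyMeasurable_left hA hAξ hξ
  calc ∫ ω, A ω * ξ ω ∂μ = ∫ ω, μ[A * ξ | m] ω ∂μ := (integral_condExp hm).symm
    _ ≤ ∫ ω, v * A ω ∂μ := by
        refine integral_mono_ae integrable_condExp (hAi.const_mul v) ?_
        filter_upwards [hpull, hv] with ω h hle
        rw [h, Pi.mul_apply, mul_comm v]
        exact mul_le_mul_of_nonneg_left hle (hA₀ ω)
    _ = v * ∫ ω, A ω ∂μ := integral_const_mul _ _

lemma condExp_exp_mul_le (hm : m ≤ mΩ) (hξ : AEStronglyMeasurable ξ μ)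
    (hR : ∀ᵐ ω ∂μ, |ξ ω| ≤ R) (hmean : μ[ξ | m] =ᵐ[μ] 0)
    (hsq : ∀ᵐ ω ∂μ, μ[fun ω => ξ ω ^ 2 | m] ω ≤ v) {t : ℝ} (ht : |t| * R ≤ 1) :
    ∀ᵐ ω ∂μ, μ[fun ω => Real.exp (t * ξ ω) | m] ω ≤ Real.exp (t ^ 2 * v) := by
  have hξi : Integrable ξ μ := .of_bound hξ R hR
  have hξ₂ : Integrable (fun ω => ξ ω ^ 2) μ := .of_bound (hξ.pow 2) (R ^ 2) (hR.mono fun ω h => by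
    rw [norm_pow]
    exact pow_le_pow_left₀ (norm_nonneg _) h 2)
  have hsmall : ∀ᵐ ω ∂μ, |t * ξ ω| ≤ 1 := hR.mono fun ω h => by
    rw [abs_mul]
    exact (mul_le_mul_of_nonneg_left h (abs_nonneg t)).trans ht
  have hexp : Integrable (fun ω => Real.exp (t * ξ ω)) μ :=
    ProbabilityTheory.integrable_exp_mul_of_mem_Icc hξ.aemeasurable (hR.mono fun _ => abs_le.1)
  have hmono : μ[fun ω => Real.exp (t * ξ ω) | m]
      ≤ᵐ[μ] μ[(fun _ => (1 : ℝ)) + t • ξ + t ^ 2 • (fun ω => ξ ω ^ 2) | m] := by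
    refine condExp_mono hexp (((integrable_const 1).add (hξi.smul t)).add (hξ₂.smul _)) ?_
    filter_upwards [hsmall] with ω h
    simpa only [Pi.add_apply, Pi.smul_apply, smul_eq_mul, mul_pow] using exp_le_one_add_add_sq h
  filter_upwards [hmono, condExp_add ((integrable_const 1).add (hξi.smul t)) (hξ₂.smul (t ^ 2)) m,
    condExp_add (integrable_const 1) (hξi.smul t) m, condExp_smul t ξ m,
    condExp_smul (t ^ 2) (fun ω => ξ ω ^ 2) m, hmean, hsq] with ω h h₁ h₂ h₃ h₄ h₅ hv
  rw [h₁, Pi.add_apply, h₂, Pi.add_apply, h₃, h₄, Pi.smul_apply, Pi.smul_apply, h₅,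
    condExp_const hm] at h
  refine h.trans (le_trans ?_ (Real.add_one_le_exp _))
  simp only [Pi.zero_apply, smul_eq_mul]
  nlinarith [sq_nonneg t]

end Bernstein

section Increments

variable {Ω : Type*} {mΩ : MeasurableSpace Ω} {μ : Measure Ω}

/-- A sequence of martingale increments `ξ (n + 1)` bounded by `R (n + 1)`, with conditional
variances bounded by `v (n + 1)`. -/
structure BoundedIncrements (μ : Measure Ω) (ℱ : Filtration ℕ mΩ) (ξ : ℕ → Ω → ℝ)
    (R v : ℕ → ℝ) : Prop where
  stronglyMeasurable : ∀ n, StronglyMeasurable[ℱ (n + 1)] (ξ (n + 1))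
  abs_increment_le : ∀ n, ∀ᵐ ω ∂μ, |ξ (n + 1) ω| ≤ R (n + 1)
  condExp : ∀ n, μ[ξ (n + 1) | ℱ n] =ᵐ[μ] 0
  condExp_sq : ∀ n, ∀ᵐ ω ∂μ, μ[fun ω => ξ (n + 1) ω ^ 2 | ℱ n] ω ≤ v (n + 1)

namespace BoundedIncrements

variable {ℱ : Filtration ℕ mΩ} {ξ : ℕ → Ω → ℝ} {R v γ : ℕ → ℝ}

lemma neg (hξ : BoundedIncrements μ ℱ ξ R v) :
    BoundedIncrements μ ℱ (fun n ω => -ξ n ω) R v where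
  stronglyMeasurable n := (hξ.stronglyMeasurable n).neg
  abs_increment_le n := by simpa only [abs_neg] using hξ.abs_increment_le n
  condExp n := by
    filter_upwards [condExp_neg (ξ (n + 1)) (ℱ n) (μ := μ), hξ.condExp n] with ω h h₀
    rw [Pi.zero_apply, ← neg_zero, ← Pi.zero_apply (M := fun _ : Ω => ℝ) ω, ← h₀]
    exact h
  condExp_sq n := by simpa only [neg_sq] using hξ.condExp_sq n

lemma stronglyMeasurable_stepAvg (hξ : BoundedIncrements μ ℱ ξ R v) (n : ℕ) :
    StronglyMeasurable[ℱ n] fun ω => stepAvg γ (ξ · ω) n := by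
  induction n with
  | zero => exact stronglyMeasurable_const
  | succ n ih =>
    exact ((ih.mono (ℱ.mono n.le_succ)).const_mul _).add ((hξ.stronglyMeasurable n).const_mul _)

lemma ae_abs_stepAvg_le (hξ : BoundedIncrements μ ℱ ξ R v) (hγ : StepSizes γ)
    (hR : Monotone R) (hR₀ : ∀ n, 0 ≤ R n) (n : ℕ) : ∀ᵐ ω ∂μ, |stepAvg γ (ξ · ω) n| ≤ R n := by
  filter_upwards [ae_all_iff.2 hξ.abs_increment_le] with ω hω
  refine abs_stepAvg_le hγ (hR₀ n) fun k hk => ?_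
  obtain ⟨hk₁, hkn⟩ := Finset.mem_Icc.1 hk
  obtain ⟨j, rfl⟩ := Nat.exists_eq_add_of_le' hk₁
  exact (hω j).trans (hR hkn)

variable [IsProbabilityMeasure μ]

lemma of_nonneg {Z C : ℕ → Ω → ℝ} (hZ : ∀ n, StronglyMeasurable[ℱ (n + 1)] (Z (n + 1)))
    (hZ₀ : ∀ n, ∀ᵐ ω ∂μ, 0 ≤ Z (n + 1) ω) (hZR : ∀ n, ∀ᵐ ω ∂μ, Z (n + 1) ω ≤ R (n + 1))
    (hC : ∀ n, StronglyMeasurable[ℱ n] (C (n + 1))) (hZC : ∀ n, μ[Z (n + 1) | ℱ n] =ᵐ[μ] C (n + 1))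
    (hZv : ∀ n, ∀ᵐ ω ∂μ, μ[fun ω => Z (n + 1) ω ^ 2 | ℱ n] ω ≤ v (n + 1)) :
    BoundedIncrements μ ℱ (fun n ω => Z n ω - C n ω) R v := by
  have hZm : ∀ n, AEStronglyMeasurable (Z (n + 1)) μ := fun n =>
    ((hZ n).mono (ℱ.le _)).aestronglyMeasurable
  have hLp : ∀ n, MemLp (Z (n + 1)) 2 μ := fun n => by
    refine .of_bound (hZm n) (R (n + 1)) ?_
    filter_upwards [hZ₀ n, hZR n] with ω h₀ hR
    rwa [Real.norm_of_nonneg h₀]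
  have hZi : ∀ n, Integrable (Z (n + 1)) μ := fun n => (hLp n).integrable one_le_two
  refine ⟨fun n => (hZ n).sub ((hC n).mono (ℱ.mono n.le_succ)), fun n => ?_, fun n => ?_,
    fun n => ?_⟩
  · have hCR : μ[Z (n + 1) | ℱ n] ≤ᵐ[μ] fun _ => R (n + 1) := by
      simpa only [condExp_const (ℱ.le n)] using
        condExp_mono (m := ℱ n) (hZi n) (integrable_const (R (n + 1))) (hZR n)
    filter_upwards [hZ₀ n, hZR n, hZC n, condExp_nonneg (m := ℱ n) (hZ₀ n), hCR]
      with ω h₀ hR hC hC₀ hCR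
    rw [hC] at hC₀ hCR
    exact abs_sub_le_of_nonneg_of_le h₀ hR hC₀ hCR
  · have hCi : Integrable (C (n + 1)) μ := integrable_condExp.congr (hZC n)
    filter_upwards [condExp_sub (hZi n) hCi (ℱ n), hZC n] with ω hω hC'
    refine hω.trans ?_
    rw [Pi.sub_apply, hC', condExp_of_stronglyMeasurable (ℱ.le n) (hC n) hCi, sub_self,
      Pi.zero_apply]
  · have hcenter : μ[fun ω => (Z (n + 1) ω - C (n + 1) ω) ^ 2 | ℱ n]
        =ᵐ[μ] ProbabilityTheory.condVar (ℱ n) (Z (n + 1)) μ :=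
      condExp_congr_ae ((hZC n).mono fun ω h => by simp [h])
    filter_upwards [hcenter, hZv n,
      ProbabilityTheory.condVar_ae_eq_condExp_sq_sub_sq_condExp (ℱ.le n) (hLp n)] with ω h hv hvar
    rw [h, hvar]
    exact (sub_le_self _ (sq_nonneg _)).trans hv

lemma integrable_exp_mul_stepAvg (hξ : BoundedIncrements μ ℱ ξ R v) (hγ : StepSizes γ)
    (hR : Monotone R) (hR₀ : ∀ n, 0 ≤ R n) (n : ℕ) (s : ℝ) :
    Integrable (fun ω => Real.exp (s * stepAvg γ (ξ · ω) n)) μ :=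
  ProbabilityTheory.integrable_exp_mul_of_mem_Icc
    ((hξ.stronglyMeasurable_stepAvg n).mono (ℱ.le n)).aestronglyMeasurable.aemeasurable
    ((hξ.ae_abs_stepAvg_le hγ hR hR₀ n).mono fun _ => abs_le.1)

lemma mgf_stepAvg_succ_le (hξ : BoundedIncrements μ ℱ ξ R v) (hγ : StepSizes γ)
    (hR : Monotone R) (hR₀ : ∀ n, 0 ≤ R n) (n : ℕ) {s : ℝ}
    (hs : |s| * (γ (n + 1) * R (n + 1)) ≤ 1) :
    ProbabilityTheory.mgf (fun ω => stepAvg γ (ξ · ω) (n + 1)) μ s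
      ≤ Real.exp ((s * γ (n + 1)) ^ 2 * v (n + 1))
        * ProbabilityTheory.mgf (fun ω => stepAvg γ (ξ · ω) n) μ (s * (1 - γ (n + 1))) := by
  have hsplit : ∀ ω, Real.exp (s * stepAvg γ (ξ · ω) (n + 1))
      = Real.exp (s * (1 - γ (n + 1)) * stepAvg γ (ξ · ω) n)
        * Real.exp (s * γ (n + 1) * ξ (n + 1) ω) := fun ω => by
    rw [← Real.exp_add, stepAvg]
    ring_nf
  have hint := hξ.integrable_exp_mul_stepAvg hγ hR hR₀ (n + 1) s
  simp only [ProbabilityTheory.mgf, hsplit] at hint ⊢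
  have hmeas := ((hξ.stronglyMeasurable n).mono (ℱ.le _)).aestronglyMeasurable (μ := μ)
  exact integral_mul_le_of_condExp_le (ℱ.le n)
    (Real.continuous_exp.comp_stronglyMeasurable ((hξ.stronglyMeasurable_stepAvg n).const_mul _))
    (fun ω => (Real.exp_pos _).le) (hξ.integrable_exp_mul_stepAvg hγ hR hR₀ n _) hint
    (ProbabilityTheory.integrable_exp_mul_of_mem_Icc hmeas.aemeasurable
      ((hξ.abs_increment_le n).mono fun _ => abs_le.1))
    (condExp_exp_mul_le (ℱ.le n) hmeas (hξ.abs_increment_le n) (hξ.condExp n) (hξ.condExp_sq n) (by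
      rwa [abs_mul, abs_of_pos (hγ.pos _), mul_assoc]))

lemma mgf_stepAvg_le (hξ : BoundedIncrements μ ℱ ξ R v) (hγ : StepSizes γ)
    (hR : Monotone R) (hR₀ : ∀ n, 0 ≤ R n) (hv : Monotone v) (hv₀ : ∀ n, 0 ≤ v n) (n : ℕ) :
    ∀ s, |s| * (γ n * R n) ≤ 1 → ProbabilityTheory.mgf (fun ω => stepAvg γ (ξ · ω) n) μ s
      ≤ Real.exp (s ^ 2 * (n * γ n ^ 2 * v n)) := by
  induction n with
  | zero => intro s _; simp [ProbabilityTheory.mgf, stepAvg]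
  | succ n ih =>
    intro s hs
    have hstep := hγ.step n
    have hdamp := (hγ.one_sub_pos (n + 1)).le
    have hγ₀ := (hγ.pos n).le
    have hprev := ih (s * (1 - γ (n + 1))) (by
      rw [abs_mul, abs_of_nonneg hdamp]
      calc |s| * (1 - γ (n + 1)) * (γ n * R n) = |s| * (γ n * (1 - γ (n + 1)) * R n) := by ring
        _ ≤ |s| * (γ (n + 1) * R (n + 1)) := by
            have := hR₀ n
            have := (hγ.pos (n + 1)).le
            gcongr
            exact hR n.le_succ
        _ ≤ 1 := hs)
    have hvar : (γ n * (1 - γ (n + 1))) ^ 2 * v n ≤ γ (n + 1) ^ 2 * v (n + 1) := by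
      have := hv₀ n
      gcongr
      exact hv n.le_succ
    refine (hξ.mgf_stepAvg_succ_le hγ hR hR₀ n hs).trans
      ((mul_le_mul_of_nonneg_left hprev (Real.exp_pos _).le).trans ?_)
    rw [← Real.exp_add, Real.exp_le_exp]
    push_cast
    nlinarith [mul_le_mul_of_nonneg_left hvar (mul_nonneg (sq_nonneg s) n.cast_nonneg)]

lemma measureReal_le_abs_stepAvg_le (hξ : BoundedIncrements μ ℱ ξ R v) (hγ : StepSizes γ)
    (hR : Monotone R) (hR₀ : ∀ n, 0 ≤ R n) (hv : Monotone v) (hv₀ : ∀ n, 0 ≤ v n) {n : ℕ}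
    {s : ℝ} (hs₀ : 0 ≤ s) (hs : s * (γ n * R n) ≤ 1) (ε : ℝ) :
    μ.real {ω | ε ≤ |stepAvg γ (ξ · ω) n|}
      ≤ 2 * Real.exp (-s * ε + s ^ 2 * (n * γ n ^ 2 * v n)) := by
  have hside : ∀ {ζ : ℕ → Ω → ℝ}, BoundedIncrements μ ℱ ζ R v →
      μ.real {ω | ε ≤ stepAvg γ (ζ · ω) n}
        ≤ Real.exp (-s * ε + s ^ 2 * (n * γ n ^ 2 * v n)) := fun hζ => by
    rw [Real.exp_add]
    exact (ProbabilityTheory.measure_ge_le_exp_mul_mgf ε hs₀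
      (hζ.integrable_exp_mul_stepAvg hγ hR hR₀ n s)).trans
      (mul_le_mul_of_nonneg_left (hζ.mgf_stepAvg_le hγ hR hR₀ hv hv₀ n s
        (by rwa [abs_of_nonneg hs₀])) (Real.exp_pos _).le)
  calc μ.real {ω | ε ≤ |stepAvg γ (ξ · ω) n|}
      ≤ μ.real ({ω | ε ≤ stepAvg γ (ξ · ω) n} ∪ {ω | ε ≤ stepAvg γ (fun k => -ξ k ω) n}) :=
        measureReal_mono fun ω hω => by
          simpa only [Set.mem_union, Set.mem_ofPred_eq, stepAvg_neg] using le_abs.1 hω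
    _ ≤ _ := measureReal_union_le _ _
    _ ≤ _ := by linarith [hside hξ, hside hξ.neg]

lemma eventually_measureReal_abs_stepAvg_le (hγ : StepSizes γ) (hR : Monotone R)
    (hR₀ : ∀ n, 0 ≤ R n) (hv : Monotone v) (hv₀ : ∀ n, 0 ≤ v n) {τ : ℕ → ℝ} (hτ : ∀ n, 0 < τ n)
    (hvar : Tendsto (fun n : ℕ => n * γ n ^ 2 * Real.log n * v n / τ n ^ 2) atTop (𝓝 0))
    (hbound : Tendsto (fun n : ℕ => Real.log n * γ n * R n / τ n) atTop (𝓝 0)) (p : ℕ)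
    {δ : ℝ} (hδ : 0 < δ) :
    ∀ᶠ n in atTop, ∀ ξ, BoundedIncrements μ ℱ ξ R v →
      μ.real {ω | δ * τ n ≤ |stepAvg γ (ξ · ω) n|} ≤ 2 * ((n : ℝ) ^ p)⁻¹ := by
  have hvar' := hvar.const_mul (4 * p / δ ^ 2)
  have hbound' := hbound.const_mul (2 * p / δ)
  rw [mul_zero] at hvar' hbound'
  filter_upwards [hvar'.eventually_le_const zero_lt_one, hbound'.eventually_le_const zero_lt_one,
    eventually_ge_atTop 1] with n hvarn hboundn hn ξ hξ
  have hn' : (1 : ℝ) ≤ n := by exact_mod_cast hn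
  have hlog : 0 ≤ Real.log n := Real.log_nonneg hn'
  have hτn := hτ n
  -- The exponent `-s δ τ + s² n γ² v` at `s = 2 p log n / (δ τ)` is at most `-p log n`.
  refine (hξ.measureReal_le_abs_stepAvg_le hγ hR hR₀ hv hv₀
    (s := 2 * p * Real.log n / (δ * τ n)) (by positivity) ?_ _).trans ?_
  · calc 2 * p * Real.log n / (δ * τ n) * (γ n * R n)
        = 2 * p / δ * (Real.log n * γ n * R n / τ n) := by field_simp
      _ ≤ 1 := hboundn
  · have hsq : (2 * p * Real.log n / (δ * τ n)) ^ 2 * (n * γ n ^ 2 * v n)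
        = p * Real.log n * (4 * p / δ ^ 2 * (n * γ n ^ 2 * Real.log n * v n / τ n ^ 2)) := by
      field_simp
      ring
    have hlin : -(2 * p * Real.log n / (δ * τ n)) * (δ * τ n) = -(2 * (p * Real.log n)) := by
      field_simp
    rw [hsq, hlin, ← Real.exp_log (inv_pos.2 (pow_pos (zero_lt_one.trans_le hn') p)),
      Real.log_inv, Real.log_pow]
    gcongr
    nlinarith [mul_le_mul_of_nonneg_left hvarn (mul_nonneg p.cast_nonneg hlog)]

end BoundedIncrements

end Increments

end Concentration

section UniformBorelCantelli

variable {E : Type*} [NormedAddCommGroup E] [NormedSpace ℝ E] [ProperSpace E]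

lemma exists_forall_exists_finset_card_le_pow_two_pow :
    ∃ N : ℕ, ∀ {r : ℝ}, 0 < r → ∀ k : ℕ, ∃ t : Finset E, t.card ≤ N ^ k ∧
      ∀ x ∈ closedBall (0 : E) r, ∃ y ∈ t, dist x y ≤ r / 2 ^ k := by
  classical
  obtain ⟨u, -, hu, hcover⟩ :=
    (isCompact_closedBall (0 : E) 1).finite_cover_balls (e := 1 / 2) (by norm_num)
  lift u to Finset E using hu
  refine ⟨u.card, fun {r} hr k => ?_⟩
  induction k with
  | zero => exact ⟨{0}, by simp, fun x hx => ⟨0, by simp, by simpa using hx⟩⟩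
  | succ k ih =>
    obtain ⟨t, ht, hnet⟩ := ih
    have hρ : 0 < r / 2 ^ k := by positivity
    refine ⟨Finset.image₂ (fun y z => y + (r / 2 ^ k) • z) t u, ?_, fun x hx => ?_⟩
    · exact (Finset.card_image₂_le _ _ _).trans (by rw [pow_succ]; gcongr)
    · obtain ⟨y, hy, hxy⟩ := hnet x hx
      have hmem : (r / 2 ^ k)⁻¹ • (x - y) ∈ closedBall (0 : E) 1 := by
        rw [mem_closedBall_zero_iff, norm_smul, norm_inv, Real.norm_of_nonneg hρ.le,
          ← dist_eq_norm]
        exact (inv_mul_le_one₀ hρ).2 hxy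
      obtain ⟨z, hz, hball⟩ := Set.mem_iUnion₂.1 (hcover hmem)
      refine ⟨_, Finset.mem_image₂_of_mem hy hz, ?_⟩
      have hsplit : x - (y + (r / 2 ^ k) • z)
          = (r / 2 ^ k) • ((r / 2 ^ k)⁻¹ • (x - y) - z) := by
        rw [smul_sub, smul_inv_smul₀ hρ.ne', sub_sub]
      rw [dist_eq_norm, hsplit, norm_smul, Real.norm_of_nonneg hρ.le, ← dist_eq_norm]
      calc r / 2 ^ k * dist ((r / 2 ^ k)⁻¹ • (x - y)) z ≤ r / 2 ^ k * (1 / 2) := by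
            gcongr
            exact (mem_ball.1 hball).le
        _ = r / 2 ^ (k + 1) := by rw [pow_succ]; field_simp

lemma exists_forall_exists_finset_card_le_pow :
    ∃ a : ℕ, ∀ {r : ℝ}, 0 < r → ∀ m : ℕ, m ≠ 0 → ∃ t : Finset E, t.card ≤ (2 * m) ^ a ∧
      ∀ x ∈ closedBall (0 : E) r, ∃ y ∈ t, dist x y ≤ r / m := by
  obtain ⟨N, hN⟩ := exists_forall_exists_finset_card_le_pow_two_pow (E := E)
  refine ⟨N, fun {r} hr m hm => ?_⟩
  obtain ⟨t, ht, hnet⟩ := hN hr (Nat.clog 2 m)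
  have hlog : 2 ^ Nat.clog 2 m ≤ 2 * m := by
    obtain rfl | hm₁ : m = 1 ∨ 1 < m := by lia
    · norm_num
    · have := Nat.pow_pred_clog_lt_self one_lt_two hm₁
      rw [← Nat.succ_pred_eq_of_pos (Nat.clog_pos one_lt_two hm₁), pow_succ]
      lia
  refine ⟨t, ?_, fun x hx => ?_⟩
  · calc t.card ≤ N ^ Nat.clog 2 m := ht
      _ ≤ (2 ^ N) ^ Nat.clog 2 m := Nat.pow_le_pow_left N.lt_two_pow_self.le _
      _ = (2 ^ Nat.clog 2 m) ^ N := by rw [← pow_mul, ← pow_mul, mul_comm]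
      _ ≤ (2 * m) ^ N := Nat.pow_le_pow_left hlog N
  · obtain ⟨y, hy, hxy⟩ := hnet x hx
    have hm' : (0 : ℝ) < m := by positivity
    refine ⟨y, hy, hxy.trans (div_le_div_of_nonneg_left hr.le hm' ?_)⟩
    exact_mod_cast Nat.le_pow_clog one_lt_two m

variable {Ω : Type*} {mΩ : MeasurableSpace Ω} {μ : Measure Ω}

lemma summable_measureReal_biUnion_finset {ι : Type*} {t : ℕ → Finset ι} {s : ℕ → ι → Set Ω}
    {k a : ℕ} (hcard : ∀ n, n ≠ 0 → (t n).card ≤ (2 * n ^ k) ^ a)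
    (htail : ∀ᶠ n in atTop, ∀ i, μ.real (s n i) ≤ 2 * ((n : ℝ) ^ (k * a + 2))⁻¹) :
    Summable fun n => μ.real (⋃ i ∈ t n, s n i) := by
  refine .of_norm_bounded_eventually_nat (g := fun n : ℕ => 2 ^ (a + 1) * ((n : ℝ) ^ 2)⁻¹)
    ((Real.summable_nat_pow_inv.2 one_lt_two).mul_left _) ?_
  filter_upwards [htail, eventually_ne_atTop 0] with n hn hn₀
  have hcard' : ((t n).card : ℝ) ≤ (2 * (n : ℝ) ^ k) ^ a := by exact_mod_cast hcard n hn₀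
  rw [Real.norm_of_nonneg measureReal_nonneg]
  calc μ.real (⋃ i ∈ t n, s n i)
      ≤ ∑ i ∈ t n, μ.real (s n i) := measureReal_biUnion_finset_le _ _
    _ ≤ (t n).card * (2 * ((n : ℝ) ^ (k * a + 2))⁻¹) := by
        rw [← nsmul_eq_mul]
        exact Finset.sum_le_card_nsmul _ _ _ fun i _ => hn i
    _ ≤ (2 * (n : ℝ) ^ k) ^ a * (2 * ((n : ℝ) ^ (k * a + 2))⁻¹) := by gcongr
    _ = 2 ^ (a + 1) * ((n : ℝ) ^ 2)⁻¹ := by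
        rw [mul_pow, ← pow_mul, pow_add _ _ 2, mul_inv]
        field_simp
        ring

variable [IsFiniteMeasure μ]

lemma ae_eventually_notMem_of_summable_measureReal {s : ℕ → Set Ω}
    (hs : Summable fun n => μ.real (s n)) : ∀ᵐ ω ∂μ, ∀ᶠ n in atTop, ω ∉ s n := by
  refine ae_eventually_notMem ?_
  simp only [← ofReal_measureReal (measure_ne_top μ _)]
  exact hs.tsum_ofReal_ne_top

lemma ae_eventually_forall_closedBall_abs_le {Y : E → ℕ → Ω → ℝ} {τ : ℕ → ℝ} {k : ℕ}
    (htail : ∀ p : ℕ, ∀ δ > 0, ∀ᶠ n in atTop, ∀ x,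
      μ.real {ω | δ * τ n ≤ |Y x n ω|} ≤ 2 * ((n : ℝ) ^ p)⁻¹)
    (hτ : ∀ n, 0 < τ n)
    (hlip : ∀ᵐ ω ∂μ, ∀ᶠ n in atTop, ∀ x y, |Y x n ω - Y y n ω| ≤ n ^ k * τ n * dist x y)
    {r δ : ℝ} (hr : 0 < r) (hδ : 0 < δ) :
    ∀ᵐ ω ∂μ, ∀ᶠ n in atTop, ∀ x ∈ closedBall (0 : E) r, |Y x n ω| ≤ δ * τ n := by
  obtain ⟨a, ha⟩ := exists_forall_exists_finset_card_le_pow (E := E)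
  have hnet : ∀ n : ℕ, ∃ t : Finset E, (n ≠ 0 → t.card ≤ (2 * n ^ (k + 1)) ^ a ∧
      ∀ x ∈ closedBall (0 : E) r, ∃ y ∈ t, dist x y ≤ r / (n : ℝ) ^ (k + 1)) := fun n => by
    by_cases hn : n = 0
    · exact ⟨∅, fun h => absurd hn h⟩
    · obtain ⟨t, ht⟩ := ha hr (n ^ (k + 1)) (pow_ne_zero _ hn)
      exact ⟨t, fun _ => by exact_mod_cast ht⟩
  choose t ht using hnet
  have hsum : Summable fun n => μ.real (⋃ y ∈ t n, {ω | δ / 2 * τ n ≤ |Y y n ω|}) :=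
    summable_measureReal_biUnion_finset (fun n hn => (ht n hn).1) (htail _ _ (half_pos hδ))
  have hsmall : ∀ᶠ n : ℕ in atTop, r / n ≤ δ / 2 :=
    (tendsto_const_div_atTop_nhds_zero_nat r).eventually_le_const (half_pos hδ)
  filter_upwards [ae_eventually_notMem_of_summable_measureReal hsum, hlip] with ω hω hlipω
  filter_upwards [hω, hlipω, hsmall, eventually_ne_atTop 0] with n hn hlipn hsmalln hn₀ x hx
  obtain ⟨y, hy, hxy⟩ := (ht n hn₀).2 x hx
  have hYy : |Y y n ω| ≤ δ / 2 * τ n := le_of_not_ge fun h => hn (Set.mem_biUnion hy h)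
  have hYxy : |Y x n ω - Y y n ω| ≤ δ / 2 * τ n := by
    have := (hτ n).le
    calc |Y x n ω - Y y n ω| ≤ n ^ k * τ n * dist x y := hlipn x y
      _ ≤ n ^ k * τ n * (r / (n : ℝ) ^ (k + 1)) := by gcongr
      _ = r / n * τ n := by
          rw [pow_succ]
          field_simp
      _ ≤ δ / 2 * τ n := by gcongr
  linarith [abs_sub_abs_le_abs_sub (Y x n ω) (Y y n ω)]

end UniformBorelCantelli

section Scheffe

/-- Scheffé's lemma with pointwise lower bounds only: the mass that the lower bounds leave out
vanishes by dominated convergence. -/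
lemma tendsto_integral_abs_sub_of_eventually_le {α : Type*} [MeasurableSpace α] {ν : Measure α}
    {f : α → ℝ} {q : ℕ → α → ℝ} (hf : Integrable f ν) (hf₀ : ∀ x, 0 ≤ f x)
    (hq : ∀ n, Integrable (q n) ν) (hq₀ : ∀ n x, 0 ≤ q n x)
    (hint : ∀ n, ∫ x, q n x ∂ν = ∫ x, f x ∂ν) (hle : ∀ x, ∀ v < f x, ∀ᶠ n in atTop, v ≤ q n x) :
    Tendsto (fun n => ∫ x, |q n x - f x| ∂ν) atTop (𝓝 0) := by
  have hpos : ∀ n, Integrable (fun x => (f x - q n x)⁺) ν := fun n => (hf.sub (hq n)).pos_part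
  have heq : ∀ n, ∫ x, |q n x - f x| ∂ν = 2 * ∫ x, (f x - q n x)⁺ ∂ν := fun n => by
    have hpt : ∀ x, |q n x - f x| = 2 * (f x - q n x)⁺ + (q n x - f x) := fun x => by
      rcases le_total (f x) (q n x) with h | h
      · rw [abs_of_nonneg (by linarith), posPart_of_nonpos (by linarith)]; ring
      · rw [abs_of_nonpos (by linarith), posPart_of_nonneg (by linarith)]; ring
    simp only [hpt]
    have hsub : Integrable (fun x => q n x - f x) ν := (hq n).sub hf
    rw [integral_add ((hpos n).const_mul 2) hsub, integral_sub (hq n) hf, hint, sub_self, add_zero,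
      integral_const_mul]
  have hlim : Tendsto (fun n => ∫ x, (f x - q n x)⁺ ∂ν) atTop (𝓝 (∫ _, (0 : ℝ) ∂ν)) := by
    refine tendsto_integral_of_dominated_convergence f (fun n => (hpos n).aestronglyMeasurable)
      hf (fun n => .of_forall fun x => ?_) (.of_forall fun x => ?_)
    · rw [Real.norm_of_nonneg (posPart_nonneg _)]
      exact max_le (by linarith [hq₀ n x]) (hf₀ x)
    · refine tendsto_order.2 ⟨fun a ha => .of_forall fun n => ha.trans_le (posPart_nonneg _),
        fun a ha => ?_⟩
      filter_upwards [hle x (f x - a / 2) (by linarith)] with n hn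
      exact max_lt (by linarith) ha
  simpa [heq] using hlim.const_mul 2

end Scheffe

local notation "ℝ^" d:max => EuclideanSpace ℝ (Fin d)

section Kernel

variable {d : ℕ}

/-- Smoothing kernels as in Assumption A2: `K` is a density bounded by `CK`, Lipschitz with constant
`LK`, and positive at the origin. -/
structure SmoothingKernel (K : ℝ^d → ℝ) (CK : ℝ) (LK : ℝ≥0) : Prop where
  nonneg : ∀ x, 0 ≤ K x
  integral_eq_one : ∫ x, K x = 1
  le : ∀ x, K x ≤ CK
  lipschitz : LipschitzWith LK K
  zero_pos : 0 < K 0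

lemma exists_ball_subset_closedBall_inter {E : Type*} [NormedAddCommGroup E] [NormedSpace ℝ E]
    {x₀ x : E} {r s : ℝ} (hs : 0 < s) (hsr : s ≤ r) (hx : x ∈ closedBall x₀ r) :
    ∃ z, ball z s ⊆ closedBall x₀ r ∩ closedBall x (2 * s) := by
  have hr : 0 < r := hs.trans_le hsr
  rw [mem_closedBall, dist_eq_norm] at hx
  have hzx : ‖x + (s / r) • (x₀ - x) - x‖ ≤ s := by
    calc ‖x + (s / r) • (x₀ - x) - x‖ = s / r * ‖x - x₀‖ := by
          rw [add_sub_cancel_left, norm_smul, norm_sub_rev, Real.norm_of_nonneg (by positivity)]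
      _ ≤ s / r * r := by gcongr
      _ = s := div_mul_cancel₀ s hr.ne'
  have hzx₀ : ‖x + (s / r) • (x₀ - x) - x₀‖ ≤ r - s := by
    have hle : s / r ≤ 1 := (div_le_one hr).2 hsr
    calc ‖x + (s / r) • (x₀ - x) - x₀‖ = (1 - s / r) * ‖x - x₀‖ := by
          rw [← Real.norm_of_nonneg (sub_nonneg.2 hle), ← norm_smul]
          congr 1
          module
      _ ≤ (1 - s / r) * r := by gcongr
      _ = r - s := by field_simp
  refine ⟨x + (s / r) • (x₀ - x), fun y hy => ⟨?_, ?_⟩⟩ <;>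
    rw [mem_ball, dist_eq_norm] at hy <;> rw [mem_closedBall, dist_eq_norm]
  · linarith [norm_sub_le_norm_sub_add_norm_sub y (x + (s / r) • (x₀ - x)) x₀]
  · linarith [norm_sub_le_norm_sub_add_norm_sub y (x + (s / r) • (x₀ - x)) x]

lemma integral_kb (h : ℝ^d → ℝ) {b : ℝ} (hb : 0 < b) : ∫ x, kb h b x = ∫ x, h x := by
  simp only [kb]
  rw [integral_const_mul, Measure.integral_comp_inv_smul_of_nonneg _ _ hb.le,
    finrank_euclideanSpace_fin, smul_eq_mul, inv_mul_cancel_left₀ (by positivity)]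

lemma integral_kb_sub (h : ℝ^d → ℝ) {b : ℝ} (hb : 0 < b) (x : ℝ^d) :
    ∫ y, kb h b (x - y) = ∫ y, h y :=
  (integral_sub_left_eq_self (kb h b) volume x).trans (integral_kb h hb)

lemma integral_kb_sub_left (h : ℝ^d → ℝ) {b : ℝ} (hb : 0 < b) (y : ℝ^d) :
    ∫ x, kb h b (x - y) = ∫ x, h x :=
  (integral_sub_right_eq_self (kb h b) y).trans (integral_kb h hb)

lemma setIntegral_closedBall_kb_sub (h : ℝ^d → ℝ) {b : ℝ} (hb : 0 < b) (x : ℝ^d) (r : ℝ) :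
    ∫ y in closedBall x r, kb h b (x - y) = ∫ y in closedBall 0 (r / b), h y := by
  rw [← integral_indicator measurableSet_closedBall, ← integral_indicator measurableSet_closedBall,
    ← integral_kb_sub (Set.indicator _ h) hb x]
  refine integral_congr_ae (ae_of_all _ fun y => ?_)
  have hmem : b⁻¹ • (x - y) ∈ closedBall (0 : ℝ^d) (r / b) ↔ y ∈ closedBall x r := by
    rw [mem_closedBall, dist_zero_right, mem_closedBall, dist_eq_norm, norm_smul,
      Real.norm_of_nonneg (by positivity), norm_sub_rev, inv_mul_eq_div,
      div_le_div_iff_of_pos_right hb]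
  classical
  simp only [kb, Set.indicator_apply, hmem, mul_ite, mul_zero]

namespace SmoothingKernel

variable {K : ℝ^d → ℝ} {CK : ℝ} {LK : ℝ≥0} {b : ℝ}

lemma bound_pos (hK : SmoothingKernel K CK LK) : 0 < CK := hK.zero_pos.trans_le (hK.le 0)

lemma integrable (hK : SmoothingKernel K CK LK) : Integrable K :=
  integrable_of_integral_eq_one hK.integral_eq_one

lemma kb_nonneg (hK : SmoothingKernel K CK LK) (hb : 0 < b) (x : ℝ^d) : 0 ≤ kb K b x :=
  mul_nonneg (by positivity) (hK.nonneg _)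

lemma kb_le (hK : SmoothingKernel K CK LK) (hb : 0 < b) (x : ℝ^d) :
    kb K b x ≤ CK * (b ^ d)⁻¹ := by
  rw [kb, mul_comm CK]
  gcongr
  exact hK.le _

lemma continuous_kb (hK : SmoothingKernel K CK LK) (b : ℝ) : Continuous (kb K b) :=
  (hK.lipschitz.continuous.comp (continuous_const_smul _)).const_mul _

lemma abs_kb_sub_kb_le (hK : SmoothingKernel K CK LK) (hb : 0 < b) (x y : ℝ^d) :
    |kb K b x - kb K b y| ≤ LK * (b ^ d)⁻¹ * b⁻¹ * ‖x - y‖ := by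
  have hlip := hK.lipschitz.dist_le_mul (b⁻¹ • x) (b⁻¹ • y)
  rw [Real.dist_eq, dist_eq_norm, ← smul_sub, norm_smul,
    Real.norm_of_nonneg (by positivity)] at hlip
  calc |kb K b x - kb K b y| = (b ^ d)⁻¹ * |K (b⁻¹ • x) - K (b⁻¹ • y)| := by
        rw [kb, kb, ← mul_sub, abs_mul, abs_of_pos (by positivity)]
    _ ≤ (b ^ d)⁻¹ * (LK * (b⁻¹ * ‖x - y‖)) := by gcongr
    _ = LK * (b ^ d)⁻¹ * b⁻¹ * ‖x - y‖ := by ring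

lemma integrable_kb_sub (hK : SmoothingKernel K CK LK) (hb : 0 < b) (x : ℝ^d) :
    Integrable fun y => kb K b (x - y) :=
  ((hK.integrable.comp_smul (inv_ne_zero hb.ne')).const_mul _).comp_sub_left x

lemma integrable_kb_sub_left (hK : SmoothingKernel K CK LK) (hb : 0 < b) (y : ℝ^d) :
    Integrable fun x => kb K b (x - y) :=
  ((hK.integrable.comp_smul (inv_ne_zero hb.ne')).const_mul _).comp_sub_right y

lemma integrable_kb_sub_mul (hK : SmoothingKernel K CK LK) (hb : 0 < b) (x : ℝ^d) {φ : ℝ^d → ℝ}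
    (hφ : Integrable φ) : Integrable fun y => kb K b (x - y) * φ y := by
  refine hφ.bdd_mul (c := CK * (b ^ d)⁻¹) ?_ (ae_of_all _ fun y => ?_)
  · exact ((hK.continuous_kb b).comp (continuous_const.sub continuous_id)).aestronglyMeasurable
  · rw [Real.norm_of_nonneg (hK.kb_nonneg hb _)]
    exact hK.kb_le hb _

lemma mul_le_integral_kb_sub_mul (hK : SmoothingKernel K CK LK) (hb : 0 < b) {x : ℝ^d} {φ : ℝ^d → ℝ}
    (hφ : Integrable φ) (hφ₀ : ∀ y, 0 ≤ φ y) {s : Set (ℝ^d)} (hs : MeasurableSet s) {κ v : ℝ}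
    (hκ : κ ≤ ∫ y in s, kb K b (x - y)) (hv : 0 ≤ v) (hvφ : ∀ y ∈ s, v ≤ φ y) :
    κ * v ≤ ∫ y, kb K b (x - y) * φ y := by
  have hint := hK.integrable_kb_sub_mul hb x hφ
  calc κ * v ≤ (∫ y in s, kb K b (x - y)) * v := by gcongr
    _ = ∫ y in s, kb K b (x - y) * v := (integral_mul_const v _).symm
    _ ≤ ∫ y in s, kb K b (x - y) * φ y :=
        setIntegral_mono_on ((hK.integrable_kb_sub hb x).mul_const v).integrableOn
          hint.integrableOn hs
          fun y hy => mul_le_mul_of_nonneg_left (hvφ y hy) (hK.kb_nonneg hb _)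
    _ ≤ ∫ y, kb K b (x - y) * φ y :=
        setIntegral_le_integral hint
          (ae_of_all _ fun y => mul_nonneg (hK.kb_nonneg hb _) (hφ₀ y))

lemma abs_integral_kb_sub_mul_sub_le (hK : SmoothingKernel K CK LK) (hb : 0 < b) (x x' : ℝ^d)
    {φ : ℝ^d → ℝ} (hφ : Integrable φ) (hφ₀ : ∀ y, 0 ≤ φ y) (hφ₁ : ∫ y, φ y ≤ 1) :
    |(∫ y, kb K b (x - y) * φ y) - ∫ y, kb K b (x' - y) * φ y|
      ≤ LK * (b ^ d)⁻¹ * b⁻¹ * ‖x - x'‖ := by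
  have hint := hK.integrable_kb_sub_mul hb x hφ
  have hint' := hK.integrable_kb_sub_mul hb x' hφ
  calc |(∫ y, kb K b (x - y) * φ y) - ∫ y, kb K b (x' - y) * φ y|
      = ‖∫ y, kb K b (x - y) * φ y - kb K b (x' - y) * φ y‖ := by
        rw [integral_sub hint hint', Real.norm_eq_abs]
    _ ≤ ∫ y, LK * (b ^ d)⁻¹ * b⁻¹ * ‖x - x'‖ * φ y := by
        refine norm_integral_le_of_norm_le (hφ.const_mul _) (ae_of_all _ fun y => ?_)
        rw [← sub_mul, norm_mul, Real.norm_of_nonneg (hφ₀ y), Real.norm_eq_abs]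
        gcongr
        · exact hφ₀ y
        · simpa only [sub_sub_sub_cancel_right] using hK.abs_kb_sub_kb_le hb (x - y) (x' - y)
    _ = LK * (b ^ d)⁻¹ * b⁻¹ * ‖x - x'‖ * ∫ y, φ y := integral_const_mul _ _
    _ ≤ LK * (b ^ d)⁻¹ * b⁻¹ * ‖x - x'‖ := mul_le_of_le_one_right (by positivity) hφ₁

lemma exists_le_setIntegral_closedBall (hK : SmoothingKernel K CK LK) :
    ∃ κ > 0, ∃ s, ∀ b > 0, ∀ (x₀ : ℝ^d) (r : ℝ), s * b ≤ r → ∀ x ∈ closedBall x₀ r,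
      κ ≤ ∫ y in closedBall x₀ r, kb K b (x - y) := by
  obtain ⟨δ, hδ, hKδ⟩ : ∃ δ > 0, ∀ z ∈ closedBall (0 : ℝ^d) δ, K 0 / 2 ≤ K z :=
    nhds_basis_closedBall.eventually_iff.1 ((hK.lipschitz.continuous.tendsto 0).eventually
      (le_mem_nhds (half_lt_self hK.zero_pos)))
  set v := volume.real (ball (0 : ℝ^d) (δ / 2)) with hv
  have hv₀ : 0 < v := ENNReal.toReal_pos (measure_ball_pos _ _ (by positivity)).ne'
    measure_ball_lt_top.ne
  refine ⟨K 0 / 2 * v, mul_pos (half_pos hK.zero_pos) hv₀, δ / 2, ?_⟩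
  intro b hb x₀ r hr x hx
  obtain ⟨z, hz⟩ := exists_ball_subset_closedBall_inter (by positivity) hr hx
  have hint : Integrable fun y => kb K b (x - y) := hK.integrable_kb_sub hb x
  calc K 0 / 2 * v = ∫ _ in ball z (δ / 2 * b), (b ^ d)⁻¹ * (K 0 / 2) := by
        rw [setIntegral_const, smul_eq_mul, mul_comm _ b, Measure.real,
          Measure.addHaar_ball_mul_of_pos _ _ hb, finrank_euclideanSpace_fin, ENNReal.toReal_mul,
          ENNReal.toReal_ofReal (by positivity), ← Measure.real, ← hv]
        field_simp
    _ ≤ ∫ y in ball z (δ / 2 * b), kb K b (x - y) := by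
        refine setIntegral_mono_on (integrableOn_const measure_ball_lt_top.ne) hint.integrableOn
          measurableSet_ball fun y hy => ?_
        have hyx := (hz hy).2
        rw [mem_closedBall, dist_comm, dist_eq_norm] at hyx
        rw [kb]
        gcongr
        refine hKδ _ ?_
        rw [mem_closedBall, dist_zero_right, norm_smul, Real.norm_of_nonneg (by positivity),
          inv_mul_le_iff₀ hb]
        linarith
    _ ≤ ∫ y in closedBall x₀ r, kb K b (x - y) :=
        setIntegral_mono_set hint.integrableOn (ae_of_all _ fun y => hK.kb_nonneg hb _)
          (hz.trans Set.inter_subset_left).eventuallyLE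

lemma eventually_le_setIntegral_closedBall (hK : SmoothingKernel K CK LK) {r ε : ℝ} (hr : 0 < r)
    (hε : 0 < ε) :
    ∀ᶠ b in 𝓝[>] 0, ∀ x : ℝ^d, 1 - ε ≤ ∫ y in closedBall x r, kb K b (x - y) := by
  have hdiv : Tendsto (fun b : ℝ => r / b) (𝓝[>] 0) atTop := by
    simpa only [div_eq_mul_inv] using tendsto_inv_nhdsGT_zero.const_mul_atTop hr
  have hlim := (aecover_closedBall (μ := volume) (x := (0 : ℝ^d))
    hdiv).integral_tendsto_of_countably_generated hK.integrable
  rw [hK.integral_eq_one] at hlim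
  filter_upwards [hlim.eventually (le_mem_nhds (sub_lt_self 1 hε)), self_mem_nhdsWithin]
    with b hb hb₀ x
  rwa [setIntegral_closedBall_kb_sub K hb₀]

end SmoothingKernel

end Kernel

section TemperedDensity

/-- The density `(min w a) ^ η * q` of a truncated and tempered importance weight `w = f / q`
with respect to Lebesgue measure, at a point where `f = u` and `q = v`. -/
noncomputable def truncTemper (η a u v : ℝ) : ℝ := min (u / v) a ^ η * v

variable {η a u v : ℝ}

lemma truncTemper_nonneg (ha : 0 ≤ a) (hu : 0 ≤ u) (hv : 0 ≤ v) : 0 ≤ truncTemper η a u v :=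
  mul_nonneg (Real.rpow_nonneg (le_min (div_nonneg hu hv) ha) _) hv

lemma div_rpow_mul_self (hu : 0 ≤ u) (hv : 0 < v) : (u / v) ^ η * v = u ^ η * v ^ (1 - η) := by
  rw [Real.div_rpow hu hv.le, Real.rpow_sub hv, Real.rpow_one]
  ring

lemma truncTemper_le (hη : 0 ≤ η) (hη₁ : η ≤ 1) (ha : 0 ≤ a) (hu : 0 ≤ u) (hv : 0 ≤ v) :
    truncTemper η a u v ≤ η * u + (1 - η) * v := by
  rcases hv.eq_or_lt with rfl | hv'
  · simpa [truncTemper] using mul_nonneg hη hu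
  · calc truncTemper η a u v ≤ (u / v) ^ η * v := by
          rw [truncTemper]
          gcongr
          exact min_le_left _ _
      _ = u ^ η * v ^ (1 - η) := div_rpow_mul_self hu hv'
      _ ≤ η * u + (1 - η) * v :=
          Real.geom_mean_le_arith_mean2_weighted hη (by linarith) hu hv (by ring)

lemma truncTemper_eq (hu : 0 ≤ u) (hv : 0 < v) (h : u ≤ a * v) :
    truncTemper η a u v = u ^ η * v ^ (1 - η) := by
  rw [truncTemper, min_eq_left ((div_le_iff₀ hv).2 h), div_rpow_mul_self hu hv]

lemma rpow_mul_rpow_le_truncTemper {s t : ℝ} (hη : 0 ≤ η) (hη₁ : η ≤ 1) (hs : 0 ≤ s) (ht : 0 ≤ t)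
    (hsu : s ≤ u) (htv : t ≤ v) (hv : 0 < v) (h : u ≤ a * v) :
    s ^ η * t ^ (1 - η) ≤ truncTemper η a u v := by
  rw [truncTemper_eq (hs.trans hsu) hv h]
  have := hs.trans hsu
  gcongr

variable {α : Type*} [MeasurableSpace α] {μ : Measure α} {f q : α → ℝ}

lemma integrable_truncTemper (hη : 0 ≤ η) (hη₁ : η ≤ 1) (ha : 0 ≤ a) (hf : ∀ x, 0 ≤ f x)
    (hq : ∀ x, 0 ≤ q x) (hfi : Integrable f μ) (hqi : Integrable q μ) :
    Integrable (fun x => truncTemper η a (f x) (q x)) μ := by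
  refine ((hfi.const_mul η).add (hqi.const_mul (1 - η))).mono' ?_ (ae_of_all _ fun x => ?_)
  · exact (((hfi.aemeasurable.div hqi.aemeasurable).min aemeasurable_const).pow_const
      η |>.mul hqi.aemeasurable).aestronglyMeasurable
  · rw [Real.norm_of_nonneg (truncTemper_nonneg ha (hf x) (hq x))]
    exact truncTemper_le hη hη₁ ha (hf x) (hq x)

lemma integral_truncTemper_le (hη : 0 ≤ η) (hη₁ : η ≤ 1) (ha : 0 ≤ a) (hf : ∀ x, 0 ≤ f x)
    (hq : ∀ x, 0 ≤ q x) (hfi : Integrable f μ) (hqi : Integrable q μ) :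
    ∫ x, truncTemper η a (f x) (q x) ∂μ ≤ η * (∫ x, f x ∂μ) + (1 - η) * ∫ x, q x ∂μ := by
  rw [← integral_const_mul, ← integral_const_mul,
    ← integral_add (hfi.const_mul η) (hqi.const_mul (1 - η))]
  exact integral_mono (integrable_truncTemper hη hη₁ ha hf hq hfi hqi)
    ((hfi.const_mul η).add (hqi.const_mul (1 - η)))
    fun x => truncTemper_le hη hη₁ ha (hf x) (hq x)

end TemperedDensity

section Algorithm

/-- The deterministic data of the algorithm: temperature `η`, step sizes `γ`, bandwidths `b`,
exploration rates `lam`, target `f`, exploration density `q₀` and kernel `K`, subject to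
Assumptions A1 to A3. Conditions which A3 imposes only for large times hold here at all times. -/
structure MidasParams (d : ℕ) where
  (η : ℝ) (γ b lam : ℕ → ℝ) (f q₀ K : ℝ^d → ℝ) (c Cf CK : ℝ) (LK : ℝ≥0)
  η_pos : 0 < η
  η_lt_one : η < 1
  stepSizes : StepSizes γ
  b_pos : ∀ n, 0 < b n
  b_le_one : ∀ n, b n ≤ 1
  b_antitone : Antitone b
  b_tendsto : Tendsto b atTop (𝓝 0)
  lam_pos : ∀ n, 0 < lam n
  lam_le_half : ∀ n, lam n ≤ 1 / 2
  lam_antitone : Antitone lam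
  lam_tendsto : Tendsto lam atTop (𝓝 0)
  rate : Tendsto (fun n : ℕ => n * γ n ^ 2 * Real.log n / (lam n * b n ^ d) ^ max 1 (2 * (1 - η)))
    atTop (𝓝 0)
  f_nonneg : ∀ x, 0 ≤ f x
  f_le : ∀ x, f x ≤ Cf
  f_continuous : Continuous f
  integral_f : ∫ x, f x = 1
  q₀_continuous : Continuous q₀
  integral_q₀ : ∫ x, q₀ x = 1
  c_pos : 0 < c
  mul_f_le : ∀ x, c * f x ≤ q₀ x
  kernel : SmoothingKernel K CK LK

namespace MidasParams

variable {d : ℕ} (P : MidasParams d)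

/-- The level at which weights are truncated in the analysis; it dominates `f / q` whenever
`lam / 2 * q₀ ≤ q`. -/
noncomputable def cap (n : ℕ) : ℝ := 2 / (P.c * P.lam n)

/-- The fluctuation of the average of `w ^ η * h (X)`, with truncated weights, around its
compensator. The draw `X k` has density `q (k - 1)`. -/
noncomputable def noise (X : ℕ → ℝ^d) (w : ℕ → ℝ) (q h : ℕ → ℝ^d → ℝ) : ℕ → ℝ :=
  stepAvg P.γ fun k => min (w k) (P.cap k) ^ P.η * h k (X k)
    - ∫ y, h k y * truncTemper P.η (P.cap k) (P.f y) (q (k - 1) y)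

/-- The test functions for which `noise` is the fluctuation of the kernel estimate at `x`. -/
noncomputable def kernelAt (x : ℝ^d) (k : ℕ) (y : ℝ^d) : ℝ := kb P.K (P.b k) (x - y)

lemma integrable_f : Integrable P.f := integrable_of_integral_eq_one P.integral_f

lemma integrable_q₀ : Integrable P.q₀ := integrable_of_integral_eq_one P.integral_q₀

lemma q₀_nonneg (x : ℝ^d) : 0 ≤ P.q₀ x :=
  (mul_nonneg P.c_pos.le (P.f_nonneg x)).trans (P.mul_f_le x)

lemma cap_pos (n : ℕ) : 0 < P.cap n := div_pos two_pos (mul_pos P.c_pos (P.lam_pos n))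

lemma kernelAt_nonneg (x : ℝ^d) (k : ℕ) (y : ℝ^d) : 0 ≤ P.kernelAt x k y :=
  P.kernel.kb_nonneg (P.b_pos k) _

lemma exists_f_pos : ∃ x, 0 < P.f x := by
  by_contra! hf
  have hzero : P.f = 0 := funext fun x => le_antisymm (hf x) (P.f_nonneg x)
  simpa [hzero] using P.integral_f

lemma f_le_cap_mul {n : ℕ} {x : ℝ^d} {v : ℝ} (hv : P.lam n / 2 * (P.c * P.f x) ≤ v) :
    P.f x ≤ P.cap (n + 1) * v := by
  have hc := P.c_pos
  have hlam := P.lam_pos n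
  calc P.f x = 2 / (P.c * P.lam n) * (P.lam n / 2 * (P.c * P.f x)) := by field_simp
    _ ≤ 2 / (P.c * P.lam n) * v := by gcongr
    _ ≤ P.cap (n + 1) * v := by
        rw [cap]
        have hv₀ : 0 ≤ v := le_trans (by have := P.f_nonneg x; positivity) hv
        have := P.lam_pos (n + 1)
        gcongr
        exact P.lam_antitone n.le_succ

lemma mul_pow_pos (n : ℕ) : 0 < P.lam n * P.b n ^ d := mul_pos (P.lam_pos n) (pow_pos (P.b_pos n) d)

lemma mul_pow_le_lam (n : ℕ) : P.lam n * P.b n ^ d ≤ P.lam n :=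
  mul_le_of_le_one_right (P.lam_pos n).le (pow_le_one₀ (P.b_pos n).le (P.b_le_one n))

lemma mul_pow_le_one (n : ℕ) : P.lam n * P.b n ^ d ≤ 1 := by
  linarith [P.mul_pow_le_lam n, P.lam_le_half n]

lemma mul_pow_rpow_le (n : ℕ) :
    (P.lam n * P.b n ^ d) ^ max 1 (2 * (1 - P.η)) ≤ P.lam n * P.b n ^ d := by
  simpa using Real.rpow_le_rpow_of_exponent_ge (P.mul_pow_pos n) (P.mul_pow_le_one n)
    (le_max_left 1 (2 * (1 - P.η)))

lemma tendsto_log_mul_step_div_mul_pow :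
    Tendsto (fun n : ℕ => Real.log n * P.γ n / (P.lam n * P.b n ^ d)) atTop (𝓝 0) := by
  refine squeeze_zero' (.of_forall fun n => ?_) ?_
    (by simpa using P.rate.const_mul ((P.γ 0)⁻¹ + 1))
  · exact div_nonneg (mul_nonneg (Real.log_natCast_nonneg n) (P.stepSizes.pos n).le)
      (P.mul_pow_pos n).le
  · filter_upwards [eventually_ne_atTop 0] with n hn
    have hγ := P.stepSizes.pos n
    have hlog := Real.log_natCast_nonneg n
    have hC := P.stepSizes.one_le_mul_natCast_mul hn
    rw [← mul_div_assoc]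
    refine div_le_div₀ ?_ ?_ (Real.rpow_pos_of_pos (P.mul_pow_pos n) _)
      (P.mul_pow_rpow_le n)
    · have := inv_pos.2 (P.stepSizes.pos 0)
      positivity
    · linarith [le_mul_of_one_le_right (mul_nonneg hlog hγ.le) hC]

lemma tendsto_step_div_mul_pow :
    Tendsto (fun n => P.γ n / (P.lam n * P.b n ^ d)) atTop (𝓝 0) := by
  refine squeeze_zero' (.of_forall fun n => div_nonneg (P.stepSizes.pos n).le
    (P.mul_pow_pos n).le) ?_ P.tendsto_log_mul_step_div_mul_pow
  filter_upwards [(Real.tendsto_log_atTop.comp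
    tendsto_natCast_atTop_atTop).eventually_ge_atTop 1] with n hlog
  have := P.mul_pow_pos n
  gcongr
  exact le_mul_of_one_le_left (P.stepSizes.pos n).le hlog

lemma eventually_one_le_natCast_mul_mul_pow :
    ∀ᶠ n : ℕ in atTop, 1 ≤ n * (P.lam n * P.b n ^ d) := by
  have hγ₀ : 0 < (P.γ 0)⁻¹ := inv_pos.2 (P.stepSizes.pos 0)
  filter_upwards [eventually_ne_atTop 0, P.tendsto_step_div_mul_pow.eventually_le_const
    (inv_pos.2 (add_pos hγ₀ one_pos))] with n hn hle
  rw [div_le_iff₀ (P.mul_pow_pos n), le_inv_mul_iff₀ (by positivity)] at hle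
  calc 1 ≤ n * (((P.γ 0)⁻¹ + 1) * P.γ n) := by
        linarith [P.stepSizes.one_le_mul_natCast_mul hn]
    _ ≤ n * (P.lam n * P.b n ^ d) := by gcongr

lemma tendsto_step_div_lam : Tendsto (fun n => P.γ n / P.lam n) atTop (𝓝 0) :=
  squeeze_zero (fun n => div_nonneg (P.stepSizes.pos n).le (P.lam_pos n).le)
    (fun n => div_le_div_of_nonneg_left (P.stepSizes.pos n).le (P.mul_pow_pos n)
      (P.mul_pow_le_lam n)) P.tendsto_step_div_mul_pow

end MidasParams

/-- A realization of the algorithm: draws `X`, importance weights `w`, unnormalized estimates `g`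
and policies `q`. -/
structure Trajectory {d : ℕ} (P : MidasParams d) (X : ℕ → ℝ^d) (w : ℕ → ℝ) (g q : ℕ → ℝ^d → ℝ) :
    Prop where
  weight_succ : ∀ n, w (n + 1) = P.f (X (n + 1)) / q n (X (n + 1))
  estimate_succ : ∀ n x, g (n + 1) x
    = (1 - P.γ (n + 1)) * g n x + P.γ (n + 1) * (w (n + 1) ^ P.η * P.kernelAt x (n + 1) (X (n + 1)))
  policy_eq : ∀ n x, q n x = (1 - P.lam n) * (g n x / ∫ y, g n y) + P.lam n * P.q₀ x
  policy_nonneg : ∀ n x, 0 ≤ q n x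
  integral_policy : ∀ n, ∫ x, q n x = 1
  estimate_integrable : ∀ n, Integrable (g n)
  estimate_continuous : ∀ n, Continuous (g n)

/-- A trajectory with the properties that hold almost surely and from which convergence follows:
two properties that exclude estimates `g` of the wrong sign, and the decay of the noise. -/
structure TypicalTrajectory {d : ℕ} (P : MidasParams d) (X : ℕ → ℝ^d) (w : ℕ → ℝ)
    (g q : ℕ → ℝ^d → ℝ) : Prop extends Trajectory P X w g q where
  exists_pos_or_nonneg : ∀ n, (∃ x, 0 < P.f x ∧ 0 < g n x / ∫ y, g n y) ∨
    ∀ x, 0 ≤ g n x / ∫ y, g n y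
  frequently_half_le_weight : (∀ n x, P.lam n * P.q₀ x ≤ q n x) → ∃ᶠ n in atTop, 1 / 2 ≤ w (n + 1)
  noise_kernelAt_le : ∀ R : ℕ, ∀ δ > 0, ∀ᶠ n in atTop, ∀ x ∈ closedBall (0 : ℝ^d) R,
    |P.noise X w q (P.kernelAt x) n| ≤ δ * P.lam n ^ (1 - P.η)
  noise_one_tendsto : Tendsto (P.noise X w q 1) atTop (𝓝 0)

namespace Trajectory

variable {d : ℕ} {P : MidasParams d} {X : ℕ → ℝ^d} {w : ℕ → ℝ} {g q : ℕ → ℝ^d → ℝ}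

lemma weight_nonneg (T : Trajectory P X w g q) (n : ℕ) : 0 ≤ w (n + 1) := by
  rw [T.weight_succ]
  exact div_nonneg (P.f_nonneg _) (T.policy_nonneg _ _)

lemma policy_integrable (T : Trajectory P X w g q) (n : ℕ) : Integrable (q n) :=
  integrable_of_integral_eq_one (T.integral_policy n)

lemma integral_estimate_ne_zero (T : Trajectory P X w g q) (n : ℕ) : ∫ y, g n y ≠ 0 := by
  intro h
  have hq : q n = fun x => P.lam n * P.q₀ x := funext fun x => by simp [T.policy_eq, h]
  have := T.integral_policy n
  rw [hq, integral_const_mul, P.integral_q₀] at this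
  linarith [P.lam_le_half n]

lemma integral_estimate_succ (T : Trajectory P X w g q) (n : ℕ) :
    ∫ y, g (n + 1) y = (1 - P.γ (n + 1)) * (∫ y, g n y) + P.γ (n + 1) * w (n + 1) ^ P.η := by
  have hkernel := P.kernel.integrable_kb_sub_left (P.b_pos (n + 1)) (X (n + 1))
  simp only [T.estimate_succ, MidasParams.kernelAt]
  rw [integral_add ((T.estimate_integrable n).const_mul _) ((hkernel.const_mul _).const_mul _),
    integral_const_mul, integral_const_mul, integral_const_mul,
    integral_kb_sub_left _ (P.b_pos _), P.kernel.integral_eq_one, mul_one]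

lemma one_sub_mul_estimate_le (T : Trajectory P X w g q) (x : ℝ^d) (n : ℕ) :
    (1 - P.γ (n + 1)) * g n x ≤ g (n + 1) x := by
  rw [T.estimate_succ]
  exact le_add_of_nonneg_right (mul_nonneg (P.stepSizes.pos _).le
    (mul_nonneg (Real.rpow_nonneg (T.weight_nonneg n) _) (P.kernelAt_nonneg _ _ _)))

lemma one_sub_mul_integral_estimate_le (T : Trajectory P X w g q) (n : ℕ) :
    (1 - P.γ (n + 1)) * ∫ y, g n y ≤ ∫ y, g (n + 1) y := by
  rw [T.integral_estimate_succ]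
  exact le_add_of_nonneg_right (mul_nonneg (P.stepSizes.pos _).le
    (Real.rpow_nonneg (T.weight_nonneg n) _))

lemma neg_two_mul_le_normalized (T : Trajectory P X w g q) (n : ℕ) (x : ℝ^d) :
    -(2 * P.lam n * P.q₀ x) ≤ g n x / ∫ y, g n y := by
  have hq := T.policy_nonneg n x
  rw [T.policy_eq] at hq
  have hlam : 0 ≤ P.lam n * P.q₀ x := mul_nonneg (P.lam_pos n).le (P.q₀_nonneg x)
  by_contra! hlt
  nlinarith [P.lam_le_half n]

/-- Truncation can only decrease the weights, so it is harmless in lower bounds. -/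
lemma sub_noise_succ_ge (T : Trajectory P X w g q) {h : ℕ → ℝ^d → ℝ} {u : ℕ → ℝ} {n : ℕ}
    (hh : ∀ y, 0 ≤ h (n + 1) y) (hu : u (n + 1)
      = (1 - P.γ (n + 1)) * u n + P.γ (n + 1) * (w (n + 1) ^ P.η * h (n + 1) (X (n + 1)))) :
    (1 - P.γ (n + 1)) * (u n - P.noise X w q h n) + P.γ (n + 1)
        * ∫ y, h (n + 1) y * truncTemper P.η (P.cap (n + 1)) (P.f y) (q n y)
      ≤ u (n + 1) - P.noise X w q h (n + 1) := by
  have hmin : min (w (n + 1)) (P.cap (n + 1)) ^ P.η ≤ w (n + 1) ^ P.η :=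
    Real.rpow_le_rpow (le_min (T.weight_nonneg n) (P.cap_pos _).le) (min_le_left _ _) P.η_pos.le
  have hγ := mul_le_mul_of_nonneg_left (mul_le_mul_of_nonneg_right hmin (hh (X (n + 1))))
    (P.stepSizes.pos (n + 1)).le
  have hnoise : P.noise X w q h (n + 1) = (1 - P.γ (n + 1)) * P.noise X w q h n + P.γ (n + 1)
      * (min (w (n + 1)) (P.cap (n + 1)) ^ P.η * h (n + 1) (X (n + 1))
        - ∫ y, h (n + 1) y * truncTemper P.η (P.cap (n + 1)) (P.f y) (q n y)) := rfl
  rw [hnoise, hu]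
  linarith

end Trajectory

end Algorithm

section Signs

variable {d : ℕ} {P : MidasParams d} {X : ℕ → ℝ^d} {w : ℕ → ℝ} {g q : ℕ → ℝ^d → ℝ}

namespace Trajectory

lemma estimate_nonpos_of_integral_neg (T : Trajectory P X w g q) (hG : ∀ n, ∫ y, g n y < 0)
    (n : ℕ) (x : ℝ^d) : g n x ≤ 0 := by
  have hD := P.stepSizes.discount_pos
  set H := fun m => (∫ y, g m y) / discount P.γ m with hH
  have hHmono : Monotone H :=
    P.stepSizes.monotone_div_discount T.one_sub_mul_integral_estimate_le
  have hgmono := P.stepSizes.monotone_div_discount (T.one_sub_mul_estimate_le x)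
  have hbound : ∀ m ≥ n, g n x / discount P.γ n ≤ 2 * P.lam m * P.q₀ x * -H n := fun m hm => by
    have hgm : g m x ≤ 2 * P.lam m * P.q₀ x * -∫ y, g m y := by
      have := (le_div_iff_of_neg (hG m)).1 (T.neg_two_mul_le_normalized m x)
      linarith
    have hq₀ : 0 ≤ 2 * P.lam m * P.q₀ x := by
      have := P.lam_pos m; have := P.q₀_nonneg x; positivity
    calc g n x / discount P.γ n ≤ g m x / discount P.γ m := hgmono hm
      _ ≤ (2 * P.lam m * P.q₀ x * -∫ y, g m y) / discount P.γ m := by gcongr; exact (hD m).le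
      _ = 2 * P.lam m * P.q₀ x * -H m := by rw [hH]; ring
      _ ≤ 2 * P.lam m * P.q₀ x * -H n := by gcongr; exact hHmono hm
  have hlim : Tendsto (fun m => 2 * P.lam m * P.q₀ x * -H n) atTop (𝓝 0) := by
    simpa using ((P.lam_tendsto.const_mul 2).mul_const (P.q₀ x)).mul_const (-H n)
  have hle := ge_of_tendsto hlim ((eventually_ge_atTop n).mono hbound)
  simpa using (div_le_iff₀ (hD n)).1 hle

lemma eventually_weight_lt_of_integral_neg (T : Trajectory P X w g q)
    (hG : ∀ n, ∫ y, g n y < 0) : ∀ᶠ n in atTop, w (n + 1) < 1 / 2 := by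
  have hD := P.stepSizes.discount_pos
  set H := fun n => (∫ y, g n y) / discount P.γ n with hH
  have hHmono : Monotone H :=
    P.stepSizes.monotone_div_discount T.one_sub_mul_integral_estimate_le
  have hHbdd : BddAbove (Set.range H) := by
    refine ⟨0, ?_⟩
    rintro _ ⟨n, rfl⟩
    exact div_nonpos_of_nonpos_of_nonneg (hG n).le (hD n).le
  have hlim := tendsto_atTop_ciSup hHmono hHbdd
  have hdiff : Tendsto (fun n => H (n + 1) - H n) atTop (𝓝 0) := by
    simpa using (hlim.comp (tendsto_add_atTop_nat 1)).sub hlim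
  have hincr : ∀ n, P.γ 0 * w (n + 1) ^ P.η ≤ H (n + 1) - H n := fun n => by
    have hstep : H (n + 1) - H n
        = P.γ (n + 1) * w (n + 1) ^ P.η / discount P.γ (n + 1) := by
      have := (hD n).ne'
      have := (P.stepSizes.one_sub_pos (n + 1)).ne'
      simp only [hH]
      rw [T.integral_estimate_succ, discount_succ]
      field_simp
      ring
    rw [hstep, le_div_iff₀ (hD _), mul_right_comm]
    exact mul_le_mul_of_nonneg_right (P.stepSizes.mul_discount_le _)
      (Real.rpow_nonneg (T.weight_nonneg n) _)
  have hpos : 0 < P.γ 0 * (1 / 2) ^ P.η := mul_pos (P.stepSizes.pos 0) (by positivity)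
  filter_upwards [hdiff.eventually (gt_mem_nhds hpos)] with n hn
  have hlt := lt_of_mul_lt_mul_left ((hincr n).trans_lt hn) (P.stepSizes.pos 0).le
  exact lt_of_not_ge fun hge => hlt.not_ge (Real.rpow_le_rpow (by norm_num) hge P.η_pos.le)

lemma estimate_nonneg_of_le (T : Trajectory P X w g q) {k n : ℕ} (hkn : k ≤ n) {x : ℝ^d}
    (hx : 0 ≤ g k x) : 0 ≤ g n x := by
  have hmono := P.stepSizes.monotone_div_discount (T.one_sub_mul_estimate_le x) hkn
  have hD := P.stepSizes.discount_pos
  simpa using (le_div_iff₀ (hD n)).1 ((div_nonneg hx (hD k).le).trans hmono)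

lemma exists_neg_mul_le_estimate (T : Trajectory P X w g q) {n₀ : ℕ} (hG : 0 < ∫ y, g n₀ y) :
    ∃ C ≥ 0, ∀ n ≥ n₀, ∀ x, -(C * discount P.γ n * P.q₀ x) ≤ g n x := by
  have hD := P.stepSizes.discount_pos
  refine ⟨(∫ y, g n₀ y) / discount P.γ n₀, (div_pos hG (hD n₀)).le, fun n hn x => ?_⟩
  have hmono := P.stepSizes.monotone_div_discount (T.one_sub_mul_estimate_le x) hn
  have hlower : -(P.q₀ x * ∫ y, g n₀ y) ≤ g n₀ x := by
    have hmul := (le_div_iff₀ hG).1 (T.neg_two_mul_le_normalized n₀ x)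
    have := P.lam_le_half n₀
    have := mul_nonneg (P.q₀_nonneg x) hG.le
    nlinarith
  calc -((∫ y, g n₀ y) / discount P.γ n₀ * discount P.γ n * P.q₀ x)
      = -(P.q₀ x * ∫ y, g n₀ y) / discount P.γ n₀ * discount P.γ n := by ring
    _ ≤ g n₀ x / discount P.γ n₀ * discount P.γ n := by
        gcongr
        · exact (hD n).le
        · exact (hD n₀).le
    _ ≤ g n x := (le_div_iff₀ (hD n)).1 hmono

end Trajectory

namespace TypicalTrajectory

/-- If the mass of `g` stayed negative then `q` would dominate `lam * q₀`, so that weights of at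
least `1 / 2` would occur infinitely often and push the mass above zero. -/
lemma eventually_integral_pos (T : TypicalTrajectory P X w g q) :
    ∀ᶠ n in atTop, 0 < ∫ y, g n y := by
  by_contra hnot
  have hneg : ∀ n, ∫ y, g n y < 0 := by
    refine fun n => lt_of_le_of_ne (not_lt.1 fun hpos => hnot ?_) (T.integral_estimate_ne_zero n)
    filter_upwards [eventually_ge_atTop n] with m hm
    have hD := P.stepSizes.discount_pos
    have hmono := P.stepSizes.monotone_div_discount T.one_sub_mul_integral_estimate_le hm
    exact (div_pos_iff_of_pos_right (hD m)).1 ((div_pos hpos (hD n)).trans_le hmono)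
  refine T.frequently_half_le_weight (fun n x => ?_)
    ((T.eventually_weight_lt_of_integral_neg hneg).mono fun n hn => hn.not_ge)
  rw [T.policy_eq]
  exact le_add_of_nonneg_left (mul_nonneg (by linarith [P.lam_le_half n])
    (div_nonneg_of_nonpos (T.estimate_nonpos_of_integral_neg hneg n x) (hneg n).le))

lemma exists_eventually_neg_mul_le_estimate (T : TypicalTrajectory P X w g q) :
    ∃ C ≥ 0, ∀ᶠ n in atTop, ∀ x, -(C * discount P.γ n * P.q₀ x) ≤ g n x := by
  obtain ⟨n₀, hn₀⟩ := T.eventually_integral_pos.exists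
  obtain ⟨C, hC, hg⟩ := T.exists_neg_mul_le_estimate hn₀
  exact ⟨C, hC, (eventually_ge_atTop n₀).mono hg⟩

lemma exists_closedBall_estimate_nonneg (T : TypicalTrajectory P X w g q) :
    ∃ x₀, 0 < P.f x₀ ∧ ∃ r > 0, ∀ᶠ n in atTop, ∀ x ∈ closedBall x₀ r, 0 ≤ g n x := by
  obtain ⟨n, hG⟩ := T.eventually_integral_pos.exists
  rcases T.exists_pos_or_nonneg n with ⟨x₀, hf, hx₀⟩ | hnonneg
  · have hg : 0 < g n x₀ := (div_pos_iff_of_pos_right hG).1 hx₀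
    obtain ⟨r, hr, hball⟩ := nhds_basis_closedBall.eventually_iff.1
      ((T.estimate_continuous n).continuousAt.eventually (lt_mem_nhds hg))
    exact ⟨x₀, hf, r, hr, (eventually_ge_atTop n).mono fun m hm x hx =>
      T.estimate_nonneg_of_le hm (hball hx).le⟩
  · obtain ⟨x₀, hf⟩ := P.exists_f_pos
    refine ⟨x₀, hf, 1, one_pos, (eventually_ge_atTop n).mono fun m hm x _ =>
      T.estimate_nonneg_of_le hm ?_⟩
    simpa using (le_div_iff₀ hG).1 (hnonneg x)

end TypicalTrajectory

end Signs

section Escape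

variable {d : ℕ} {P : MidasParams d} {X : ℕ → ℝ^d} {w : ℕ → ℝ} {g q : ℕ → ℝ^d → ℝ}

namespace MidasParams

lemma tendsto_step_div_lam_rpow (P : MidasParams d) {θ : ℝ} (hθ : θ ≤ 1) :
    Tendsto (fun n => P.γ n / P.lam n ^ θ) atTop (𝓝 0) := by
  refine squeeze_zero (fun n => div_nonneg (P.stepSizes.pos n).le
    (Real.rpow_nonneg (P.lam_pos n).le θ)) (fun n => ?_) P.tendsto_step_div_lam
  refine div_le_div_of_nonneg_left (P.stepSizes.pos n).le (P.lam_pos n) ?_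
  simpa using Real.rpow_le_rpow_of_exponent_ge (P.lam_pos n) (by linarith [P.lam_le_half n]) hθ

lemma eventually_step_succ_mul_le (P : MidasParams d) {a : ℝ} (ha : 0 < a) (c₁ : ℝ) :
    ∀ᶠ n in atTop, P.γ (n + 1) * c₁ ≤ (a * P.lam n ^ (1 - P.η)) ^ P.η := by
  have hη₀ := P.η_pos
  have hη₁ := P.η_lt_one
  have hlim := ((P.tendsto_step_div_lam_rpow (θ := (1 - P.η) * P.η) (by nlinarith)).mul_const
    c₁).comp (tendsto_add_atTop_nat 1)
  rw [zero_mul] at hlim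
  filter_upwards [hlim.eventually (ge_mem_nhds (Real.rpow_pos_of_pos ha P.η))] with n hn
  have hpow : 0 < P.lam (n + 1) ^ ((1 - P.η) * P.η) := Real.rpow_pos_of_pos (P.lam_pos _) _
  rw [Function.comp_apply, div_mul_eq_mul_div, div_le_iff₀ hpow] at hn
  rw [Real.mul_rpow ha.le (Real.rpow_nonneg (P.lam_pos n).le _), ← Real.rpow_mul (P.lam_pos n).le]
  refine hn.trans ?_
  gcongr
  · exact (P.lam_pos _).le
  · exact P.lam_antitone n.le_succ

lemma eventually_mul_b_succ_le (P : MidasParams d) (s : ℝ) {r : ℝ} (hr : 0 < r) :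
    ∀ᶠ n in atTop, s * P.b (n + 1) ≤ r := by
  have hlim : Tendsto (fun n => s * P.b (n + 1)) atTop (𝓝 0) := by
    simpa using (P.b_tendsto.comp (tendsto_add_atTop_nat 1)).const_mul s
  exact hlim.eventually (ge_mem_nhds hr)

end MidasParams

namespace Trajectory

lemma one_sub_mul_div_le_policy (T : Trajectory P X w g q) {n : ℕ} {y : ℝ^d} {v B : ℝ}
    (hG : 0 < ∫ z, g n z) (hGB : ∫ z, g n z ≤ B) (hv : 0 ≤ v) (hvg : v ≤ g n y) :
    (1 - P.lam n) * (v / B) ≤ q n y := by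
  have hlam : 0 ≤ 1 - P.lam n := by linarith [P.lam_le_half n]
  calc (1 - P.lam n) * (v / B) ≤ (1 - P.lam n) * (g n y / ∫ z, g n z) := by gcongr; linarith
    _ ≤ q n y := by
        rw [T.policy_eq]
        exact le_add_of_nonneg_right (mul_nonneg (P.lam_pos n).le (P.q₀_nonneg y))

lemma estimate_sub_noise_succ_ge (T : Trajectory P X w g q) {n : ℕ} {x : ℝ^d} {s : Set (ℝ^d)}
    (hs : MeasurableSet s) {κ ε v : ℝ} (hκ : κ ≤ ∫ y in s, P.kernelAt x (n + 1) y)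
    (hε : 0 < ε) (hv : 0 ≤ v) (hf : ∀ y ∈ s, ε ≤ P.f y)
    (hq : ∀ y ∈ s, P.lam n / 2 * (P.c * P.f y) ≤ q n y) (hvq : ∀ y ∈ s, v ≤ q n y) :
    (1 - P.γ (n + 1)) * (g n x - P.noise X w q (P.kernelAt x) n)
        + P.γ (n + 1) * (κ * (ε ^ P.η * v ^ (1 - P.η)))
      ≤ g (n + 1) x - P.noise X w q (P.kernelAt x) (n + 1) := by
  refine le_trans ?_ (T.sub_noise_succ_ge (u := fun n => g n x) (P.kernelAt_nonneg x (n + 1))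
    (T.estimate_succ n x))
  gcongr
  · exact (P.stepSizes.pos _).le
  refine P.kernel.mul_le_integral_kb_sub_mul (P.b_pos (n + 1))
    (integrable_truncTemper P.η_pos.le P.η_lt_one.le (P.cap_pos _).le P.f_nonneg
      (T.policy_nonneg n) P.integrable_f (T.policy_integrable n))
    (fun y => truncTemper_nonneg (P.cap_pos _).le (P.f_nonneg y) (T.policy_nonneg n y))
    hs hκ (by positivity) fun y hy => ?_
  have hqpos : 0 < q n y := by
    refine lt_of_lt_of_le ?_ (hq y hy)
    have := P.lam_pos n
    have := P.c_pos
    have := hε.trans_le (hf y hy)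
    positivity
  exact rpow_mul_rpow_le_truncTemper P.η_pos.le P.η_lt_one.le hε.le hv (hf y hy) (hvq y hy)
    hqpos (P.f_le_cap_mul (hq y hy))

end Trajectory

namespace TypicalTrajectory

lemma eventually_noise_kernelAt_le (T : TypicalTrajectory P X w g q) (x₀ : ℝ^d) (r : ℝ) {δ : ℝ}
    (hδ : 0 < δ) : ∀ᶠ n in atTop, ∀ x ∈ closedBall x₀ r,
      |P.noise X w q (P.kernelAt x) n| ≤ δ * P.lam n ^ (1 - P.η) := by
  obtain ⟨R, hR⟩ := exists_nat_ge (r + dist x₀ 0)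
  exact (T.noise_kernelAt_le R δ hδ).mono fun n hn x hx =>
    hn x (closedBall_subset_closedBall' hR hx)

/-- While `q` is only known to exceed a multiple of `lam`, the drift keeps `g` above a multiple of
`lam ^ (1 - η)`, which dominates both the noise and the discounted initial value. -/
lemma exists_mul_rpow_le_estimate_sub_noise (T : TypicalTrajectory P X w g q) {x₀ : ℝ^d}
    {r ε : ℝ} (hr : 0 < r) (hε : 0 < ε) (hf : ∀ y ∈ closedBall x₀ r, ε ≤ P.f y)
    (hq : ∀ᶠ n in atTop, ∀ y ∈ closedBall x₀ r, P.lam n / 2 * (P.c * P.f y) ≤ q n y) :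
    ∃ a > 0, ∀ᶠ n in atTop, ∀ x ∈ closedBall x₀ r,
      a * P.lam n ^ (1 - P.η) ≤ g n x - P.noise X w q (P.kernelAt x) n := by
  have hη := P.η_lt_one
  have hc := P.c_pos
  have hD := P.stepSizes.discount_pos
  have hpow := fun n => Real.rpow_pos_of_pos (P.lam_pos n) (1 - P.η)
  obtain ⟨κ, hκ, s, hmass⟩ := P.kernel.exists_le_setIntegral_closedBall
  set a := κ * (ε ^ P.η * (P.c * ε / 2) ^ (1 - P.η)) with ha
  have ha₀ : 0 < a := by positivity
  obtain ⟨n₀, hn₀⟩ := eventually_atTop.1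
    (hq.and ((P.eventually_mul_b_succ_le s hr).and (T.eventually_noise_kernelAt_le x₀ r one_pos)))
  obtain ⟨L, hL⟩ := (isCompact_closedBall x₀ r).bddBelow_image
    (T.estimate_continuous n₀).continuousOn
  set C := (a * P.lam n₀ ^ (1 - P.η) - (L - 1 * P.lam n₀ ^ (1 - P.η))) / discount P.γ n₀ with hC
  have hlim : Tendsto (fun n => C * (discount P.γ n / P.lam n ^ (1 - P.η))) atTop (𝓝 0) := by
    simpa using (P.stepSizes.discount_div_tendsto_zero hpow
      (P.tendsto_step_div_lam_rpow (by linarith [P.η_pos]))).const_mul C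
  refine ⟨a / 2, by positivity, ?_⟩
  filter_upwards [hlim.eventually (ge_mem_nhds (half_pos ha₀)), eventually_ge_atTop n₀]
    with n hn hn₀n x hx
  have hanti : Antitone fun n => a * P.lam n ^ (1 - P.η) := fun i j hij =>
    mul_le_mul_of_nonneg_left (Real.rpow_le_rpow (P.lam_pos j).le (P.lam_antitone hij)
      (by linarith)) ha₀.le
  have hle := P.stepSizes.sub_mul_discount_le (C := C) hanti
    (h := fun n => g n x - P.noise X w q (P.kernelAt x) n) ?_ (fun m hm => ?_) hn₀n
  · rw [← mul_div_assoc, div_le_iff₀ (hpow n)] at hn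
    linarith
  · rw [hC, div_mul_cancel₀ _ (hD n₀).ne']
    linarith [hL (Set.mem_image_of_mem (g n₀) hx), (abs_le.1 ((hn₀ n₀ le_rfl).2.2 x hx)).2]
  · have hstep := T.estimate_sub_noise_succ_ge (n := m) (x := x) measurableSet_closedBall
      (hmass _ (P.b_pos (m + 1)) x₀ r (hn₀ m hm).2.1 x hx) hε
      (v := P.lam m * (P.c * ε / 2)) (by have := P.lam_pos m; positivity) hf (hn₀ m hm).1
      fun y hy => le_trans ?_ ((hn₀ m hm).1 y hy)
    · rwa [Real.mul_rpow (P.lam_pos m).le (by positivity), mul_left_comm _ (P.lam m ^ _),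
        mul_left_comm _ (P.lam m ^ _), ← ha, mul_comm _ a] at hstep
    · have := P.lam_pos m
      nlinarith [mul_le_mul_of_nonneg_left (hf y hy) (mul_pos (P.lam_pos m) hc).le]

/-- A lower bound `κ` for the noiseless part of `g` on a ball where `f` is positive grows at least
like the solution of `κ' = c₁ κ ^ (1 - η) - κ` as long as the mass of `g` is at most `2`. -/
lemma exists_escape (T : TypicalTrajectory P X w g q) {x₀ : ℝ^d} {r ε : ℝ} (hr : 0 < r)
    (hε : 0 < ε) (hf : ∀ y ∈ closedBall x₀ r, ε ≤ P.f y)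
    (hq : ∀ᶠ n in atTop, ∀ y ∈ closedBall x₀ r, P.lam n / 2 * (P.c * P.f y) ≤ q n y) :
    ∃ c₁ > 0, ∃ κ : ℕ → ℝ, ∀ᶠ n in atTop, 0 < κ n ∧ P.γ (n + 1) * c₁ ≤ κ n ^ P.η ∧
      (∀ x ∈ closedBall x₀ r, κ n / 2 ≤ g n x) ∧ (∫ y, g n y ≤ 2 →
        (1 - P.γ (n + 1)) * κ n + P.γ (n + 1) * c₁ * κ n ^ (1 - P.η) ≤ κ (n + 1)) := by
  have hη₀ := P.η_pos
  have hη₁ := P.η_lt_one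
  obtain ⟨κ₀, hκ₀, s, hmass⟩ := P.kernel.exists_le_setIntegral_closedBall
  obtain ⟨a, ha, hphase⟩ := T.exists_mul_rpow_le_estimate_sub_noise hr hε hf hq
  set c₁ := κ₀ * (ε ^ P.η * (1 / 8) ^ (1 - P.η)) with hc₁
  set κ : ℕ → ℝ := fun n =>
    ⨅ x : closedBall x₀ r, (g n x - P.noise X w q (P.kernelAt x) n)
  have : Nonempty (closedBall x₀ r) := ⟨x₀, mem_closedBall_self hr.le⟩
  have hpow := fun n => Real.rpow_pos_of_pos (P.lam_pos n) (1 - P.η)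
  have hκle : ∀ᶠ n in atTop, ∀ x ∈ closedBall x₀ r,
      κ n ≤ g n x - P.noise X w q (P.kernelAt x) n := by
    filter_upwards [hphase] with n hn x hx
    exact ciInf_le ⟨a * P.lam n ^ (1 - P.η), by rintro _ ⟨y, rfl⟩; exact hn y y.2⟩
      (⟨x, hx⟩ : closedBall x₀ r)
  refine ⟨c₁, by positivity, κ, ?_⟩
  filter_upwards [hphase, hκle, P.eventually_mul_b_succ_le s hr,
    P.eventually_step_succ_mul_le ha c₁, hq, T.eventually_integral_pos,
    T.eventually_noise_kernelAt_le x₀ r (half_pos ha)]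
    with n hphase hκle hsb hγκ hq hG hnoise
  have haκ : a * P.lam n ^ (1 - P.η) ≤ κ n := le_ciInf fun x => hphase x x.2
  have hκpos : 0 < κ n := (mul_pos ha (hpow n)).trans_le haκ
  have hκg : ∀ x ∈ closedBall x₀ r, κ n / 2 ≤ g n x := fun x hx => by
    linarith [hκle x hx, (abs_le.1 (hnoise x hx)).1]
  refine ⟨hκpos, hγκ.trans (Real.rpow_le_rpow (mul_pos ha (hpow n)).le haκ hη₀.le), hκg,
    fun hG₂ => le_ciInf fun x => ?_⟩
  have hv : ∀ y ∈ closedBall x₀ r, κ n * (1 / 8) ≤ q n y := fun y hy => by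
    have := T.one_sub_mul_div_le_policy hG hG₂ (by positivity) (hκg y hy)
    nlinarith [P.lam_le_half n]
  calc (1 - P.γ (n + 1)) * κ n + P.γ (n + 1) * c₁ * κ n ^ (1 - P.η)
      = (1 - P.γ (n + 1)) * κ n
          + P.γ (n + 1) * (κ₀ * (ε ^ P.η * (κ n * (1 / 8)) ^ (1 - P.η))) := by
        rw [Real.mul_rpow hκpos.le (by norm_num), hc₁]; ring
    _ ≤ (1 - P.γ (n + 1)) * (g n x - P.noise X w q (P.kernelAt x) n)
          + P.γ (n + 1) * (κ₀ * (ε ^ P.η * (κ n * (1 / 8)) ^ (1 - P.η))) := by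
        gcongr
        · exact (P.stepSizes.one_sub_pos _).le
        · exact hκle x x.2
    _ ≤ _ := T.estimate_sub_noise_succ_ge measurableSet_closedBall
        (hmass _ (P.b_pos (n + 1)) x₀ r hsb x x.2) hε (by positivity) hf hq hv

end TypicalTrajectory

end Escape

section LowerBounds

variable {d : ℕ} {P : MidasParams d} {X : ℕ → ℝ^d} {w : ℕ → ℝ} {g q : ℕ → ℝ^d → ℝ}

lemma MidasParams.exists_closedBall_le_f (P : MidasParams d) {x₀ : ℝ^d} {δ : ℝ} (hδ : δ < P.f x₀)
    {R : ℝ} (hR : 0 < R) : ∃ r, 0 < r ∧ r ≤ R ∧ ∀ y ∈ closedBall x₀ r, δ ≤ P.f y := by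
  obtain ⟨r, hr, hf⟩ := nhds_basis_closedBall.eventually_iff.1
    (P.f_continuous.continuousAt.eventually (le_mem_nhds hδ))
  exact ⟨min r R, lt_min hr hR, min_le_right _ _, fun y hy =>
    hf (closedBall_subset_closedBall (min_le_left _ _) hy)⟩

lemma Trajectory.sub_le_integral_estimate (T : Trajectory P X w g q) {n : ℕ} {s : Set (ℝ^d)}
    (hs : MeasurableSet s) (hs' : volume s ≠ ∞) {a C : ℝ} (hC : 0 ≤ C) (ha : ∀ y ∈ s, a ≤ g n y)
    (hg : ∀ y, -(C * P.q₀ y) ≤ g n y) : a * volume.real s - C ≤ ∫ y, g n y := by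
  have hind : Integrable (s.indicator fun _ => a) :=
    (integrable_indicator_iff hs).2 (integrableOn_const hs')
  have hq₀ := P.integrable_q₀.const_mul C
  calc a * volume.real s - C = ∫ y, (s.indicator (fun _ => a) - fun y => C * P.q₀ y) y := by
        rw [integral_sub' hind hq₀, integral_indicator hs, setIntegral_const, integral_const_mul,
          P.integral_q₀, smul_eq_mul, mul_one, mul_comm]
    _ ≤ ∫ y, g n y := integral_mono (hind.sub hq₀) (T.estimate_integrable n) fun y => by
        have := mul_nonneg hC (P.q₀_nonneg y)
        by_cases hy : y ∈ s
        · simp only [Pi.sub_apply, Set.indicator_of_mem hy]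
          linarith [ha y hy]
        · simp only [Pi.sub_apply, Set.indicator_of_notMem hy]
          linarith [hg y]

namespace TypicalTrajectory

/-- While `H < 1` the distance of `κ ^ η` from its equilibrium decays faster than `H ^ (η / 4)` can,
so it is small when `H` is. -/
lemma exists_le_estimate_of_le (T : TypicalTrajectory P X w g q) {x₀ : ℝ^d} {r ε : ℝ}
    (hr : 0 < r) (hε : 0 < ε) (hf : ∀ y ∈ closedBall x₀ r, ε ≤ P.f y)
    (hq : ∀ᶠ n in atTop, ∀ y ∈ closedBall x₀ r, P.lam n / 2 * (P.c * P.f y) ≤ q n y)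
    {H : ℕ → ℝ} (hH : ∀ᶠ n in atTop, 0 < H n)
    (hHstep : ∀ n, (1 - P.γ (n + 1)) * H n ≤ H (n + 1))
    (hmass : ∀ᶠ n in atTop, ∫ y, g n y ≤ 2 ∨ 1 ≤ H (n + 1)) :
    ∃ a > 0, ∃ h > 0, ∀ᶠ n in atTop, H n ≤ h → ∀ x ∈ closedBall x₀ r, a ≤ g n x := by
  have hη := P.η_pos
  obtain ⟨c₁, hc₁, κ, hκ⟩ := T.exists_escape hr hε hf hq
  obtain ⟨n₀, hn₀⟩ := eventually_atTop.1 (hκ.and (hH.and hmass))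
  obtain ⟨C, hC, hD⟩ := exists_le_mul_rpow_of_decay_or_reset P.stepSizes
    (D := fun n => (c₁ - κ n ^ P.η)⁺) (H := H) (θ := P.η / 4) (B := c₁) (n₀ := n₀)
    (by positivity) hc₁.le (fun n hn => (hn₀ n hn).2.1) (fun n _ => hHstep n) fun n hn => by
      obtain ⟨⟨hκ₀, hγκ, -, hgrow⟩, -, hle | hone⟩ := hn₀ n hn
      · refine Or.inl ((posPart_sub_rpow_le hη P.η_lt_one.le (P.stepSizes.pos _).le
          (by linarith [P.stepSizes.le_half (n + 1)]) hκ₀ hγκ (hgrow hle) hc₁.le).trans ?_)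
        exact mul_le_mul_of_nonneg_right (P.stepSizes.one_sub_half_mul_le_rpow hη.le _)
          (posPart_nonneg _)
      · have := Real.rpow_nonneg (hn₀ (n + 1) (by omega)).1.1.le P.η
        exact Or.inr ⟨hone, max_le (by linarith) hc₁.le⟩
  obtain ⟨h, hh, hCh⟩ : ∃ h > 0, C * h ^ (P.η / 4) ≤ c₁ / 2 := by
    have hlim : Tendsto (fun h : ℝ => C * h ^ (P.η / 4)) (𝓝[>] 0) (𝓝 0) := by
      have hcont := (Real.continuousAt_rpow_const 0 (P.η / 4) (Or.inr (by positivity))).const_mul C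
      rw [ContinuousAt, Real.zero_rpow (by positivity), mul_zero] at hcont
      exact hcont.mono_left nhdsWithin_le_nhds
    exact ((hlim.eventually (ge_mem_nhds (half_pos hc₁))).and self_mem_nhdsWithin).exists.imp
      fun h hh => ⟨hh.2, hh.1⟩
  refine ⟨(c₁ / 2) ^ P.η⁻¹ / 2, by positivity, h, hh, ?_⟩
  filter_upwards [eventually_ge_atTop n₀] with n hn hHh x hx
  obtain ⟨⟨hκ₀, -, hκg, -⟩, hH₀, -⟩ := hn₀ n hn
  have hκη : c₁ / 2 ≤ κ n ^ P.η := by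
    have hsmall : C * H n ^ (P.η / 4) ≤ C * h ^ (P.η / 4) := by gcongr
    linarith [(le_posPart (c₁ - κ n ^ P.η)).trans (hD n hn)]
  have hroot : (c₁ / 2) ^ P.η⁻¹ ≤ κ n := by
    calc (c₁ / 2) ^ P.η⁻¹ ≤ (κ n ^ P.η) ^ P.η⁻¹ := by gcongr
      _ = κ n := Real.rpow_rpow_inv hκ₀.le hη.ne'
  linarith [hκg x hx]

lemma exists_pos_le_integral (T : TypicalTrajectory P X w g q) :
    ∃ G₀ > 0, ∀ᶠ n in atTop, G₀ ≤ ∫ y, g n y := by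
  obtain ⟨x₀, hfx₀, R, hR, hg⟩ := T.exists_closedBall_estimate_nonneg
  obtain ⟨r, hr, hrR, hf⟩ := P.exists_closedBall_le_f (half_lt_self hfx₀) hR
  have hq : ∀ᶠ n in atTop, ∀ y ∈ closedBall x₀ r, P.lam n / 2 * (P.c * P.f y) ≤ q n y := by
    filter_upwards [hg, T.eventually_integral_pos] with n hg hG y hy
    have hcf := mul_le_mul_of_nonneg_left (P.mul_f_le y) (P.lam_pos n).le
    have hcf₀ := mul_nonneg (P.lam_pos n).le (mul_nonneg P.c_pos.le (P.f_nonneg y))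
    have hnormalized := mul_nonneg (show 0 ≤ 1 - P.lam n by linarith [P.lam_le_half n])
      (div_nonneg (hg y (closedBall_subset_closedBall hrR hy)) hG.le)
    rw [T.policy_eq]
    linarith
  obtain ⟨a, ha, h, hh, hsmall⟩ := T.exists_le_estimate_of_le hr (half_pos hfx₀) hf hq
    T.eventually_integral_pos T.one_sub_mul_integral_estimate_le
    (.of_forall fun n => (le_total _ _).imp_right fun hG => by
      have := T.one_sub_mul_integral_estimate_le n
      nlinarith [P.stepSizes.le_half (n + 1)])
  obtain ⟨C, hC, hlower⟩ := T.exists_eventually_neg_mul_le_estimate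
  set v := volume.real (closedBall x₀ r)
  have hv₀ : 0 < v := ENNReal.toReal_pos (measure_closedBall_pos _ _ hr).ne'
    measure_closedBall_lt_top.ne
  have hlim : Tendsto (fun n => C * discount P.γ n) atTop (𝓝 0) := by
    simpa using P.stepSizes.discount_tendsto_zero.const_mul C
  refine ⟨min h (a * v / 2), by positivity, ?_⟩
  filter_upwards [hsmall, hlower, hlim.eventually (ge_mem_nhds (show 0 < a * v / 2 by positivity))]
    with n hsmall hlower hn
  rcases le_total (∫ y, g n y) h with hle | hge
  · have := T.sub_le_integral_estimate measurableSet_closedBall measure_closedBall_lt_top.ne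
      (mul_nonneg hC (P.stepSizes.discount_pos n).le) (hsmall hle) fun y => by
        linarith [hlower y]
    exact (min_le_right _ _).trans (by linarith)
  · exact (min_le_left _ _).trans hge

lemma eventually_half_lam_mul_q₀_le_policy (T : TypicalTrajectory P X w g q) :
    ∀ᶠ n in atTop, ∀ x, P.lam n / 2 * P.q₀ x ≤ q n x := by
  obtain ⟨G₀, hG₀, hG⟩ := T.exists_pos_le_integral
  obtain ⟨C, hC, hlower⟩ := T.exists_eventually_neg_mul_le_estimate
  have hlim : Tendsto (fun n => C / G₀ * (discount P.γ n / P.lam n)) atTop (𝓝 0) := by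
    simpa using (P.stepSizes.discount_div_tendsto_zero P.lam_pos
      P.tendsto_step_div_lam).const_mul (C / G₀)
  filter_upwards [hG, hlower, hlim.eventually (ge_mem_nhds (half_pos one_pos))]
    with n hG hlower hn x
  have hD := P.stepSizes.discount_pos n
  have hq₀ := P.q₀_nonneg x
  rw [← mul_div_assoc, div_le_iff₀ (P.lam_pos n)] at hn
  have hnormalized : -(P.lam n / 2 * P.q₀ x) ≤ g n x / ∫ y, g n y := by
    calc -(P.lam n / 2 * P.q₀ x) ≤ -(C / G₀ * discount P.γ n * P.q₀ x) := by
          rw [neg_le_neg_iff]; gcongr; linarith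
      _ = -(C * discount P.γ n * P.q₀ x) / G₀ := by ring
      _ ≤ -(C * discount P.γ n * P.q₀ x) / ∫ y, g n y := by
          rw [neg_div, neg_div, neg_le_neg_iff]
          gcongr
      _ ≤ g n x / ∫ y, g n y := by gcongr; exacts [(hG₀.trans_le hG).le, hlower x]
  have hlam := mul_nonneg (P.lam_pos n).le hq₀
  rw [T.policy_eq]
  nlinarith [P.lam_le_half n, P.lam_pos n]

lemma eventually_half_lam_mul_f_le_policy (T : TypicalTrajectory P X w g q) :
    ∀ᶠ n in atTop, ∀ x, P.lam n / 2 * (P.c * P.f x) ≤ q n x :=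
  T.eventually_half_lam_mul_q₀_le_policy.mono fun n hn x =>
    (mul_le_mul_of_nonneg_left (P.mul_f_le x) (half_pos (P.lam_pos n)).le).trans (hn x)

/-- Once no weight is truncated any more, the compensator of the mass of `g` is
`∫ f ^ η * q ^ (1 - η) ≤ 1`. -/
lemma eventually_integral_le_one_add (T : TypicalTrajectory P X w g q) {ε : ℝ} (hε : 0 < ε) :
    ∀ᶠ n in atTop, ∫ y, g n y ≤ 1 + ε := by
  have hstep : ∀ᶠ n in atTop, (∫ y, g (n + 1) y) - P.noise X w q 1 (n + 1)
      ≤ (1 - P.γ (n + 1)) * ((∫ y, g n y) - P.noise X w q 1 n) + P.γ (n + 1) * 1 := by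
    filter_upwards [T.eventually_half_lam_mul_f_le_policy] with n hn
    have hcap : min (w (n + 1)) (P.cap (n + 1)) = w (n + 1) := by
      refine min_eq_left ?_
      rw [T.weight_succ]
      exact div_le_of_le_mul₀ (T.policy_nonneg _ _) (P.cap_pos _).le (P.f_le_cap_mul (hn _))
    have hnoise : P.noise X w q 1 (n + 1) = (1 - P.γ (n + 1)) * P.noise X w q 1 n + P.γ (n + 1)
        * (w (n + 1) ^ P.η - ∫ y, truncTemper P.η (P.cap (n + 1)) (P.f y) (q n y)) := by
      simp [MidasParams.noise, stepAvg, hcap]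
    have hcompensator := integral_truncTemper_le P.η_pos.le P.η_lt_one.le (P.cap_pos (n + 1)).le
      P.f_nonneg (T.policy_nonneg n) P.integrable_f (T.policy_integrable n)
    rw [P.integral_f, T.integral_policy] at hcompensator
    rw [T.integral_estimate_succ, hnoise]
    nlinarith [P.stepSizes.pos (n + 1)]
  filter_upwards [P.stepSizes.eventually_le_add
    (h := fun n => (∫ y, g n y) - P.noise X w q 1 n) hstep (half_pos hε),
    T.noise_one_tendsto.eventually (ge_mem_nhds (half_pos hε))] with n h₁ h₂
  linarith

end TypicalTrajectory

end LowerBounds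

section Limit

variable {d : ℕ} {P : MidasParams d} {X : ℕ → ℝ^d} {w : ℕ → ℝ} {g q : ℕ → ℝ^d → ℝ}

namespace TypicalTrajectory

lemma exists_pos_eventually_le_policy (T : TypicalTrajectory P X w g q) {x₀ : ℝ^d}
    (hf : 0 < P.f x₀) : ∃ v > 0, ∃ r > 0, ∀ᶠ n in atTop, ∀ x ∈ closedBall x₀ r, v ≤ q n x := by
  obtain ⟨r, hr, -, hfr⟩ := P.exists_closedBall_le_f (half_lt_self hf) one_pos
  have hG := T.eventually_integral_le_one_add one_pos
  obtain ⟨a, ha, h, hh, hest⟩ := T.exists_le_estimate_of_le hr (half_pos hf) hfr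
    (T.eventually_half_lam_mul_f_le_policy.mono fun n hn y _ => hn y)
    (.of_forall P.stepSizes.discount_pos) (fun n => (discount_succ P.γ n).ge)
    (hG.mono fun n hn => Or.inl (by linarith))
  refine ⟨a / 4, by positivity, r, hr, ?_⟩
  filter_upwards [hest, P.stepSizes.discount_tendsto_zero.eventually (ge_mem_nhds hh), hG,
    T.eventually_integral_pos] with n hest hdisc hG hG₀ x hx
  have := T.one_sub_mul_div_le_policy hG₀ hG ha.le (hest hdisc x hx)
  nlinarith [P.lam_le_half n]

lemma eventually_sub_le_estimate (T : TypicalTrajectory P X w g q) {x₀ : ℝ^d} {r v ε δ : ℝ}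
    (hr : 0 < r) (hε : 0 < ε) (hv : 0 ≤ v) (hδ : 0 < δ) (hf : ∀ y ∈ closedBall x₀ r, ε ≤ P.f y)
    (hq : ∀ᶠ n in atTop, ∀ y ∈ closedBall x₀ r, v ≤ q n y) :
    ∀ᶠ n in atTop, ∀ x ∈ closedBall x₀ (r / 2),
      (1 - δ) * (ε ^ P.η * v ^ (1 - P.η)) - 2 * δ ≤ g n x := by
  have hsub : ∀ x ∈ closedBall x₀ (r / 2), closedBall x (r / 2) ⊆ closedBall x₀ r := fun x hx =>
    closedBall_subset_closedBall' (by linarith [mem_closedBall.1 hx])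
  have hlam := T.eventually_half_lam_mul_f_le_policy
  obtain ⟨a, ha, hlower⟩ := T.exists_mul_rpow_le_estimate_sub_noise hr hε hf
    (hlam.mono fun n hn y _ => hn y)
  have hmass := (tendsto_nhdsWithin_iff.2 ⟨P.b_tendsto.comp (tendsto_add_atTop_nat 1),
    .of_forall fun n => P.b_pos (n + 1)⟩).eventually
    (P.kernel.eventually_le_setIntegral_closedBall (half_pos hr) hδ)
  have hdrift := P.stepSizes.eventually_forall_sub_le (s := closedBall x₀ (r / 2))
    (h := fun n x => g n x - P.noise X w q (P.kernelAt x) n)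
    (a := (1 - δ) * (ε ^ P.η * v ^ (1 - P.η))) (hlower.mono fun n hn => ⟨0, ?_⟩) ?_ hδ
  · filter_upwards [hdrift, T.eventually_noise_kernelAt_le x₀ (r / 2) hδ] with n hdrift hnoise x hx
    have hpow : P.lam n ^ (1 - P.η) ≤ 1 := Real.rpow_le_one (P.lam_pos n).le
      (by linarith [P.lam_le_half n]) (by linarith [P.η_lt_one])
    nlinarith [hdrift x hx, (abs_le.1 (hnoise x hx)).1]
  · rintro _ ⟨x, hx, rfl⟩
    exact (mul_pos ha (Real.rpow_pos_of_pos (P.lam_pos n) _)).le.trans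
      (hn x (closedBall_subset_closedBall (by linarith) hx))
  · filter_upwards [hmass, hlam, hq] with n hmass hlam hq x hx
    exact T.estimate_sub_noise_succ_ge measurableSet_closedBall (hmass x) hε hv
      (fun y hy => hf y (hsub x hx hy)) (fun y _ => hlam y) fun y hy => hq y (hsub x hx hy)

lemma exists_eventually_le_policy_of_lt (T : TypicalTrajectory P X w g q) {x₀ : ℝ^d}
    {r v ε v' : ℝ} (hr : 0 < r) (hε : 0 < ε) (hεf : ε < P.f x₀) (hv : 0 ≤ v)
    (hq : ∀ᶠ n in atTop, ∀ x ∈ closedBall x₀ r, v ≤ q n x) (hv' : v' < ε ^ P.η * v ^ (1 - P.η)) :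
    ∃ r' > 0, ∀ᶠ n in atTop, ∀ x ∈ closedBall x₀ r', v' ≤ q n x := by
  obtain ⟨r', hr', hr'r, hf⟩ := P.exists_closedBall_le_f hεf hr
  refine ⟨r' / 2, half_pos hr', ?_⟩
  rcases le_or_gt v' 0 with hv'₀ | hv'₀
  · exact .of_forall fun n x _ => hv'₀.trans (T.policy_nonneg n x)
  set A := ε ^ P.η * v ^ (1 - P.η)
  obtain ⟨δ, hδ, hδA, hδ₁⟩ : ∃ δ > 0,
      v' < (1 - δ) * (((1 - δ) * A - 2 * δ) / (1 + δ)) ∧ 0 ≤ (1 - δ) * A - 2 * δ := by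
    have hcont : ContinuousAt (fun δ : ℝ => (1 - δ) * (((1 - δ) * A - 2 * δ) / (1 + δ))) 0 := by
      fun_prop (disch := norm_num)
    have hcont' : ContinuousAt (fun δ : ℝ => (1 - δ) * A - 2 * δ) 0 := by fun_prop
    have hA₀ : ∀ᶠ δ in 𝓝[>] (0 : ℝ), v' < (1 - δ) * (((1 - δ) * A - 2 * δ) / (1 + δ)) :=
      (hcont.eventually (lt_mem_nhds (by simpa using hv'))).filter_mono nhdsWithin_le_nhds
    have hA₁ : ∀ᶠ δ in 𝓝[>] (0 : ℝ), 0 ≤ (1 - δ) * A - 2 * δ :=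
      (hcont'.eventually (le_mem_nhds (by simpa using hv'₀.trans hv'))).filter_mono
        nhdsWithin_le_nhds
    exact (eventually_mem_nhdsWithin.and (hA₀.and hA₁)).exists
  filter_upwards [T.eventually_sub_le_estimate hr' hε hv hδ hf (hq.mono fun n hn x hx =>
      hn x (closedBall_subset_closedBall hr'r hx)), T.eventually_integral_le_one_add hδ,
    T.eventually_integral_pos, P.lam_tendsto.eventually (ge_mem_nhds hδ)]
    with n hest hG hG₀ hlam x hx
  refine hδA.le.trans (le_trans ?_ (T.one_sub_mul_div_le_policy hG₀ hG hδ₁ (hest x hx)))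
  gcongr

/-- The fixed point of `v ↦ ε ^ η * v ^ (1 - η)` is `ε`, so no asymptotic lower bound of `q` near
`x₀` below `f x₀` can be optimal. -/
lemma eventually_le_policy (T : TypicalTrajectory P X w g q) {x₀ : ℝ^d} {δ : ℝ}
    (hδ : δ < P.f x₀) : ∀ᶠ n in atTop, δ ≤ q n x₀ := by
  rcases (P.f_nonneg x₀).eq_or_lt with hf₀ | hf₀
  · exact .of_forall fun n => (hδ.trans_le hf₀.ge).le.trans (T.policy_nonneg n x₀)
  set S := {v | ∃ r > 0, ∀ᶠ n in atTop, ∀ x ∈ closedBall x₀ r, v ≤ q n x}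
  obtain ⟨v₀, hv₀, hv₀S⟩ := T.exists_pos_eventually_le_policy hf₀
  suffices hδS : δ ∈ S by
    obtain ⟨r, hr, hq⟩ := hδS
    exact hq.mono fun n hn => hn x₀ (mem_closedBall_self hr.le)
  by_contra hδS
  have hupper : ∀ v ∈ S, v ≤ δ := fun v ⟨r, hr, hq⟩ => by
    by_contra! hlt
    exact hδS ⟨r, hr, hq.mono fun n hn x hx => hlt.le.trans (hn x hx)⟩
  have hlub := isLUB_csSup ⟨v₀, hv₀S⟩ ⟨δ, hupper⟩
  set s := sSup S
  have hs₀ : 0 < s := hv₀.trans_le (hlub.1 hv₀S)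
  obtain ⟨ε, hδε, hεf⟩ := exists_between hδ
  have hsε : s < ε := (hlub.2 hupper).trans_lt hδε
  have himprove : s < ε ^ P.η * s ^ (1 - P.η) := by
    calc s = s ^ P.η * s ^ (1 - P.η) := by rw [← Real.rpow_add hs₀, add_sub_cancel, Real.rpow_one]
      _ < ε ^ P.η * s ^ (1 - P.η) := by
          gcongr
          exact P.η_pos
  have hcont : ContinuousAt (fun v => ε ^ P.η * v ^ (1 - P.η)) s :=
    (Real.continuousAt_rpow_const s _ (Or.inl hs₀.ne')).const_mul _
  obtain ⟨v, hvS, hv₁, hv₂⟩ := ((hlub.frequently_mem ⟨v₀, hv₀S⟩).and_eventually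
    (((hcont.eventually (lt_mem_nhds himprove)).and (lt_mem_nhds hs₀)).filter_mono
      nhdsWithin_le_nhds)).exists
  obtain ⟨v', hv's, hv'⟩ := exists_between hv₁
  obtain ⟨r, hr, hq⟩ := hvS
  exact hv's.not_ge (hlub.1
    (T.exists_eventually_le_policy_of_lt hr (hs₀.trans hsε) hεf hv₂.le hq hv'))

theorem tendsto_integral_abs_sub (T : TypicalTrajectory P X w g q) :
    Tendsto (fun n => ∫ x, |q n x - P.f x|) atTop (𝓝 0) :=
  tendsto_integral_abs_sub_of_eventually_le P.integrable_f P.f_nonneg T.policy_integrable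
    T.policy_nonneg (fun n => by rw [T.integral_policy, P.integral_f])
    fun _ _ hv => T.eventually_le_policy hv

end TypicalTrajectory

end Limit

section Draws

lemma MidasParams.tendsto_sum_lam {d : ℕ} (P : MidasParams d) :
    Tendsto (fun n => ∑ k ∈ Finset.range n, P.lam k) atTop atTop := by
  refine (not_summable_iff_tendsto_nat_atTop_of_nonneg fun n => (P.lam_pos n).le).1 fun hsum => ?_
  refine Real.not_summable_natCast_inv (summable_of_isBigO_nat hsum
    (Asymptotics.IsBigO.of_bound 1 ?_))
  filter_upwards [eventually_ne_atTop 0, P.eventually_one_le_natCast_mul_mul_pow] with n hn hle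
  have hn' : (0 : ℝ) < n := by positivity
  rw [Real.norm_of_nonneg (by positivity), Real.norm_of_nonneg (P.lam_pos n).le, one_mul,
    inv_le_iff_one_le_mul₀' hn']
  exact hle.trans (mul_le_mul_of_nonneg_left (P.mul_pow_le_lam n) hn'.le)

/-- A stochastic process whose paths are trajectories of the algorithm, up to signs and
normalization, and whose draws follow the policies: given `ℱ n`, the density of `X (n + 1)` is
`q n`. -/
structure MidasAlgorithm {Ω : Type*} {mΩ : MeasurableSpace Ω} {d : ℕ} (P : MidasParams d)
    (μ : Measure Ω) (ℱ : Filtration ℕ mΩ) (X : ℕ → Ω → ℝ^d) (w : ℕ → Ω → ℝ)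
    (g q : ℕ → Ω → ℝ^d → ℝ) : Prop where
  draw_measurable : ∀ n, Measurable[ℱ (n + 1)] (X (n + 1))
  policy_measurable : ∀ n x, Measurable[ℱ n] fun ω => q n ω x
  condExp_draw : ∀ n (φ : ℝ^d → ℝ), Continuous φ → (∃ C, ∀ x, |φ x| ≤ C) →
    μ[fun ω => φ (X (n + 1) ω) | ℱ n] =ᵐ[μ] fun ω => ∫ y, φ y * q n ω y
  weight_succ : ∀ n ω, w (n + 1) ω = P.f (X (n + 1) ω) / q n ω (X (n + 1) ω)
  estimate_succ : ∀ n ω x, g (n + 1) ω x = (1 - P.γ (n + 1)) * g n ω x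
    + P.γ (n + 1) * (w (n + 1) ω ^ P.η * P.kernelAt x (n + 1) (X (n + 1) ω))
  policy_eq : ∀ n ω x, q n ω x = (1 - P.lam n) * (g n ω x / ∫ y, g n ω y) + P.lam n * P.q₀ x
  estimate_integrable : ∀ n ω, Integrable (g n ω)
  estimate_continuous : ∀ n ω, Continuous (g n ω)

/-- The normalized estimate of time `n` has no mass where `f` is positive, and mixing it at the
exploration rate of time `L` gives a function that takes negative values: were the estimate frozen
between times `n` and `L`, the policy of time `L` would not be a density. -/
def MidasParams.deadEvent {Ω : Type*} {d : ℕ} (P : MidasParams d) (g : ℕ → Ω → ℝ^d → ℝ)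
    (n L : ℕ) : Set Ω :=
  {ω | ∫ x in {x | 0 < P.f x}, g n ω x / ∫ y, g n ω y ≤ 0} ∩
    {ω | ∃ x, (1 - P.lam L) * (g n ω x / ∫ y, g n ω y) + P.lam L * P.q₀ x < 0}

lemma half_mul_le_setIntegral_half_le_div {α : Type*} {mα : MeasurableSpace α} {ν : Measure α}
    {f p : α → ℝ} {l : ℝ} (hl : 0 < l) (hf : Measurable f) (hp : Measurable p)
    (hf_one : ∫ y, f y ∂ν = 1) (hp_one : ∫ y, p y ∂ν = 1) (hp₀ : ∀ y, 0 ≤ p y)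
    (hle : ∀ y, l * f y ≤ p y) : l / 2 ≤ ∫ y in {y | 1 / 2 ≤ f y / p y}, p y ∂ν := by
  have hfi : Integrable f ν := integrable_of_integral_eq_one hf_one
  have hpi : Integrable p ν := integrable_of_integral_eq_one hp_one
  have hA : MeasurableSet {y | 1 / 2 ≤ f y / p y} := measurableSet_le measurable_const (hf.div hp)
  calc l / 2 = ∫ y, l * (f y - p y / 2) ∂ν := by
        rw [integral_const_mul, integral_sub hfi (hpi.div_const 2), integral_div, hf_one, hp_one]
        ring
    _ ≤ ∫ y, {y | 1 / 2 ≤ f y / p y}.indicator p y ∂ν := by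
        refine integral_mono ((hfi.sub (hpi.div_const 2)).const_mul l) (hpi.indicator hA)
          fun y => ?_
        by_cases hy : 1 / 2 ≤ f y / p y
        · rw [Set.indicator_of_mem (by exact hy)]
          nlinarith [hle y, hp₀ y]
        · rw [Set.indicator_of_notMem (by exact hy)]
          rcases (hp₀ y).eq_or_lt with h₀ | h₀
          · nlinarith [hle y]
          · rw [not_le, div_lt_iff₀ h₀] at hy
            exact mul_nonpos_of_nonneg_of_nonpos hl.le (by linarith)
    _ = ∫ y in {y | 1 / 2 ≤ f y / p y}, p y ∂ν := integral_indicator hA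

namespace MidasAlgorithm

variable {Ω : Type*} {mΩ : MeasurableSpace Ω} {μ : Measure Ω} {d : ℕ} {P : MidasParams d}
  {ℱ : Filtration ℕ mΩ} {X : ℕ → Ω → ℝ^d} {w : ℕ → Ω → ℝ} {g q : ℕ → Ω → ℝ^d → ℝ}

lemma measurable_draw (M : MidasAlgorithm P μ ℱ X w g q) (n : ℕ) : Measurable (X (n + 1)) :=
  (M.draw_measurable n).mono (ℱ.le _) le_rfl

lemma hasCondDensity (M : MidasAlgorithm P μ ℱ X w g q) (n : ℕ) :
    HasCondDensity μ (ℱ n) volume (X (n + 1)) (q n) where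
  continuous ω := by
    have := M.estimate_continuous n ω
    have := P.q₀_continuous
    rw [funext (M.policy_eq n ω)]
    fun_prop
  integrable ω := by
    rw [funext (M.policy_eq n ω)]
    exact (((M.estimate_integrable n ω).div_const _).const_mul _).add (P.integrable_q₀.const_mul _)
  condExp := M.condExp_draw n

lemma stronglyMeasurable_policy (M : MidasAlgorithm P μ ℱ X w g q) (n : ℕ) :
    StronglyMeasurable[(ℱ n).prod inferInstance] (Function.uncurry (q n)) :=
  (M.hasCondDensity n).stronglyMeasurable_uncurry (M.policy_measurable n)

lemma measurable_ratio (M : MidasAlgorithm P μ ℱ X w g q) (n : ℕ) :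
    Measurable[(ℱ n).prod inferInstance] fun z : Ω × ℝ^d => P.f z.2 / q n z.1 z.2 :=
  (P.f_continuous.measurable.comp measurable_snd).div (M.stronglyMeasurable_policy n).measurable

lemma measurable_weight (M : MidasAlgorithm P μ ℱ X w g q) (n : ℕ) :
    Measurable[ℱ (n + 1)] (w (n + 1)) := by
  rw [funext (M.weight_succ n)]
  exact (M.measurable_ratio n).comp
    ((measurable_id'' (ℱ.mono n.le_succ)).prodMk (M.draw_measurable n))

lemma deadEvent_succ_inter_subset (M : MidasAlgorithm P μ ℱ X w g q) (n k : ℕ) :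
    P.deadEvent g n (n + (k + 1)) ∩ X (n + 1) ⁻¹' {x | 0 < P.f x}ᶜ
      ⊆ P.deadEvent g (n + 1) (n + 1 + k) := by
  rintro ω ⟨⟨hmass, hneg⟩, hf⟩
  have hf₀ : P.f (X (n + 1) ω) = 0 := (not_lt.1 fun h => hf h).antisymm (P.f_nonneg _)
  have hg : ∀ x, g (n + 1) ω x = (1 - P.γ (n + 1)) * g n ω x := fun x => by
    rw [M.estimate_succ, M.weight_succ, hf₀, zero_div, Real.zero_rpow P.η_pos.ne', zero_mul,
      mul_zero, add_zero]
  have hnorm : ∀ x, g (n + 1) ω x / ∫ y, g (n + 1) ω y = g n ω x / ∫ y, g n ω y := fun x => by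
    simp only [hg]
    rw [integral_const_mul, mul_div_mul_left _ _ (P.stepSizes.one_sub_pos _).ne']
  simpa only [MidasParams.deadEvent, Set.mem_inter_iff, Set.mem_ofPred_eq, hnorm, add_assoc,
    add_comm 1 k] using And.intro hmass hneg

lemma setIntegral_policy_le_half (M : MidasAlgorithm P μ ℱ X w g q) {n L : ℕ} {ω : Ω}
    (hω : ω ∈ P.deadEvent g n L) : ∫ y in {x | 0 < P.f x}, q n ω y ≤ 1 / 2 := by
  have hmass : ∫ x in {x | 0 < P.f x}, g n ω x / ∫ y, g n ω y ≤ 0 := hω.1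
  have hq₀ : ∫ y in {x | 0 < P.f x}, P.q₀ y ≤ 1 :=
    (setIntegral_le_integral P.integrable_q₀ (.of_forall P.q₀_nonneg)).trans_eq P.integral_q₀
  simp only [M.policy_eq]
  rw [integral_add (((M.estimate_integrable n ω).div_const _).const_mul _).integrableOn
    (P.integrable_q₀.const_mul _).integrableOn, integral_const_mul, integral_const_mul]
  nlinarith [P.lam_le_half n, P.lam_pos n]

lemma measurableSet_deadEvent (M : MidasAlgorithm P μ ℱ X w g q) (n L : ℕ) :
    MeasurableSet[ℱ n] (P.deadEvent g n L) := by
  have hlam : 1 - P.lam n ≠ 0 := by linarith [P.lam_le_half n]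
  have hnorm : ∀ ω x, g n ω x / ∫ y, g n ω y
      = (q n ω x - P.lam n * P.q₀ x) / (1 - P.lam n) := fun ω x => by
    rw [M.policy_eq, add_sub_cancel_right, mul_div_cancel_left₀ _ hlam]
  have hmix : ∀ x, Measurable[ℱ n] fun ω =>
      (1 - P.lam L) * (g n ω x / ∫ y, g n ω y) + P.lam L * P.q₀ x := fun x => by
    simp only [hnorm]
    exact ((((M.policy_measurable n x).sub_const _).div_const _).const_mul _).add_const _
  refine MeasurableSet.inter (measurableSet_le ?_ measurable_const) ?_
  · have hnormMeas : StronglyMeasurable[(ℱ n).prod inferInstance]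
        fun z : Ω × ℝ^d => g n z.1 z.2 / ∫ y, g n z.1 y := by
      simp only [hnorm, div_eq_mul_inv]
      exact ((M.stronglyMeasurable_policy n).sub ((P.q₀_continuous.stronglyMeasurable.const_mul
        _).comp_measurable measurable_snd)).mul_const _
    exact (@StronglyMeasurable.integral_prod_right' _ _ _ (ℱ n) _ (volume.restrict {x | 0 < P.f x})
      _ _ _ _ hnormMeas).measurable
  · have hdense : {ω | ∃ x, (1 - P.lam L) * (g n ω x / ∫ y, g n ω y) + P.lam L * P.q₀ x < 0}
        = ⋃ k, {ω | (1 - P.lam L) * (g n ω (TopologicalSpace.denseSeq (ℝ^d) k) / ∫ y, g n ω y)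
          + P.lam L * P.q₀ (TopologicalSpace.denseSeq (ℝ^d) k) < 0} := by
      ext ω
      have hcont := M.estimate_continuous n ω
      have hcont₀ := P.q₀_continuous
      have hopen : IsOpen {x | (1 - P.lam L) * (g n ω x / ∫ y, g n ω y) + P.lam L * P.q₀ x < 0} :=
        isOpen_lt (by fun_prop) continuous_const
      simp only [Set.mem_ofPred_eq, Set.mem_iUnion]
      exact ⟨fun h => (TopologicalSpace.denseRange_denseSeq (ℝ^d)).exists_mem_open hopen h,
        fun ⟨k, hk⟩ => ⟨_, hk⟩⟩
    rw [hdense]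
    exact MeasurableSet.iUnion fun k => measurableSet_lt (hmix _) measurable_const

variable [IsProbabilityMeasure μ]

lemma ae_trajectory (M : MidasAlgorithm P μ ℱ X w g q) :
    ∀ᵐ ω ∂μ, Trajectory P (X · ω) (w · ω) (g · ω) (q · ω) := by
  filter_upwards [ae_all_iff.2 fun n =>
      (M.hasCondDensity n).ae_nonneg (ℱ.le n) (M.measurable_draw n),
    ae_all_iff.2 fun n => (M.hasCondDensity n).ae_integral_eq_one (ℱ.le n) (M.measurable_draw n)]
    with ω hnonneg hone
  exact ⟨fun n => M.weight_succ n ω, fun n => M.estimate_succ n ω, fun n => M.policy_eq n ω,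
    hnonneg, hone, fun n => M.estimate_integrable n ω, fun n => M.estimate_continuous n ω⟩

lemma ae_half_mul_le_condExp_indicator (M : MidasAlgorithm P μ ℱ X w g q) (n : ℕ) :
    ∀ᵐ ω ∂μ, (∀ x, P.lam n * P.q₀ x ≤ q n ω x) →
      P.lam n * P.c / 2 ≤ μ[{ω | 1 / 2 ≤ w (n + 1) ω}.indicator (1 : Ω → ℝ) | ℱ n] ω := by
  have hA : MeasurableSet[(ℱ n).prod inferInstance]
      {z : Ω × ℝ^d | 1 / 2 ≤ P.f z.2 / q n z.1 z.2} :=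
    measurableSet_le measurable_const (M.measurable_ratio n)
  have hind : {ω | 1 / 2 ≤ w (n + 1) ω}.indicator (1 : Ω → ℝ) = fun ω =>
      {z : Ω × ℝ^d | 1 / 2 ≤ P.f z.2 / q n z.1 z.2}.indicator (1 : Ω × ℝ^d → ℝ)
        (ω, X (n + 1) ω) := by
    ext ω
    simp only [Set.indicator_apply, Set.mem_ofPred_eq, M.weight_succ, Pi.one_apply]
  have hint : Integrable ({ω | 1 / 2 ≤ w (n + 1) ω}.indicator (1 : Ω → ℝ)) μ :=
    (integrable_const 1).indicator
      (measurableSet_le measurable_const ((M.measurable_weight n).mono (ℱ.le _) le_rfl))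
  rw [hind] at hint ⊢
  filter_upwards [(M.hasCondDensity n).condExp_comp_eq (ℱ.le n) (M.measurable_draw n)
    (stronglyMeasurable_one.indicator hA) hint, M.ae_trajectory] with ω hω T hlow
  have hmeas := ((M.hasCondDensity n).continuous ω).measurable
  rw [hω]
  convert half_mul_le_setIntegral_half_le_div (ν := volume) (mul_pos (P.lam_pos n) P.c_pos)
    P.f_continuous.measurable hmeas P.integral_f (T.integral_policy n) (T.policy_nonneg n)
    fun y => ?_ using 1
  · have hA' : MeasurableSet {y | 1 / 2 ≤ P.f y / q n ω y} :=
      measurableSet_le measurable_const (P.f_continuous.measurable.div hmeas)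
    rw [← integral_indicator hA']
    simp only [Set.indicator_apply, Set.mem_ofPred_eq, Pi.one_apply, ite_mul, one_mul, zero_mul]
  · rw [mul_assoc]
    exact (mul_le_mul_of_nonneg_left (P.mul_f_le y) (P.lam_pos n).le).trans (hlow y)

lemma ae_frequently_half_le_weight (M : MidasAlgorithm P μ ℱ X w g q) :
    ∀ᵐ ω ∂μ, (∀ n x, P.lam n * P.q₀ x ≤ q n ω x) → ∃ᶠ n in atTop, 1 / 2 ≤ w (n + 1) ω := by
  have hs : ∀ n, MeasurableSet[ℱ n] (if n = 0 then ∅ else {ω | 1 / 2 ≤ w n ω}) := by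
    rintro (_ | n)
    · exact @MeasurableSet.empty _ (ℱ 0)
    · exact measurableSet_le measurable_const (M.measurable_weight n)
  filter_upwards [ae_mem_limsup_atTop_iff μ hs,
    ae_all_iff.2 M.ae_half_mul_le_condExp_indicator] with ω hlevy hcond hlow
  have hfreq : ω ∈ limsup (fun n => if n = 0 then ∅ else {ω | 1 / 2 ≤ w n ω}) atTop := by
    refine hlevy.2 (tendsto_atTop_mono (fun n => ?_)
      (P.tendsto_sum_lam.atTop_mul_const (half_pos P.c_pos)))
    rw [Finset.sum_mul]
    refine Finset.sum_le_sum fun k _ => ?_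
    simpa [mul_div_assoc] using hcond k (hlow k)
  rw [mem_limsup_iff_frequently_mem] at hfreq
  refine frequently_atTop.2 fun N => ?_
  obtain ⟨n, hn, hmem⟩ := frequently_atTop.1 hfreq (N + 1)
  obtain ⟨k, rfl⟩ := Nat.exists_eq_succ_of_ne_zero (by lia : n ≠ 0)
  exact ⟨k, by lia, by simpa using hmem⟩

lemma measure_deadEvent_eq_zero (M : MidasAlgorithm P μ ℱ X w g q) (k : ℕ) :
    ∀ n, μ (P.deadEvent g n (n + k)) = 0 := by
  induction k with
  | zero =>
    refine fun n => measure_eq_zero_iff_ae_notMem.2 ?_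
    filter_upwards [M.ae_trajectory] with ω T
    rintro ⟨-, x, hx⟩
    exact (T.policy_nonneg n x).not_gt ((M.policy_eq n ω x).trans_lt hx)
  | succ k ih =>
    exact fun n => (M.hasCondDensity n).measure_eq_zero_of_setIntegral_le_half (ℱ.le n)
      (M.measurable_draw n) (M.measurableSet_deadEvent n _)
      (isOpen_lt continuous_const P.f_continuous).measurableSet
      (fun ω hω => M.setIntegral_policy_le_half hω)
      (measure_mono_null (M.deadEvent_succ_inter_subset n k) (ih (n + 1)))

lemma ae_exists_pos_or_nonneg (M : MidasAlgorithm P μ ℱ X w g q) :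
    ∀ᵐ ω ∂μ, ∀ n, (∃ x, 0 < P.f x ∧ 0 < g n ω x / ∫ y, g n ω y) ∨
      ∀ x, 0 ≤ g n ω x / ∫ y, g n ω y := by
  have halive : ∀ᵐ ω ∂μ, ∀ n k, ω ∉ P.deadEvent g n (n + k) :=
    ae_all_iff.2 fun n => ae_all_iff.2 fun k =>
      measure_eq_zero_iff_ae_notMem.1 (M.measure_deadEvent_eq_zero k n)
  filter_upwards [halive] with ω hω n
  by_contra! hdead
  obtain ⟨hnonpos, x, hx⟩ := hdead
  have hmass : ∫ x in {x | 0 < P.f x}, g n ω x / ∫ y, g n ω y ≤ 0 :=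
    setIntegral_nonpos (isOpen_lt continuous_const P.f_continuous).measurableSet hnonpos
  have hmix : ∀ k, 0 ≤ (1 - P.lam (n + k)) * (g n ω x / ∫ y, g n ω y)
      + P.lam (n + k) * P.q₀ x := fun k => by
    by_contra! hneg
    exact hω n k ⟨hmass, x, hneg⟩
  have hlim : Tendsto (fun k => P.lam (n + k)) atTop (𝓝 0) := by
    simpa only [add_comm n] using (tendsto_add_atTop_iff_nat n).2 P.lam_tendsto
  have := ge_of_tendsto' (((hlim.const_sub 1).mul_const _).add (hlim.mul_const _)) hmix
  rw [sub_zero, one_mul, zero_mul, add_zero] at this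
  exact this.not_gt hx

end MidasAlgorithm

end Draws

section Noise

lemma truncTemper_le_rpow_mul {θ a u v : ℝ} (hθ : 1 ≤ θ) (ha : 0 ≤ a) (hu : 0 ≤ u) (hv : 0 ≤ v) :
    truncTemper θ a u v ≤ a ^ (θ - 1) * u := by
  rcases hv.eq_or_lt with rfl | hv'
  · simpa [truncTemper] using mul_nonneg (Real.rpow_nonneg ha _) hu
  have hmin : 0 ≤ min (u / v) a := le_min (div_nonneg hu hv) ha
  calc truncTemper θ a u v = min (u / v) a ^ (θ - 1) * min (u / v) a * v := by
        rw [truncTemper, ← Real.rpow_add_one' hmin (by linarith), sub_add_cancel]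
    _ ≤ a ^ (θ - 1) * (u / v) * v := by
        have := Real.rpow_le_rpow hmin (min_le_right (u / v) a) (sub_nonneg.2 hθ)
        gcongr
        exact min_le_left _ _
    _ = a ^ (θ - 1) * u := by field_simp

lemma truncTemper_le_mul_add {θ a u v s : ℝ} (hθ : 0 ≤ θ) (hθ₁ : θ ≤ 1) (ha : 0 ≤ a) (hu : 0 ≤ u)
    (hv : 0 ≤ v) (hs : 0 < s) : truncTemper θ a u v ≤ s ^ (θ - 1) * (u + v * s) := by
  have hscale : truncTemper θ a u v = s ^ (θ - 1) * truncTemper θ (a / s) u (v * s) := by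
    rw [truncTemper, truncTemper, ← div_div, min_div_div_right hs.le,
      Real.div_rpow (le_min (div_nonneg hu hv) ha) hs.le, Real.rpow_sub hs, Real.rpow_one]
    have := Real.rpow_pos_of_pos hs θ
    field_simp
  rw [hscale]
  gcongr
  have hvs : 0 ≤ v * s := by positivity
  refine (truncTemper_le hθ hθ₁ (by positivity) hu hvs).trans ?_
  nlinarith

lemma truncTemper_two_mul_le {η a u v s : ℝ} (hη : 0 ≤ η) (ha : 0 ≤ a) (hu : 0 ≤ u) (hv : 0 ≤ v)
    (hs : 0 < s) : truncTemper (2 * η) a u v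
      ≤ a ^ (max 1 (2 * (1 - η)) - 2 * (1 - η)) * s ^ (1 - max 1 (2 * (1 - η))) * (u + v * s) := by
  rcases le_total 1 (2 * η) with h | h
  · rw [max_eq_left (by linarith), sub_self, Real.rpow_zero, mul_one,
      show 1 - 2 * (1 - η) = 2 * η - 1 by ring]
    refine (truncTemper_le_rpow_mul h ha hu hv).trans ?_
    gcongr
    exact le_add_of_nonneg_right (by positivity)
  · rw [max_eq_right (by linarith), sub_self, Real.rpow_zero, one_mul,
      show 1 - 2 * (1 - η) = 2 * η - 1 by ring]
    exact truncTemper_le_mul_add (by positivity) h ha hu hv hs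

namespace MidasParams

variable {d : ℕ} (P : MidasParams d) {A : ℝ}

/-- A bound on the increments of the noise of test functions of size `A`. -/
noncomputable def noiseBound (A : ℝ) (n : ℕ) : ℝ := P.cap n ^ P.η * (A * (P.b n ^ d)⁻¹)

/-- A bound on the conditional variances of the increments of the noise of test functions of
size `A`. -/
noncomputable def noiseVar (A : ℝ) (n : ℕ) : ℝ :=
  2 * A ^ 2 * (P.cap n ^ (max 1 (2 * (1 - P.η)) - 2 * (1 - P.η))
    * ((P.b n ^ d) ^ max 1 (2 * (1 - P.η)))⁻¹)

lemma cap_monotone : Monotone P.cap := fun _ n hmn =>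
  div_le_div_of_nonneg_left zero_le_two (mul_pos P.c_pos (P.lam_pos n))
    (mul_le_mul_of_nonneg_left (P.lam_antitone hmn) P.c_pos.le)

lemma noiseBound_nonneg (hA : 0 ≤ A) (n : ℕ) : 0 ≤ P.noiseBound A n := by
  have := P.cap_pos n
  have := P.b_pos n
  unfold noiseBound
  positivity

lemma noiseBound_monotone (hA : 0 ≤ A) : Monotone (P.noiseBound A) := fun m n hmn => by
  have := P.cap_pos m
  have := P.cap_pos n
  have := P.b_pos m
  have := P.b_pos n
  have := P.η_pos
  unfold noiseBound
  gcongr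
  · exact P.cap_monotone hmn
  · exact P.b_antitone hmn

lemma noiseVar_nonneg (A : ℝ) (n : ℕ) : 0 ≤ P.noiseVar A n := by
  have := P.cap_pos n
  have := P.b_pos n
  unfold noiseVar
  positivity

lemma noiseVar_monotone (A : ℝ) : Monotone (P.noiseVar A) := fun m n hmn => by
  have := P.cap_pos m
  have := P.cap_pos n
  have := P.b_pos m
  have := P.b_pos n
  unfold noiseVar
  gcongr
  · linarith [le_max_right 1 (2 * (1 - P.η))]
  · exact P.cap_monotone hmn
  · exact P.b_antitone hmn

lemma cap_rpow (n : ℕ) (θ : ℝ) : P.cap n ^ θ = (2 / P.c) ^ θ * (P.lam n ^ θ)⁻¹ := by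
  rw [cap, ← div_div, Real.div_rpow (div_pos two_pos P.c_pos).le (P.lam_pos n).le, div_eq_mul_inv]

lemma noiseBound_eq (A : ℝ) (n : ℕ) : P.noiseBound A n
    = A * (2 / P.c) ^ P.η * (P.lam n ^ (1 - P.η) / (P.lam n * P.b n ^ d)) := by
  have hlam := P.lam_pos n
  have := P.b_pos n
  have := Real.rpow_pos_of_pos hlam P.η
  rw [noiseBound, cap_rpow, Real.rpow_sub hlam, Real.rpow_one]
  field_simp

lemma noiseVar_eq (A : ℝ) (n : ℕ) : P.noiseVar A n
    = 2 * A ^ 2 * (2 / P.c) ^ (max 1 (2 * (1 - P.η)) - 2 * (1 - P.η))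
      * ((P.lam n ^ (1 - P.η)) ^ 2 / (P.lam n * P.b n ^ d) ^ max 1 (2 * (1 - P.η))) := by
  have hlam := P.lam_pos n
  have hb := pow_pos (P.b_pos n) d
  rw [noiseVar, cap_rpow, Real.mul_rpow hlam.le hb.le, ← Real.rpow_mul_natCast hlam.le,
    Real.rpow_sub hlam, Nat.cast_two, mul_comm (1 - P.η)]
  have := Real.rpow_pos_of_pos hlam (2 * (1 - P.η))
  have := Real.rpow_pos_of_pos hlam (max 1 (2 * (1 - P.η)))
  have := Real.rpow_pos_of_pos hb (max 1 (2 * (1 - P.η)))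
  field_simp

lemma tendsto_noiseVar (A : ℝ) : Tendsto (fun n : ℕ => n * P.γ n ^ 2 * Real.log n
    * P.noiseVar A n / (P.lam n ^ (1 - P.η)) ^ 2) atTop (𝓝 0) := by
  have h := P.rate.const_mul
    (2 * A ^ 2 * (2 / P.c) ^ (max 1 (2 * (1 - P.η)) - 2 * (1 - P.η)))
  rw [mul_zero] at h
  refine h.congr fun n => ?_
  have := Real.rpow_pos_of_pos (P.lam_pos n) (1 - P.η)
  rw [noiseVar_eq]
  field_simp

lemma tendsto_noiseBound (A : ℝ) : Tendsto (fun n : ℕ => Real.log n * P.γ n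
    * P.noiseBound A n / P.lam n ^ (1 - P.η)) atTop (𝓝 0) := by
  have h := P.tendsto_log_mul_step_div_mul_pow.const_mul (A * (2 / P.c) ^ P.η)
  rw [mul_zero] at h
  refine h.congr fun n => ?_
  have := Real.rpow_pos_of_pos (P.lam_pos n) (1 - P.η)
  rw [noiseBound_eq]
  field_simp

end MidasParams

/-- Nonnegative test functions which concentrate no more than kernels of bandwidth `b`: the class
for which `noise` is small. -/
structure TestFunctions {d : ℕ} (P : MidasParams d) (A : ℝ) (h : ℕ → ℝ^d → ℝ) : Prop where
  measurable : ∀ n, Measurable (h n)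
  nonneg : ∀ n y, 0 ≤ h n y
  le : ∀ n y, h n y ≤ A * (P.b n ^ d)⁻¹
  integral_mul_f_le : ∀ n, ∫ y, h n y * P.f y ≤ A

namespace TestFunctions

variable {d : ℕ} {P : MidasParams d} {A : ℝ} {h : ℕ → ℝ^d → ℝ}

lemma one (P : MidasParams d) : TestFunctions P 1 1 where
  measurable _ := measurable_const
  nonneg _ _ := zero_le_one
  le n _ := by
    rw [one_mul]
    exact (one_le_inv₀ (pow_pos (P.b_pos n) d)).2 (pow_le_one₀ (P.b_pos n).le (P.b_le_one n))
  integral_mul_f_le _ := by simp [P.integral_f]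

lemma kernelAt (P : MidasParams d) (x : ℝ^d) :
    TestFunctions P (max P.CK P.Cf) (P.kernelAt x) where
  measurable n := ((P.kernel.continuous_kb _).comp (continuous_const.sub continuous_id)).measurable
  nonneg n y := P.kernelAt_nonneg x n y
  le n y := (P.kernel.kb_le (P.b_pos n) _).trans
    (mul_le_mul_of_nonneg_right (le_max_left _ _) (inv_nonneg.2 (pow_pos (P.b_pos n) d).le))
  integral_mul_f_le n := by
    have hint := P.kernel.integrable_kb_sub (P.b_pos n) x
    calc ∫ y, kb P.K (P.b n) (x - y) * P.f y ≤ ∫ y, kb P.K (P.b n) (x - y) * P.Cf :=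
          integral_mono (P.kernel.integrable_kb_sub_mul (P.b_pos n) x P.integrable_f)
            (hint.mul_const _) fun y =>
              mul_le_mul_of_nonneg_left (P.f_le y) (P.kernelAt_nonneg x n y)
      _ = P.Cf := by
          rw [integral_mul_const, integral_kb_sub _ (P.b_pos n), P.kernel.integral_eq_one, one_mul]
      _ ≤ max P.CK P.Cf := le_max_right _ _

lemma size_nonneg (hh : TestFunctions P A h) : 0 ≤ A :=
  nonneg_of_mul_nonneg_left ((hh.nonneg 0 0).trans (hh.le 0 0)) (inv_pos.2 (pow_pos (P.b_pos 0) d))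

lemma mul_pow_le (hh : TestFunctions P A h) (n : ℕ) (y : ℝ^d) : h n y * P.b n ^ d ≤ A :=
  (le_mul_inv_iff₀ (pow_pos (P.b_pos n) d)).1 (hh.le n y)

lemma integrable_mul_f (hh : TestFunctions P A h) (n : ℕ) :
    Integrable fun y => h n y * P.f y :=
  P.integrable_f.bdd_mul (hh.measurable n).aestronglyMeasurable
    (ae_of_all _ fun y => by rw [Real.norm_of_nonneg (hh.nonneg n y)]; exact hh.le n y)

lemma sq_mul_truncTemper_le (hh : TestFunctions P A h) (n : ℕ) (y : ℝ^d) {v : ℝ} (hv : 0 ≤ v) :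
    h n y ^ 2 * truncTemper (2 * P.η) (P.cap n) (P.f y) v
      ≤ A * (P.cap n ^ (max 1 (2 * (1 - P.η)) - 2 * (1 - P.η))
        * ((P.b n ^ d) ^ max 1 (2 * (1 - P.η)))⁻¹) * (h n y * P.f y + A * v) := by
  have hb := pow_pos (P.b_pos n) d
  have hcap := P.cap_pos n
  have hf := P.f_nonneg y
  have hA := hh.size_nonneg
  have hhn := hh.nonneg n y
  have htemper := truncTemper_two_mul_le P.η_pos.le hcap.le hf hv hb
  rw [Real.rpow_sub hb, Real.rpow_one] at htemper
  set e := max 1 (2 * (1 - P.η))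
  set M := P.cap n ^ (e - 2 * (1 - P.η))
  have : 0 ≤ M := Real.rpow_nonneg hcap.le _
  have := Real.rpow_pos_of_pos hb e
  calc h n y ^ 2 * truncTemper (2 * P.η) (P.cap n) (P.f y) v
      ≤ h n y ^ 2 * (M * (P.b n ^ d / (P.b n ^ d) ^ e) * (P.f y + v * P.b n ^ d)) := by gcongr
    _ = h n y * P.b n ^ d * (M * ((P.b n ^ d) ^ e)⁻¹)
          * (h n y * P.f y + h n y * P.b n ^ d * v) := by field_simp
    _ ≤ A * (M * ((P.b n ^ d) ^ e)⁻¹) * (h n y * P.f y + A * v) := by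
        gcongr
        · exact hh.mul_pow_le n y
        · exact hh.mul_pow_le n y

lemma integral_sq_mul_truncTemper_le (hh : TestFunctions P A h) (n : ℕ) {p : ℝ^d → ℝ}
    (hp : ∀ y, 0 ≤ p y) (hp_one : ∫ y, p y = 1) :
    ∫ y, h n y ^ 2 * truncTemper (2 * P.η) (P.cap n) (P.f y) (p y) ≤ P.noiseVar A n := by
  have hA := hh.size_nonneg
  have hb := P.b_pos n
  have hcap := P.cap_pos n
  have hpi : Integrable p := integrable_of_integral_eq_one hp_one
  calc ∫ y, h n y ^ 2 * truncTemper (2 * P.η) (P.cap n) (P.f y) (p y)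
      ≤ ∫ y, A * (P.cap n ^ (max 1 (2 * (1 - P.η)) - 2 * (1 - P.η))
          * ((P.b n ^ d) ^ max 1 (2 * (1 - P.η)))⁻¹) * (h n y * P.f y + A * p y) :=
        integral_mono_of_nonneg (ae_of_all _ fun y => mul_nonneg (sq_nonneg _)
            (truncTemper_nonneg hcap.le (P.f_nonneg y) (hp y)))
          (((hh.integrable_mul_f n).add (hpi.const_mul A)).const_mul _)
          (ae_of_all _ fun y => hh.sq_mul_truncTemper_le n y (hp y))
    _ ≤ A * (P.cap n ^ (max 1 (2 * (1 - P.η)) - 2 * (1 - P.η))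
          * ((P.b n ^ d) ^ max 1 (2 * (1 - P.η)))⁻¹) * (A + A) := by
        rw [integral_const_mul, integral_add (hh.integrable_mul_f n) (hpi.const_mul A),
          integral_const_mul, hp_one, mul_one]
        gcongr
        exact hh.integral_mul_f_le n
    _ = P.noiseVar A n := by
        rw [MidasParams.noiseVar]
        ring

end TestFunctions

end Noise

section Typical

namespace Trajectory

variable {d : ℕ} {P : MidasParams d} {X : ℕ → ℝ^d} {w : ℕ → ℝ} {g q : ℕ → ℝ^d → ℝ}

lemma abs_min_weight_cap_rpow_le (T : Trajectory P X w g q) (n : ℕ) :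
    |min (w (n + 1)) (P.cap (n + 1)) ^ P.η| ≤ P.cap (n + 1) ^ P.η := by
  have hmin : 0 ≤ min (w (n + 1)) (P.cap (n + 1)) := le_min (T.weight_nonneg n) (P.cap_pos _).le
  rw [abs_of_nonneg (Real.rpow_nonneg hmin _)]
  exact Real.rpow_le_rpow hmin (min_le_right _ _) P.η_pos.le

lemma abs_noise_kernelAt_sub_le (T : Trajectory P X w g q) (n : ℕ) (x y : ℝ^d) :
    |P.noise X w q (P.kernelAt x) n - P.noise X w q (P.kernelAt y) n|
      ≤ (P.cap n ^ P.η + 1) * (P.LK * (P.b n ^ d)⁻¹ * (P.b n)⁻¹ * ‖x - y‖) := by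
  have hcap := P.cap_pos n
  have hb := P.b_pos n
  rw [MidasParams.noise, MidasParams.noise, ← stepAvg_sub]
  refine abs_stepAvg_le P.stepSizes (by positivity) fun k hk => ?_
  obtain ⟨hk₁, hkn⟩ := Finset.mem_Icc.1 hk
  obtain ⟨k, rfl⟩ := Nat.exists_eq_add_of_le' hk₁
  have hcapk := P.cap_pos (k + 1)
  have hbk := P.b_pos (k + 1)
  have hq := T.policy_nonneg k
  have hφ := integrable_truncTemper P.η_pos.le P.η_lt_one.le hcapk.le P.f_nonneg hq P.integrable_f
    (T.policy_integrable k)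
  have hφ₁ := integral_truncTemper_le P.η_pos.le P.η_lt_one.le hcapk.le P.f_nonneg hq
    P.integrable_f (T.policy_integrable k)
  rw [P.integral_f, T.integral_policy, mul_one, mul_one, add_sub_cancel] at hφ₁
  rw [sub_sub_sub_comm, ← mul_sub]
  calc _ ≤ |min (w (k + 1)) (P.cap (k + 1)) ^ P.η|
            * |P.kernelAt x (k + 1) (X (k + 1)) - P.kernelAt y (k + 1) (X (k + 1))| + _ :=
        (abs_sub _ _).trans_eq (by rw [abs_mul])
    _ ≤ P.cap (k + 1) ^ P.η * (P.LK * (P.b (k + 1) ^ d)⁻¹ * (P.b (k + 1))⁻¹ * ‖x - y‖)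
          + P.LK * (P.b (k + 1) ^ d)⁻¹ * (P.b (k + 1))⁻¹ * ‖x - y‖ := by
        gcongr
        · exact T.abs_min_weight_cap_rpow_le k
        · simpa only [MidasParams.kernelAt, sub_sub_sub_cancel_right] using
            P.kernel.abs_kb_sub_kb_le hbk (x - X (k + 1)) (y - X (k + 1))
        · exact P.kernel.abs_integral_kb_sub_mul_sub_le hbk x y hφ
            (fun z => truncTemper_nonneg hcapk.le (P.f_nonneg z) (hq z)) hφ₁
    _ = (P.cap (k + 1) ^ P.η + 1)
          * (P.LK * (P.b (k + 1) ^ d)⁻¹ * (P.b (k + 1))⁻¹ * ‖x - y‖) := by ring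
    _ ≤ _ := by
        have := P.η_pos
        gcongr
        · exact P.cap_monotone hkn
        · exact P.b_antitone hkn
        · exact P.b_antitone hkn

lemma eventually_abs_noise_kernelAt_sub_le (T : Trajectory P X w g q) (hd : d ≠ 0) :
    ∀ᶠ n : ℕ in atTop, ∀ x y, |P.noise X w q (P.kernelAt x) n - P.noise X w q (P.kernelAt y) n|
      ≤ n ^ 3 * P.lam n ^ (1 - P.η) * dist x y := by
  have hc : 0 ≤ 2 / P.c := (div_pos two_pos P.c_pos).le
  filter_upwards [P.eventually_one_le_natCast_mul_mul_pow,
    tendsto_natCast_atTop_atTop.eventually_ge_atTop (((2 / P.c) ^ P.η + 1) * P.LK)]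
    with n hn hC x y
  have hlam := P.lam_pos n
  have hb := P.b_pos n
  have hρ := P.mul_pow_pos n
  set ρ := P.lam n * P.b n ^ d with hρ_def
  have hρb : ρ ≤ P.b n := calc
    ρ ≤ 1 * P.b n ^ d :=
        mul_le_mul_of_nonneg_right (by linarith [P.lam_le_half n]) (pow_nonneg hb.le d)
    _ ≤ P.b n := by rw [one_mul]; exact pow_le_of_le_one hb.le (P.b_le_one n) hd
  have hρ_inv : ρ⁻¹ ≤ n := (inv_le_iff_one_le_mul₀ hρ).2 hn
  have hlamη := Real.rpow_pos_of_pos hlam P.η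
  have hcap : P.cap n ^ P.η + 1 ≤ ((2 / P.c) ^ P.η + 1) * (P.lam n ^ P.η)⁻¹ := by
    rw [P.cap_rpow, add_one_mul]
    gcongr
    exact (one_le_inv₀ hlamη).2 (Real.rpow_le_one hlam.le
      (by linarith [P.lam_le_half n]) P.η_pos.le)
  calc _ ≤ (P.cap n ^ P.η + 1) * (P.LK * (P.b n ^ d)⁻¹ * (P.b n)⁻¹ * ‖x - y‖) :=
        T.abs_noise_kernelAt_sub_le n x y
    _ ≤ ((2 / P.c) ^ P.η + 1) * (P.lam n ^ P.η)⁻¹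
          * (P.LK * (P.b n ^ d)⁻¹ * (P.b n)⁻¹ * ‖x - y‖) := by gcongr
    _ = ((2 / P.c) ^ P.η + 1) * P.LK * ρ⁻¹ * (P.b n)⁻¹ * P.lam n ^ (1 - P.η) * ‖x - y‖ := by
        rw [hρ_def, Real.rpow_sub hlam, Real.rpow_one]
        field_simp
    _ ≤ n * n * n * P.lam n ^ (1 - P.η) * ‖x - y‖ := by
        gcongr
        exact (inv_anti₀ hρ hρb).trans hρ_inv
    _ = n ^ 3 * P.lam n ^ (1 - P.η) * dist x y := by rw [dist_eq_norm]; ring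

end Trajectory

namespace MidasAlgorithm

variable {Ω : Type*} {mΩ : MeasurableSpace Ω} {μ : Measure Ω} {d : ℕ}
  {P : MidasParams d} {ℱ : Filtration ℕ mΩ} {X : ℕ → Ω → ℝ^d} {w : ℕ → Ω → ℝ}
  {g q : ℕ → Ω → ℝ^d → ℝ} {A : ℝ} {h : ℕ → ℝ^d → ℝ}

lemma stronglyMeasurable_truncWeight_mul (M : MidasAlgorithm P μ ℱ X w g q)
    (hh : TestFunctions P A h) (n : ℕ) : StronglyMeasurable[ℱ (n + 1)] fun ω =>
      min (w (n + 1) ω) (P.cap (n + 1)) ^ P.η * h (n + 1) (X (n + 1) ω) :=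
  ((((M.measurable_weight n).min measurable_const).pow_const _).mul
    ((hh.measurable _).comp (M.draw_measurable n))).stronglyMeasurable

lemma stronglyMeasurable_ratio_pow_mul (M : MidasAlgorithm P μ ℱ X w g q) (hh : TestFunctions P A h)
    (n j : ℕ) : StronglyMeasurable[(ℱ n).prod inferInstance] fun z : Ω × ℝ^d =>
      (min (P.f z.2 / q n z.1 z.2) (P.cap (n + 1)) ^ P.η * h (n + 1) z.2) ^ j :=
  (((((M.measurable_ratio n).min measurable_const).pow_const _).mul
    ((hh.measurable _).comp measurable_snd)).pow_const j).stronglyMeasurable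

variable [IsProbabilityMeasure μ]

lemma ae_truncWeight_mul_mem_Icc (M : MidasAlgorithm P μ ℱ X w g q) (hh : TestFunctions P A h)
    (n : ℕ) : ∀ᵐ ω ∂μ, min (w (n + 1) ω) (P.cap (n + 1)) ^ P.η * h (n + 1) (X (n + 1) ω)
      ∈ Set.Icc 0 (P.noiseBound A (n + 1)) := by
  filter_upwards [M.ae_trajectory] with ω T
  have hmin := Real.rpow_nonneg (le_min (T.weight_nonneg n) (P.cap_pos (n + 1)).le) P.η
  exact ⟨mul_nonneg hmin (hh.nonneg _ _), mul_le_mul ((le_abs_self _).trans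
    (T.abs_min_weight_cap_rpow_le n)) (hh.le _ _) (hh.nonneg _ _)
    (Real.rpow_nonneg (P.cap_pos _).le _)⟩

lemma condExp_truncWeight_mul_pow (M : MidasAlgorithm P μ ℱ X w g q) (hh : TestFunctions P A h)
    (n j : ℕ) :
    μ[fun ω => (min (w (n + 1) ω) (P.cap (n + 1)) ^ P.η * h (n + 1) (X (n + 1) ω)) ^ j | ℱ n]
      =ᵐ[μ] fun ω => ∫ y,
        (min (P.f y / q n ω y) (P.cap (n + 1)) ^ P.η * h (n + 1) y) ^ j * q n ω y := by
  have hmeas := (M.stronglyMeasurable_truncWeight_mul hh n).mono (ℱ.le _) |>.pow j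
  have hint : Integrable (fun ω =>
      (min (w (n + 1) ω) (P.cap (n + 1)) ^ P.η * h (n + 1) (X (n + 1) ω)) ^ j) μ := by
    refine .of_bound hmeas.aestronglyMeasurable (P.noiseBound A (n + 1) ^ j) ?_
    filter_upwards [M.ae_truncWeight_mul_mem_Icc hh n] with ω hω
    rw [norm_pow, Real.norm_of_nonneg hω.1]
    exact pow_le_pow_left₀ hω.1 hω.2 j
  simp only [M.weight_succ] at hint ⊢
  exact (M.hasCondDensity n).condExp_comp_eq (ℱ.le n) (M.measurable_draw n)
    (M.stronglyMeasurable_ratio_pow_mul hh n j) hint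

lemma boundedIncrements_noise (M : MidasAlgorithm P μ ℱ X w g q) (hh : TestFunctions P A h) :
    BoundedIncrements μ ℱ (fun k ω => min (w k ω) (P.cap k) ^ P.η * h k (X k ω)
      - ∫ y, h k y * truncTemper P.η (P.cap k) (P.f y) (q (k - 1) ω y))
      (P.noiseBound A) (P.noiseVar A) := by
  have hcomp : ∀ n ω, ∫ y, h (n + 1) y * truncTemper P.η (P.cap (n + 1)) (P.f y) (q n ω y)
      = ∫ y, (min (P.f y / q n ω y) (P.cap (n + 1)) ^ P.η * h (n + 1) y) ^ 1 * q n ω y :=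
    fun n ω => integral_congr_ae (ae_of_all _ fun y => by
      simp only [truncTemper, pow_one]
      ring)
  refine .of_nonneg (M.stronglyMeasurable_truncWeight_mul hh)
    (fun n => (M.ae_truncWeight_mul_mem_Icc hh n).mono fun _ => And.left)
    (fun n => (M.ae_truncWeight_mul_mem_Icc hh n).mono fun _ => And.right)
    (fun n => ?_) (fun n => ?_) (fun n => ?_)
  · simp only [add_tsub_cancel_right, hcomp]
    exact @StronglyMeasurable.integral_prod_right' _ _ _ (ℱ n) _ volume _ _ _ _
      (((M.stronglyMeasurable_ratio_pow_mul hh n 1).mul (M.stronglyMeasurable_policy n)))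
  · simp only [add_tsub_cancel_right, hcomp]
    simpa only [pow_one] using M.condExp_truncWeight_mul_pow hh n 1
  · filter_upwards [M.condExp_truncWeight_mul_pow hh n 2, M.ae_trajectory] with ω hω T
    refine hω.trans_le (Eq.trans_le ?_ (hh.integral_sq_mul_truncTemper_le (n + 1)
      (T.policy_nonneg n) (T.integral_policy n)))
    refine integral_congr_ae (ae_of_all _ fun y => ?_)
    have hmin := le_min (div_nonneg (P.f_nonneg y) (T.policy_nonneg n y)) (P.cap_pos (n + 1)).le
    simp only [truncTemper]
    rw [mul_comm 2, Real.rpow_mul hmin, Real.rpow_two]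
    ring

lemma eventually_measureReal_abs_noise_le (M : MidasAlgorithm P μ ℱ X w g q) {A : ℝ}
    {ι : Type*} {h : ι → ℕ → ℝ^d → ℝ} (hA : 0 ≤ A) (hh : ∀ i, TestFunctions P A (h i)) (p : ℕ)
    {δ : ℝ} (hδ : 0 < δ) : ∀ᶠ n in atTop, ∀ i,
      μ.real {ω | δ * P.lam n ^ (1 - P.η) ≤ |P.noise (X · ω) (w · ω) (q · ω) (h i) n|}
        ≤ 2 * ((n : ℝ) ^ p)⁻¹ := by
  filter_upwards [BoundedIncrements.eventually_measureReal_abs_stepAvg_le (μ := μ) (ℱ := ℱ)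
    P.stepSizes (P.noiseBound_monotone hA) (P.noiseBound_nonneg hA) (P.noiseVar_monotone A)
    (P.noiseVar_nonneg A) (fun n => Real.rpow_pos_of_pos (P.lam_pos n) _) (P.tendsto_noiseVar A)
    (P.tendsto_noiseBound A) p hδ] with n hn i
  exact hn _ (M.boundedIncrements_noise (hh i))

lemma ae_noise_kernelAt_le (M : MidasAlgorithm P μ ℱ X w g q) (hd : d ≠ 0) :
    ∀ᵐ ω ∂μ, ∀ R : ℕ, ∀ δ > 0, ∀ᶠ n in atTop, ∀ x ∈ closedBall (0 : ℝ^d) R,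
      |P.noise (X · ω) (w · ω) (q · ω) (P.kernelAt x) n| ≤ δ * P.lam n ^ (1 - P.η) := by
  have hlam : ∀ n, 0 < P.lam n ^ (1 - P.η) := fun n => Real.rpow_pos_of_pos (P.lam_pos n) _
  have hcount : ∀ R m : ℕ, ∀ᵐ ω ∂μ, ∀ᶠ n in atTop, ∀ x ∈ closedBall (0 : ℝ^d) (R + 1 : ℝ),
      |P.noise (X · ω) (w · ω) (q · ω) (P.kernelAt x) n| ≤ 1 / (m + 1) * P.lam n ^ (1 - P.η) :=
    fun R m => ae_eventually_forall_closedBall_abs_le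
      (fun p δ hδ => M.eventually_measureReal_abs_noise_le
        (P.kernel.bound_pos.le.trans (le_max_left _ _)) (TestFunctions.kernelAt P) p hδ)
      hlam (M.ae_trajectory.mono fun ω T => T.eventually_abs_noise_kernelAt_sub_le hd)
      (by positivity) (by positivity)
  filter_upwards [ae_all_iff.2 fun R => ae_all_iff.2 (hcount R)] with ω hω R δ hδ
  obtain ⟨m, hm⟩ := exists_nat_one_div_lt hδ
  filter_upwards [hω R m] with n hn x hx
  have := (hlam n).le
  calc _ ≤ 1 / (m + 1) * P.lam n ^ (1 - P.η) :=
        hn x (closedBall_subset_closedBall (le_add_of_nonneg_right zero_le_one) hx)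
    _ ≤ δ * P.lam n ^ (1 - P.η) := by gcongr

lemma ae_tendsto_noise_one (M : MidasAlgorithm P μ ℱ X w g q) :
    ∀ᵐ ω ∂μ, Tendsto (P.noise (X · ω) (w · ω) (q · ω) 1) atTop (𝓝 0) := by
  have hcount : ∀ᵐ ω ∂μ, ∀ᶠ n in atTop,
      |P.noise (X · ω) (w · ω) (q · ω) 1 n| < P.lam n ^ (1 - P.η) := by
    have hsum : Summable fun n => μ.real
        {ω | 1 * P.lam n ^ (1 - P.η) ≤ |P.noise (X · ω) (w · ω) (q · ω) 1 n|} := by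
      refine .of_norm_bounded_eventually_nat
        ((Real.summable_nat_pow_inv.2 one_lt_two).mul_left 2) ?_
      filter_upwards [M.eventually_measureReal_abs_noise_le (ι := Unit) zero_le_one
        (fun _ => TestFunctions.one P) 2 one_pos] with n hn
      rw [Real.norm_of_nonneg measureReal_nonneg]
      exact hn ()
    simpa using ae_eventually_notMem_of_summable_measureReal hsum
  have hlam : Tendsto (fun n => P.lam n ^ (1 - P.η)) atTop (𝓝 0) := by
    simpa only [Real.zero_rpow (sub_pos.2 P.η_lt_one).ne'] using
      P.lam_tendsto.rpow_const (.inr (sub_pos.2 P.η_lt_one).le)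
  filter_upwards [hcount] with ω hω
  exact squeeze_zero_norm' (hω.mono fun _ => le_of_lt) hlam

theorem ae_typicalTrajectory (M : MidasAlgorithm P μ ℱ X w g q) (hd : d ≠ 0) :
    ∀ᵐ ω ∂μ, TypicalTrajectory P (X · ω) (w · ω) (g · ω) (q · ω) := by
  filter_upwards [M.ae_trajectory, M.ae_exists_pos_or_nonneg, M.ae_frequently_half_le_weight,
    M.ae_noise_kernelAt_le hd, M.ae_tendsto_noise_one] with ω T hpos hfreq hkernel hone
  exact { T with
    exists_pos_or_nonneg := hpos
    frequently_half_le_weight := hfreq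
    noise_kernelAt_le := hkernel
    noise_one_tendsto := hone }

end MidasAlgorithm

end Typical

section Convergence

variable {d : ℕ} {η : ℝ} {γ b lam : ℕ → ℝ}

lemma tendsto_natCast_mul_log_div_shift {u z : ℕ → ℝ} (hu : ∀ n, 0 ≤ u n) (hz : ∀ n, 0 ≤ z n)
    (h : Tendsto (fun n : ℕ => n * u n * Real.log n / z n) atTop (𝓝 0)) (N : ℕ) :
    Tendsto (fun n : ℕ => n * u (N + n) * Real.log n / z (N + n)) atTop (𝓝 0) := by
  refine squeeze_zero (fun n => ?_) (fun n => ?_)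
    (h.comp (tendsto_atTop_mono (fun n => Nat.le_add_left n N) tendsto_id))
  · exact div_nonneg (mul_nonneg (mul_nonneg n.cast_nonneg (hu _)) (Real.log_natCast_nonneg n))
      (hz _)
  · have hlog : Real.log n ≤ Real.log (N + n : ℕ) := by
      rcases n.eq_zero_or_pos with rfl | hn
      · simpa using Real.log_natCast_nonneg N
      · exact Real.log_le_log (by positivity) (by exact_mod_cast Nat.le_add_left n N)
    have hcast : (n : ℝ) ≤ (N + n : ℕ) := by exact_mod_cast Nat.le_add_left n N
    have := Real.log_natCast_nonneg n
    have := hu (N + n)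
    have := hz (N + n)
    simp only [Function.comp_apply]
    gcongr

lemma tendsto_div_rpow_max (hb : ∀ n, 0 < b n) (hlam : ∀ n, 0 < lam n)
    (h₁ : 1 / 2 ≤ η → Tendsto (fun n : ℕ => n * γ n ^ 2 * Real.log n / (lam n * b n ^ d))
      atTop (𝓝 0))
    (h₂ : η < 1 / 2 → Tendsto (fun n : ℕ => n * γ n ^ 2 * Real.log n
      / (lam n ^ (2 * (1 - η)) * b n ^ (2 * (d : ℝ) * (1 - η)))) atTop (𝓝 0)) :
    Tendsto (fun n : ℕ => n * γ n ^ 2 * Real.log n / (lam n * b n ^ d) ^ max 1 (2 * (1 - η)))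
      atTop (𝓝 0) := by
  rcases le_or_gt (1 / 2) η with hη | hη
  · simpa only [max_eq_left (by linarith : 2 * (1 - η) ≤ 1), Real.rpow_one] using h₁ hη
  · refine (h₂ hη).congr fun n => ?_
    rw [max_eq_right (by linarith), Real.mul_rpow (hlam n).le (pow_pos (hb n) d).le,
      ← Real.rpow_natCast (b n), ← Real.rpow_mul (hb n).le, mul_assoc 2 (d : ℝ), mul_left_comm]

lemma eventually_stepSizes_shift (hγ : ∀ n, 0 < γ n) (hγ_tendsto : Tendsto γ atTop (𝓝 0))
    (hstep : ∀ᶠ n in atTop, γ n - γ (n + 1) ≤ γ n * γ (n + 1)) :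
    ∀ᶠ N in atTop, StepSizes fun n => γ (N + n) := by
  filter_upwards [eventually_forall_ge_atTop.2 hstep, eventually_forall_ge_atTop.2
    (hγ_tendsto.eventually_le_const one_half_pos)] with N hN hN_half
  exact
    { pos := fun n => hγ _
      le_half := fun n => hN_half _ (Nat.le_add_right N n)
      step := fun n => by
        have := hN _ (Nat.le_add_right N n)
        rw [← add_assoc]
        linarith
      tendsto_zero :=
        hγ_tendsto.comp (tendsto_atTop_mono (fun n => Nat.le_add_left n N) tendsto_id) }

lemma SmoothingKernel.estimate_continuous_and_integrable {K : ℝ^d → ℝ} {CK : ℝ} {LK : ℝ≥0}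
    (hK : SmoothingKernel K CK LK) (hb : ∀ n, 0 < b n) {a : ℕ → ℝ} {X : ℕ → ℝ^d}
    {g : ℕ → ℝ^d → ℝ} (h₀ : Continuous (g 0) ∧ Integrable (g 0))
    (hg : ∀ n x, g (n + 1) x
      = (1 - γ (n + 1)) * g n x + a (n + 1) * kb K (b (n + 1)) (x - X (n + 1))) (n : ℕ) :
    Continuous (g n) ∧ Integrable (g n) := by
  induction n with
  | zero => exact h₀
  | succ n ih =>
    rw [funext (hg n)]
    exact ⟨(ih.1.const_mul _).add (((hK.continuous_kb _).comp (by fun_prop)).const_mul _),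
      (ih.2.const_mul _).add ((hK.integrable_kb_sub_left (hb _) _).const_mul _)⟩

lemma MidasParams.exists_shift (hη : 0 < η) (hη₁ : η < 1) {f q₀ K : ℝ^d → ℝ}
    (hf : ∀ x, 0 ≤ f x) (hf_one : ∫ x, f x = 1) (hf_cont : Continuous f)
    (hf_bdd : ∃ C, ∀ x, f x ≤ C) (hq₀_one : ∫ x, q₀ x = 1) (hq₀_cont : Continuous q₀)
    (hfq₀ : ∃ c > (0 : ℝ), ∀ x, c * f x ≤ q₀ x)
    (hK : ∀ x, 0 ≤ K x) (hK_one : ∫ x, K x = 1) (hK_bdd : ∃ C, ∀ x, K x ≤ C)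
    (hK_lip : ∃ L : ℝ≥0, LipschitzWith L K) (hK_zero : 0 < K 0)
    (hγ : ∀ n, 0 < γ n) (hγ_tendsto : Tendsto γ atTop (𝓝 0))
    (hγ_step : ∀ᶠ n in atTop, γ n - γ (n + 1) ≤ γ n * γ (n + 1))
    (hb : ∀ n, 0 < b n) (hb_anti : Antitone b) (hb_tendsto : Tendsto b atTop (𝓝 0))
    (hlam : ∀ n, 0 < lam n) (hlam_anti : Antitone lam) (hlam_tendsto : Tendsto lam atTop (𝓝 0))
    (hrate₁ : 1 / 2 ≤ η → Tendsto (fun n : ℕ => n * γ n ^ 2 * Real.log n / (lam n * b n ^ d))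
      atTop (𝓝 0))
    (hrate₂ : η < 1 / 2 → Tendsto (fun n : ℕ => n * γ n ^ 2 * Real.log n
      / (lam n ^ (2 * (1 - η)) * b n ^ (2 * (d : ℝ) * (1 - η)))) atTop (𝓝 0)) :
    ∃ N ≠ 0, ∃ P : MidasParams d, P.η = η ∧ P.f = f ∧ P.q₀ = q₀ ∧ P.K = K ∧
      ∀ n, P.γ n = γ (N + n) ∧ P.b n = b (N + n) ∧ P.lam n = lam (N + n) := by
  obtain ⟨c, hc, hfq₀⟩ := hfq₀
  obtain ⟨Cf, hf_le⟩ := hf_bdd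
  obtain ⟨CK, hK_le⟩ := hK_bdd
  obtain ⟨LK, hK_lip⟩ := hK_lip
  obtain ⟨N, ⟨hN, hγN⟩, hbN, hlamN⟩ := (((eventually_ne_atTop 0).and
    (eventually_stepSizes_shift hγ hγ_tendsto hγ_step)).and
    ((hb_tendsto.eventually_le_const one_pos).and
      (hlam_tendsto.eventually_le_const one_half_pos))).exists
  have hshift : Tendsto (fun n => N + n) atTop atTop :=
    tendsto_atTop_mono (fun n => Nat.le_add_left n N) tendsto_id
  exact ⟨N, hN,
    { η, f, q₀, K, c, Cf, CK, LK
      γ := fun n => γ (N + n)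
      b := fun n => b (N + n)
      lam := fun n => lam (N + n)
      η_pos := hη
      η_lt_one := hη₁
      stepSizes := hγN
      b_pos := fun n => hb _
      b_le_one := fun n => (hb_anti (Nat.le_add_right N n)).trans hbN
      b_antitone := hb_anti.comp_monotone fun _ _ h => Nat.add_le_add_left h N
      b_tendsto := hb_tendsto.comp hshift
      lam_pos := fun n => hlam _
      lam_le_half := fun n => (hlam_anti (Nat.le_add_right N n)).trans hlamN
      lam_antitone := hlam_anti.comp_monotone fun _ _ h => Nat.add_le_add_left h N
      lam_tendsto := hlam_tendsto.comp hshift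
      rate := tendsto_natCast_mul_log_div_shift (fun n => sq_nonneg (γ n))
        (fun n => Real.rpow_nonneg (mul_pos (hlam n) (pow_pos (hb n) d)).le _)
        (tendsto_div_rpow_max hb hlam hrate₁ hrate₂) N
      f_nonneg := hf
      f_le := hf_le
      f_continuous := hf_cont
      integral_f := hf_one
      q₀_continuous := hq₀_cont
      integral_q₀ := hq₀_one
      c_pos := hc
      mul_f_le := hfq₀
      kernel := ⟨hK, hK_one, hK_le, hK_lip, hK_zero⟩ },
    rfl, rfl, rfl, rfl, fun n => ⟨rfl, rfl, rfl⟩⟩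

theorem midas_L1_convergence_general {Ω : Type*} {mΩ : MeasurableSpace Ω} {μ : Measure Ω}
    [IsProbabilityMeasure μ] (hd : d ≠ 0) (hη : 0 < η) (hη₁ : η < 1) {f q₀ K : ℝ^d → ℝ}
    (ℱ : Filtration ℕ mΩ) {X : ℕ → Ω → ℝ^d} {w : ℕ → Ω → ℝ} {g q : ℕ → Ω → ℝ^d → ℝ}
    (hf : ∀ x, 0 ≤ f x) (hf_one : ∫ x, f x = 1) (hf_cont : Continuous f)
    (hf_bdd : ∃ C, ∀ x, f x ≤ C) (hq₀_one : ∫ x, q₀ x = 1) (hq₀_cont : Continuous q₀)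
    (hfq₀ : ∃ c > (0 : ℝ), ∀ x, c * f x ≤ q₀ x)
    (hK : ∀ x, 0 ≤ K x) (hK_one : ∫ x, K x = 1) (hK_bdd : ∃ C, ∀ x, K x ≤ C)
    (hK_lip : ∃ L : ℝ≥0, LipschitzWith L K) (hK_zero : 0 < K 0)
    (hγ : ∀ n, 0 < γ n) (hγ_tendsto : Tendsto γ atTop (𝓝 0))
    (hγ_step : ∀ᶠ n in atTop, γ n - γ (n + 1) ≤ γ n * γ (n + 1))
    (hb : ∀ n, 0 < b n) (hb_anti : Antitone b) (hb_tendsto : Tendsto b atTop (𝓝 0))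
    (hlam : ∀ n, 0 < lam n) (hlam_anti : Antitone lam) (hlam_tendsto : Tendsto lam atTop (𝓝 0))
    (hrate₁ : 1 / 2 ≤ η → Tendsto (fun n : ℕ => n * γ n ^ 2 * Real.log n / (lam n * b n ^ d))
      atTop (𝓝 0))
    (hrate₂ : η < 1 / 2 → Tendsto (fun n : ℕ => n * γ n ^ 2 * Real.log n
      / (lam n ^ (2 * (1 - η)) * b n ^ (2 * (d : ℝ) * (1 - η)))) atTop (𝓝 0))
    (hX : ∀ n, Measurable[ℱ (n + 1)] (X (n + 1)))
    (hw : ∀ n ω, w (n + 1) ω = f (X (n + 1) ω) / q n ω (X (n + 1) ω))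
    (hg₀ : ∀ ω, Continuous (g 0 ω) ∧ Integrable (g 0 ω))
    (hg : ∀ n ω x, g (n + 1) ω x = (1 - γ (n + 1)) * g n ω x
      + γ (n + 1) * w (n + 1) ω ^ η * kb K (b (n + 1)) (x - X (n + 1) ω))
    (hq : ∀ n ω x, q (n + 1) ω x
      = (1 - lam (n + 1)) * (g (n + 1) ω x / ∫ y, g (n + 1) ω y) + lam (n + 1) * q₀ x)
    (hq_meas : ∀ n x, Measurable[ℱ n] fun ω => q n ω x)
    (hpolicy : ∀ n (φ : ℝ^d → ℝ), Continuous φ → (∃ C, ∀ x, |φ x| ≤ C) →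
      μ[fun ω => φ (X (n + 1) ω) | ℱ n] =ᵐ[μ] fun ω => ∫ y, φ y * q n ω y) :
    ∀ᵐ ω ∂μ, Tendsto (fun n => ∫ x, |q n ω x - f x|) atTop (𝓝 0) := by
  obtain ⟨N, hN, P, rfl, rfl, rfl, rfl, hP⟩ := MidasParams.exists_shift hη hη₁ hf hf_one hf_cont
    hf_bdd hq₀_one hq₀_cont hfq₀ hK hK_one hK_bdd hK_lip hK_zero hγ hγ_tendsto hγ_step hb hb_anti
    hb_tendsto hlam hlam_anti hlam_tendsto hrate₁ hrate₂
  let 𝒢 : Filtration ℕ mΩ :=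
    ⟨fun n => ℱ (N + n), fun _ _ h => ℱ.mono (Nat.add_le_add_left h N), fun _ => ℱ.le _⟩
  have hg_reg := fun n ω => P.kernel.estimate_continuous_and_integrable (γ := γ) hb
    (a := fun n => γ n * w n ω ^ P.η) (X := (X · ω)) (g := (g · ω)) (hg₀ ω) (fun n => hg n ω) n
  have M : MidasAlgorithm P μ 𝒢 (fun n => X (N + n)) (fun n => w (N + n)) (fun n => g (N + n))
      (fun n => q (N + n)) :=
    { draw_measurable := fun n => hX (N + n)
      policy_measurable := fun n => hq_meas (N + n)
      condExp_draw := fun n => hpolicy (N + n)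
      weight_succ := fun n => hw (N + n)
      estimate_succ := fun n ω x => by
        rw [MidasParams.kernelAt, (hP _).1, (hP _).2.1, ← mul_assoc]
        exact hg (N + n) ω x
      policy_eq := fun n ω x => by
        obtain ⟨m, hm⟩ := Nat.exists_eq_succ_of_ne_zero (by lia : N + n ≠ 0)
        simpa only [(hP n).2.2, hm] using hq m ω x
      estimate_integrable := fun n ω => (hg_reg _ ω).2
      estimate_continuous := fun n ω => (hg_reg _ ω).1 }
  filter_upwards [M.ae_typicalTrajectory hd] with ω T
  rw [← tendsto_add_atTop_iff_nat N]
  simpa only [add_comm _ N] using T.tendsto_integral_abs_sub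

lemma natFilt_mono {Ω : Type*} (X : ℕ → Ω → ℝ^d) : Monotone (natFilt X) :=
  fun _ _ h => biSup_mono fun _ hi => Finset.Icc_subset_Icc_right h hi

lemma natFilt_le {Ω : Type*} {mΩ : MeasurableSpace Ω} {X : ℕ → Ω → ℝ^d}
    (hX : ∀ n, Measurable (X n)) (n : ℕ) : natFilt X n ≤ mΩ :=
  iSup₂_le fun i _ => (hX i).comap_le

lemma measurable_natFilt {Ω : Type*} (X : ℕ → Ω → ℝ^d) {n : ℕ} (hn : 1 ≤ n) :
    Measurable[natFilt X n] (X n) :=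
  Measurable.of_comap_le (le_iSup₂_of_le n (Finset.mem_Icc.2 ⟨hn, le_rfl⟩) le_rfl)

end Convergence

theorem midas_L1_convergence
    {Ω : Type*} [MeasurableSpace Ω] (μ : Measure Ω) [IsProbabilityMeasure μ]
    {d : ℕ} (hd : 1 ≤ d) {η : ℝ} (hη : 0 < η) (hη1 : η < 1)
    (f q0 K : EuclideanSpace ℝ (Fin d) → ℝ)
    (γ b lam : ℕ → ℝ)
    (X : ℕ → Ω → EuclideanSpace ℝ (Fin d))
    (w : ℕ → Ω → ℝ)
    (g q : ℕ → Ω → EuclideanSpace ℝ (Fin d) → ℝ)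
    (hf0 : ∀ x, 0 ≤ f x) (hfint1 : (∫ x, f x) = 1)
    (hK0 : ∀ x, 0 ≤ K x) (hKint1 : (∫ x, K x) = 1)
    (hγpos : ∀ n, 0 < γ n) (hbpos : ∀ n, 0 < b n) (hlampos : ∀ n, 0 < lam n)
    (hX : ∀ n, Measurable (X n))
    (hqmeas : ∀ n, Measurable (Function.uncurry (q n)))
    (hg0 : ∀ (ω : Ω) x, g 0 ω x = 0)
    (hw : ∀ n (ω : Ω), w (n+1) ω = f (X (n+1) ω) / q n ω (X (n+1) ω))
    (hgrec : ∀ n (ω : Ω) x, g (n+1) ω x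
      = (1 - γ (n+1)) * g n ω x
        + γ (n+1) * w (n+1) ω ^ η * kb K (b (n+1)) (x - X (n+1) ω))
    (hqrec : ∀ n (ω : Ω) x, q (n+1) ω x
      = (1 - lam (n+1)) * (g (n+1) ω x / (∫ y, g (n+1) ω y)) + lam (n+1) * q0 x)
    (hpolicy : ∀ n (φ : EuclideanSpace ℝ (Fin d) → ℝ), Continuous φ →
      (∃ C, ∀ x, |φ x| ≤ C) →
      (μ[fun ω => φ (X (n+1) ω) | natFilt X n]) =ᵐ[μ] (fun ω => ∫ y, φ y * q n ω y))
    (hadapt : ∀ n x, Measurable[natFilt X n] fun ω => q n ω x)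
    (hfbdd : ∃ C, ∀ x, f x ≤ C) (hfcont : Continuous f)
    (hfInt : Integrable f)
    (hq00 : ∀ x, 0 ≤ q0 x) (hq0bdd : ∃ C, ∀ x, q0 x ≤ C) (hq0cont : Continuous q0)
    (hq0Int : Integrable q0) (hq0int1 : (∫ x, q0 x) = 1)
    (hftail : ∃ r > (0:ℝ), ∃ Cf > (0:ℝ), ∀ t : ℝ, 0 < t →
      (∫ x in {x : EuclideanSpace ℝ (Fin d) | t < ‖x‖}, f x) ≤ Cf * t ^ (-r))
    (hfq0 : ∃ c > (0:ℝ), ∀ x, c * f x ≤ q0 x)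
    (hKbdd : ∃ C, ∀ x, K x ≤ C) (hKlip : ∃ L : NNReal, LipschitzWith L K)
    (hKpos : 0 < K 0)
    (hKtail : ∃ rK > (0:ℝ), ∃ CK > (0:ℝ), ∀ x,
      (1 + ‖x‖ ^ ((d : ℝ) + rK)) * K x ≤ CK)
    (hγanti : Antitone γ) (hγ0 : Tendsto γ atTop (nhds 0))
    (hbanti : Antitone b) (hb0 : Tendsto b atTop (nhds 0))
    (hlamanti : Antitone lam) (hlam0 : Tendsto lam atTop (nhds 0))
    (hγrate : ∃ Cγ > (0:ℝ), ∃ nγ : ℕ, 1 ≤ nγ ∧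
      (∀ n : ℕ, 1 ≤ n → ((n : ℝ))⁻¹ ≤ Cγ * γ n) ∧
      (∀ n : ℕ, nγ ≤ n → γ n - γ (n+1) ≤ γ n * γ (n+1)))
    (hγsq : Summable fun n => γ n ^ 2)
    (hrate1 : 1/2 ≤ η → Tendsto
      (fun n : ℕ => (n : ℝ) * γ n ^ 2 * Real.log n / (lam n * b n ^ d))
      atTop (nhds 0))
    (hrate2 : η < 1/2 → Tendsto
      (fun n : ℕ => (n : ℝ) * γ n ^ 2 * Real.log n
        / (lam n ^ (2 * (1 - η)) * b n ^ (2 * (d : ℝ) * (1 - η))))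
      atTop (nhds 0))
    :
    ∀ᵐ ω ∂μ, Tendsto (fun n : ℕ => ∫ x, |q n ω x - f x|) atTop (nhds 0) := by
  obtain ⟨-, -, nγ, -, -, hγstep⟩ := hγrate
  exact midas_L1_convergence_general (Nat.one_le_iff_ne_zero.1 hd) hη hη1
    ⟨natFilt X, natFilt_mono X, natFilt_le hX⟩ hf0 hfint1 hfcont hfbdd hq0int1 hq0cont hfq0 hK0
    hKint1 hKbdd hKlip hKpos hγpos hγ0 ((eventually_ge_atTop nγ).mono hγstep) hbpos hbanti hb0
    hlampos hlamanti hlam0 hrate1 hrate2 (fun n => measurable_natFilt X n.succ_pos) hw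
    (fun ω => (funext (hg0 ω) : g 0 ω = 0) ▸ ⟨continuous_zero, integrable_zero _ _ _⟩)
    hgrec hqrec hadapt hpolicy
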